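/- Let α ∈ (0, 2s) and M ≥ 0. Suppose b : [−1,0] × B_1^0 → ℝ^n satisfies sup_{t∈[−1,0]} ‖b(t,·)‖_{C^{1−2s+α}(B_1^0)} ≤ M, f : [−1,0] × B_1^0 → ℝ satisfies sup_{t∈[−1,0]} ‖f(t,·)‖_{C^{1−2s+α}(B_1^0)} = F < ∞, and let u be a bounded classical solution of the extended drift–diffusion equation with drift b and right-hand side f. Then there is a constant C depending only on s, n, α and M such that for every t ∈ [−1/2,0] the function x ↦ u(t,x,0) is differentiable on B_{1/2}^0 and sup_{t∈[−1/2,0]} ( sup_{x∈B_{1/2}^0} |∇_x u(t,x,0)| + [∇_x u(t,·,0)]_{C^α(B_{1/2}^0)} ) ≤ C ( sup_{[−1,0]×B_1^+} |u| + F ). -/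

import Mathlib

open Set Filter Topology MeasureTheory
open scoped RealInnerProductSpace

noncomputable section

abbrev En (n : ℕ) := EuclideanSpace ℝ (Fin n)

/-- The open upper half ball `B_r^+`. -/
def halfBall (n : ℕ) (r : ℝ) : Set (En n × ℝ) :=
  {p | ‖p.1‖ ^ 2 + p.2 ^ 2 < r ^ 2 ∧ 0 < p.2}

/-- The closure of the upper half ball. -/
def closedHalfBall (n : ℕ) (r : ℝ) : Set (En n × ℝ) :=
  {p | ‖p.1‖ ^ 2 + p.2 ^ 2 ≤ r ^ 2 ∧ 0 ≤ p.2}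

/-- The flat ball `B_r^0` in `ℝⁿ`. -/
def flatBall (n : ℕ) (r : ℝ) : Set (En n) := {x | ‖x‖ < r}

/-- Second directional derivative of `u` at `p` in direction `v`. -/
def D2 {n : ℕ} (u : En n × ℝ → ℝ) (p v : En n × ℝ) : ℝ :=
  fderiv ℝ (fun q => fderiv ℝ u q v) p v

/-- The Laplacian in the `n+1` variables `(x, y)`. -/
def lap {n : ℕ} (u : En n × ℝ → ℝ) (p : En n × ℝ) : ℝ :=
  (∑ i : Fin n, D2 u p (EuclideanSpace.single i 1, 0)) + D2 u p (0, 1)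

/-- `u` is `a`-harmonic on `Ω`: it is `C²` there and `Δu + (a/y) ∂_y u = 0`. -/
def IsAHarmonicOn {n : ℕ} (a : ℝ) (u : En n × ℝ → ℝ) (Ω : Set (En n × ℝ)) : Prop :=
  ContDiffOn ℝ 2 u Ω ∧ ∀ p ∈ Ω, lap u p + (a / p.2) * fderiv ℝ u p (0, 1) = 0

/-- `lim_{y → 0⁺} y^a ∂_y w(x, y) = L`. -/
def NormalDerivLimit {n : ℕ} (a : ℝ) (w : En n × ℝ → ℝ) (x : En n) (L : ℝ) : Prop :=
  Tendsto (fun y : ℝ => y ^ a * fderiv ℝ w (x, y) (0, 1)) (𝓝[>] (0 : ℝ)) (𝓝 L)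

/-- The boundary-restriction `(t, x) ↦ u(t, x, 0)`. -/
def bdryFun {n : ℕ} (u : ℝ → En n × ℝ → ℝ) : ℝ × En n → ℝ := fun q => u q.1 (q.2, 0)

/-- A classical solution of the extended drift–diffusion equation on
`[-1,0] × closure (B_1^+)` with drift `b` and right-hand side `f`. -/
def IsExtDDSolution {n : ℕ} (a : ℝ) (b : ℝ → En n → En n) (f : ℝ → En n → ℝ)
    (u : ℝ → En n × ℝ → ℝ) : Prop :=
  ContinuousOn (fun q : ℝ × (En n × ℝ) => u q.1 q.2) (Icc (-1 : ℝ) 0 ×ˢ closedHalfBall n 1) ∧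
  (∀ t ∈ Icc (-1 : ℝ) 0, IsAHarmonicOn a (u t) (halfBall n 1)) ∧
  (∀ q ∈ Ioc (-1 : ℝ) 0 ×ˢ flatBall n 1,
      DifferentiableWithinAt ℝ (bdryFun u) (Ioc (-1 : ℝ) 0 ×ˢ flatBall n 1) q) ∧
  (∀ t x, (t, x) ∈ Ioc (-1 : ℝ) 0 ×ˢ flatBall n 1 →
      ∃ L : ℝ, NormalDerivLimit a (u t) x L ∧
        fderivWithin ℝ (bdryFun u) (Ioc (-1 : ℝ) 0 ×ˢ flatBall n 1) (t, x) (1, 0) +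
          fderivWithin ℝ (bdryFun u) (Ioc (-1 : ℝ) 0 ×ˢ flatBall n 1) (t, x) (0, b t x) -
          L = f t x)


/-- Two-jet of a real function at a point. -/
def HasD2 (f : ℝ → ℝ) (x f1 f2 : ℝ) : Prop :=
  ∃ f' : ℝ → ℝ, (∀ᶠ τ in 𝓝 x, HasDerivAt f (f' τ) τ) ∧ HasDerivAt f' f2 x ∧ f' x = f1

lemma HasD2.hasDerivAt {f : ℝ → ℝ} {x f1 f2 : ℝ} (h : HasD2 f x f1 f2) : HasDerivAt f f1 x := by
  obtain ⟨f', h1, h2, h3⟩ := h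
  rw [← h3]; exact h1.self_of_nhds

lemma HasD2.const (c x : ℝ) : HasD2 (fun _ => c) x 0 0 :=
  ⟨fun _ => 0, Eventually.of_forall fun τ => hasDerivAt_const τ c, hasDerivAt_const x 0, rfl⟩

lemma HasD2.ident (x : ℝ) : HasD2 (fun y => y) x 1 0 :=
  ⟨fun _ => 1, Eventually.of_forall fun τ => hasDerivAt_id' τ, hasDerivAt_const x 1, rfl⟩

lemma HasD2.add {f g : ℝ → ℝ} {x f1 f2 g1 g2 : ℝ} (hf : HasD2 f x f1 f2) (hg : HasD2 g x g1 g2) :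
    HasD2 (fun y => f y + g y) x (f1 + g1) (f2 + g2) := by
  obtain ⟨f', h1, h2, h3⟩ := hf
  obtain ⟨g', k1, k2, k3⟩ := hg
  refine ⟨fun y => f' y + g' y, ?_, h2.add k2, by simp [h3, k3]⟩
  filter_upwards [h1, k1] with τ a b using a.add b

lemma HasD2.neg {f : ℝ → ℝ} {x f1 f2 : ℝ} (hf : HasD2 f x f1 f2) :
    HasD2 (fun y => - f y) x (-f1) (-f2) := by
  obtain ⟨f', h1, h2, h3⟩ := hf
  refine ⟨fun y => - f' y, ?_, h2.neg, by simp [h3]⟩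
  filter_upwards [h1] with τ a using a.neg

lemma HasD2.sub {f g : ℝ → ℝ} {x f1 f2 g1 g2 : ℝ} (hf : HasD2 f x f1 f2) (hg : HasD2 g x g1 g2) :
    HasD2 (fun y => f y - g y) x (f1 - g1) (f2 - g2) := by
  have := hf.add hg.neg
  simpa [sub_eq_add_neg] using this

lemma HasD2.mul {f g : ℝ → ℝ} {x f1 f2 g1 g2 : ℝ} (hf : HasD2 f x f1 f2) (hg : HasD2 g x g1 g2) :
    HasD2 (fun y => f y * g y) x (f1 * g x + f x * g1) (f2 * g x + 2 * (f1 * g1) + f x * g2) := by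
  have hf0 := hf.hasDerivAt
  have hg0 := hg.hasDerivAt
  obtain ⟨f', h1, h2, h3⟩ := hf
  obtain ⟨g', k1, k2, k3⟩ := hg
  refine ⟨fun y => f' y * g y + f y * g' y, ?_, ?_, by simp [h3, k3]⟩
  · filter_upwards [h1, k1] with τ a b using a.mul b
  · have := (h2.mul hg0).add (hf0.mul k2)
    refine this.congr_deriv ?_
    rw [h3, k3]; ring

lemma HasD2.const_mul {f : ℝ → ℝ} {x f1 f2 : ℝ} (c : ℝ) (hf : HasD2 f x f1 f2) :
    HasD2 (fun y => c * f y) x (c * f1) (c * f2) := by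
  obtain ⟨f', h1, h2, h3⟩ := hf
  refine ⟨fun y => c * f' y, ?_, h2.const_mul c, by simp [h3]⟩
  filter_upwards [h1] with τ a using a.const_mul c

lemma HasD2.rpow {f : ℝ → ℝ} {x f1 f2 : ℝ} (hf : HasD2 f x f1 f2) (h0 : 0 < f x) (p : ℝ) :
    HasD2 (fun y => f y ^ p) x (p * f x ^ (p - 1) * f1)
      (p * f x ^ (p - 1) * f2 + p * (p - 1) * f x ^ (p - 2) * f1 ^ 2) := by
  have hf0 := hf.hasDerivAt
  have hev : ∀ᶠ τ in 𝓝 x, 0 < f τ := hf0.continuousAt.eventually (lt_mem_nhds h0)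
  obtain ⟨f', h1, h2, h3⟩ := hf
  refine ⟨fun y => f' y * p * f y ^ (p - 1), ?_, ?_, by simp [h3]; ring⟩
  · filter_upwards [h1, hev] with τ a b using a.rpow_const (Or.inl b.ne')
  · have := (h2.mul_const p).mul (hf0.rpow_const (p := p - 1) (Or.inl h0.ne'))
    refine this.congr_deriv ?_
    rw [h3, show p - 1 - 1 = p - 2 by ring]; ring

lemma HasD2.congr {f g : ℝ → ℝ} {x f1 f2 : ℝ} (hf : HasD2 f x f1 f2) (h : g =ᶠ[𝓝 x] f) :
    HasD2 g x f1 f2 := by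
  obtain ⟨f', h1, h2, h3⟩ := hf
  refine ⟨f', ?_, h2, h3⟩
  filter_upwards [h1, h.eventuallyEq_nhds] with τ a b using a.congr_of_eventuallyEq b

lemma HasD2.congr_val {f : ℝ → ℝ} {x f1 f2 g1 g2 : ℝ} (hf : HasD2 f x f1 f2) (h1 : f1 = g1)
    (h2 : f2 = g2) : HasD2 f x g1 g2 := by subst h1; subst h2; exact hf

lemma HasD2.of_localMax {f : ℝ → ℝ} {x f1 f2 : ℝ} (hf : HasD2 f x f1 f2) (h : IsLocalMax f x) :
    f1 = 0 ∧ f2 ≤ 0 := by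
  have hf0 := hf.hasDerivAt
  have e1 : f1 = 0 := h.hasDerivAt_eq_zero hf0
  refine ⟨e1, ?_⟩
  by_contra hc
  push Not at hc
  obtain ⟨f', h1, h2, h3⟩ := hf
  have hd : deriv f =ᶠ[𝓝 x] f' := h1.mono fun τ a => a.deriv
  have hdd : deriv (deriv f) x = f2 := by rw [hd.deriv_eq]; exact h2.deriv
  have hmin := isLocalMin_of_deriv_deriv_pos (by rw [hdd]; exact hc) (by rw [hf0.deriv, e1])
    hf0.continuousAt
  have hconst : f =ᶠ[𝓝 x] fun _ => f x := by
    filter_upwards [h, hmin] with τ a b using le_antisymm a b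
  have : deriv (deriv f) x = 0 := by
    have : deriv f =ᶠ[𝓝 x] fun _ => 0 := by
      filter_upwards [hconst.eventuallyEq_nhds] with τ a
      rw [a.deriv_eq]; simp
    rw [this.deriv_eq]; simp
  linarith

/-- Comparison of two-jets at a touching point. -/
lemma HasD2.touch {f g : ℝ → ℝ} {x f1 f2 g1 g2 : ℝ} (hf : HasD2 f x f1 f2) (hg : HasD2 g x g1 g2)
    (hle : ∀ᶠ τ in 𝓝 x, f τ ≤ g τ) (heq : f x = g x) : f1 = g1 ∧ f2 ≤ g2 := by
  have : IsLocalMax (fun y => f y - g y) x := by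
    filter_upwards [hle] with τ a
    linarith
  have := (hf.sub hg).of_localMax this
  constructor <;> linarith [this.1, this.2]

/-- slice form of `a`-harmonicity at a point. -/
def SliceH {n : ℕ} (a : ℝ) (w : En n × ℝ → ℝ) (p : En n × ℝ) : Prop :=
  ∃ (q : En n → ℝ) (r1 r2 : ℝ),
    (∀ v, ∃ l, HasD2 (fun τ : ℝ => w (p.1 + τ • v, p.2)) 0 l (q v)) ∧
    HasD2 (fun y => w (p.1, y)) p.2 r1 r2 ∧ (∀ v, q (-v) = q v) ∧
    (∀ b : OrthonormalBasis (Fin n) ℝ (En n), ∑ i, q (b i) + r2 + a / p.2 * r1 = 0)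

lemma SliceH.sub {n : ℕ} {a : ℝ} {w z : En n × ℝ → ℝ} {p : En n × ℝ} (hw : SliceH a w p)
    (hz : SliceH a z p) : SliceH a (fun p => w p - z p) p := by
  obtain ⟨q, r1, r2, h1, h2, h3, h4⟩ := hw
  obtain ⟨q', r1', r2', h1', h2', h3', h4'⟩ := hz
  refine ⟨fun v => q v - q' v, r1 - r1', r2 - r2', fun v => ?_, h2.sub h2', fun v => ?_, fun b => ?_⟩
  · obtain ⟨l, hl⟩ := h1 v
    obtain ⟨l', hl'⟩ := h1' v
    exact ⟨_, hl.sub hl'⟩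
  · simp [h3, h3']
  · have e1 := h4 b
    have e2 := h4' b
    rw [Finset.sum_sub_distrib]
    linear_combination e1 - e2

lemma SliceH.trans {n : ℕ} {a : ℝ} {w : En n × ℝ → ℝ} {p : En n × ℝ} (c : En n)
    (hw : SliceH a w (p.1 + c, p.2)) : SliceH a (fun p => w (p.1 + c, p.2)) p := by
  obtain ⟨q, r1, r2, h1, h2, h3, h4⟩ := hw
  refine ⟨q, r1, r2, fun v => ?_, h2, h3, h4⟩
  obtain ⟨l, hl⟩ := h1 v
  refine ⟨l, ?_⟩
  simpa [add_right_comm] using hl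

lemma sum_onb_eq {n : ℕ} (B : En n →L[ℝ] En n →L[ℝ] ℝ) (b c : OrthonormalBasis (Fin n) ℝ (En n)) :
    ∑ i, B (b i) (b i) = ∑ i, B (c i) (c i) := by
  let T : En n →ₗ[ℝ] En n :=
    ((InnerProductSpace.toDual ℝ (En n)).symm.toLinearEquiv.toLinearMap).comp B.toLinearMap
  have key : ∀ b : OrthonormalBasis (Fin n) ℝ (En n),
      LinearMap.trace ℝ (En n) T = ∑ i, B (b i) (b i) := by
    intro b
    rw [LinearMap.trace_eq_sum_inner T b]
    refine Finset.sum_congr rfl fun i _ => ?_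
    rw [real_inner_comm]
    simp [T]
  rw [← key b, ← key c]

lemma hasD2_slice {n : ℕ} {u : En n × ℝ → ℝ} {Ω : Set (En n × ℝ)} (hΩ : IsOpen Ω)
    (hu : ContDiffOn ℝ 2 u Ω) {p : En n × ℝ} (hp : p ∈ Ω) (v : En n × ℝ) :
    HasD2 (fun τ : ℝ => u (p + τ • v)) 0 (fderiv ℝ u p v) (D2 u p v) := by
  have hline : ∀ τ : ℝ, HasDerivAt (fun τ : ℝ => p + τ • v) v τ := fun τ => by
    simpa using ((hasDerivAt_id' τ).smul_const v).const_add p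
  have hat : ContDiffAt ℝ 2 u p := hu.contDiffAt (hΩ.mem_nhds hp)
  have hev : ∀ᶠ τ : ℝ in 𝓝 0, p + τ • v ∈ Ω := by
    have : ContinuousAt (fun τ : ℝ => p + τ • v) 0 := (hline 0).continuousAt
    apply this.eventually
    simpa using hΩ.mem_nhds hp
  refine ⟨fun τ => fderiv ℝ u (p + τ • v) v, ?_, ?_, by simp⟩
  · filter_upwards [hev] with τ hτ
    have : DifferentiableAt ℝ u (p + τ • v) :=
      (hu.contDiffAt (hΩ.mem_nhds hτ)).differentiableAt (by norm_num)
    exact this.hasFDerivAt.comp_hasDerivAt τ (hline τ)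
  · have h1 : DifferentiableAt ℝ (fderiv ℝ u) p :=
      (hat.fderiv_right (m := 1) (by norm_num)).differentiableAt (by norm_num)
    have h2 : DifferentiableAt ℝ (fun q => fderiv ℝ u q v) p := h1.clm_apply (differentiableAt_const v)
    have h3 : HasFDerivAt (fun q => fderiv ℝ u q v) (fderiv ℝ (fun q => fderiv ℝ u q v) p)
      (p + (0:ℝ) • v) := by simpa using h2.hasFDerivAt
    exact h3.comp_hasDerivAt 0 (hline 0)

lemma D2_eq {n : ℕ} {u : En n × ℝ → ℝ} {Ω : Set (En n × ℝ)} (hΩ : IsOpen Ω)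
    (hu : ContDiffOn ℝ 2 u Ω) {p : En n × ℝ} (hp : p ∈ Ω) (v : En n × ℝ) :
    D2 u p v = fderiv ℝ (fderiv ℝ u) p v v := by
  have hat : ContDiffAt ℝ 2 u p := hu.contDiffAt (hΩ.mem_nhds hp)
  have h1 : DifferentiableAt ℝ (fderiv ℝ u) p :=
      (hat.fderiv_right (m := 1) (by norm_num)).differentiableAt (by norm_num)
  unfold D2
  rw [fderiv_clm_apply h1 (differentiableAt_const v)]
  simp

lemma IsAHarmonicOn.slice {n : ℕ} {a : ℝ} {u : En n × ℝ → ℝ} {Ω : Set (En n × ℝ)} (hΩ : IsOpen Ω)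
    (hu : IsAHarmonicOn a u Ω) {p : En n × ℝ} (hp : p ∈ Ω) : SliceH a u p := by
  obtain ⟨hc, he⟩ := hu
  refine ⟨fun v => D2 u p (v, 0), fderiv ℝ u p (0, 1), D2 u p (0, 1), fun v => ?_, ?_, fun v => ?_,
    fun b => ?_⟩
  · refine ⟨fderiv ℝ u p (v, 0), ?_⟩
    have := hasD2_slice hΩ hc hp (v, 0)
    refine this.congr (Eventually.of_forall fun τ => ?_)
    show u _ = u _
    congr 1
    ext <;> simp
  · obtain ⟨f', h1, h2, h3⟩ := hasD2_slice hΩ hc hp (0, 1)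
    have hs : ∀ y : ℝ, HasDerivAt (fun y : ℝ => y - p.2) 1 y := fun y =>
      (hasDerivAt_id' y).sub_const _
    refine ⟨fun y => f' (y - p.2), ?_, ?_, by simp [h3]⟩
    · have : Tendsto (fun y : ℝ => y - p.2) (𝓝 p.2) (𝓝 0) := by
        have := (hs p.2).continuousAt.tendsto
        simpa using this
      filter_upwards [this.eventually h1] with y hy
      have := hy.comp y (hs y)
      simp only [mul_one] at this
      refine this.congr_of_eventuallyEq (Eventually.of_forall fun z => ?_)
      show u _ = u _
      congr 1
      ext <;> simp
    · have h2' : HasDerivAt f' (D2 u p (0, 1)) (p.2 - p.2) := by simpa using h2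
      have := HasDerivAt.comp (h := fun y : ℝ => y - p.2) p.2 h2' (hs p.2)
      rw [mul_one] at this; exact this
  · simp only [D2_eq hΩ hc hp]
    have : ((-v, 0) : En n × ℝ) = -(v, 0) := by ext <;> simp
    rw [this, map_neg, map_neg]; simp
  · have h0 := he p hp
    unfold lap at h0
    refine Eq.trans ?_ h0
    congr 2
    simp only [D2_eq hΩ hc hp]
    let J : En n →L[ℝ] En n × ℝ := ContinuousLinearMap.inl ℝ (En n) ℝ
    let B : En n →L[ℝ] En n →L[ℝ] ℝ :=
      ((ContinuousLinearMap.compL ℝ (En n) (En n × ℝ) ℝ).flip J).comp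
        ((fderiv ℝ (fderiv ℝ u) p).comp J)
    have := sum_onb_eq B b (EuclideanSpace.basisFun (Fin n) ℝ)
    simpa [B, J] using this

lemma isOpen_halfBall (n : ℕ) (r : ℝ) : IsOpen (halfBall n r) := by
  have h1 : IsOpen {p : En n × ℝ | ‖p.1‖ ^ 2 + p.2 ^ 2 < r ^ 2} :=
    isOpen_lt (by fun_prop) (by fun_prop)
  have h2 : IsOpen {p : En n × ℝ | 0 < p.2} := isOpen_lt (by fun_prop) (by fun_prop)
  exact h1.inter h2

lemma contact1 {n : ℕ} {a : ℝ} {w : En n × ℝ → ℝ} {x : En n} {y Bm y1 y2 : ℝ} {Ty : ℝ → ℝ}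
    (hw : SliceH a w (x, y))
    (hm : ∀ v : En n, ‖v‖ = 1 → ∃ (T : ℝ → ℝ) (l B : ℝ), HasD2 T 0 l B ∧ B ≤ Bm ∧
      (∀ᶠ τ in 𝓝 (0:ℝ), w (x + τ • v, y) ≤ T τ) ∧ w (x, y) = T 0)
    (hT : HasD2 Ty y y1 y2) (hle : ∀ᶠ η in 𝓝 y, w (x, η) ≤ Ty η) (heq : w (x, y) = Ty y) :
    0 ≤ n * Bm + y2 + a / y * y1 := by
  obtain ⟨q, r1, r2, h1, h2, h3, h4⟩ := hw
  have hq : ∀ v : En n, ‖v‖ = 1 → q v ≤ Bm := by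
    intro v hv
    obtain ⟨T, l, B, hT, hB, hev, he⟩ := hm v hv
    obtain ⟨l', hl⟩ := h1 v
    exact (hl.touch hT hev (by simpa using he)).2.trans hB
  have hy := h2.touch hT hle heq
  have hs := h4 (EuclideanSpace.basisFun (Fin n) ℝ)
  have : ∑ i, q (EuclideanSpace.basisFun (Fin n) ℝ i) ≤ n * Bm := by
    calc _ ≤ ∑ i : Fin n, Bm := Finset.sum_le_sum fun i _ => hq _ (by simp)
      _ = n * Bm := by simp
  obtain ⟨e1, e2⟩ := hy
  simp only at hs
  rw [e1] at hs
  linarith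

lemma contact2 {n : ℕ} {a : ℝ} {w : En n × ℝ → ℝ} {m d : En n} {y Br Bm r1 y1 y2 : ℝ} {Tr Ty : ℝ → ℝ}
    (hw : SliceH a w (m + d, y)) (hw' : SliceH a w (m - d, y)) (hd : d ≠ 0) (hBm : 0 ≤ Bm)
    (hTr : HasD2 Tr ‖d‖ r1 Br)
    (hr : ∀ᶠ τ in 𝓝 ‖d‖, w (m + (τ / ‖d‖) • d, y) - w (m - (τ / ‖d‖) • d, y) ≤ Tr τ)
    (hr0 : w (m + d, y) - w (m - d, y) = Tr ‖d‖)
    (hm : ∀ v : En n, ‖v‖ = 1 → ∃ (T : ℝ → ℝ) (l B : ℝ), HasD2 T 0 l B ∧ B ≤ Bm ∧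
      (∀ᶠ τ in 𝓝 (0:ℝ), w (m + τ • v + d, y) - w (m + τ • v - d, y) ≤ T τ) ∧
        w (m + d, y) - w (m - d, y) = T 0)
    (hT : HasD2 Ty y y1 y2) (hle : ∀ᶠ η in 𝓝 y, w (m + d, η) - w (m - d, η) ≤ Ty η)
    (heq : w (m + d, y) - w (m - d, y) = Ty y) :
    0 ≤ Br + n * Bm + y2 + a / y * y1 := by
  obtain ⟨q, s1, s2, h1, h2, h3, h4⟩ := hw
  obtain ⟨q', s1', s2', h1', h2', h3', h4'⟩ := hw'
  have hd0 : 0 < ‖d‖ := norm_pos_iff.mpr hd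
  set e : En n := (1 / ‖d‖) • d with he
  have hen : ‖e‖ = 1 := by rw [he, norm_smul]; simp [hd0.ne']
  have hq : ∀ v : En n, ‖v‖ = 1 → q v - q' v ≤ Bm := by
    intro v hv
    obtain ⟨T, l, B, hT, hB, hev, he⟩ := hm v hv
    obtain ⟨l1, hl1⟩ := h1 v
    obtain ⟨l2, hl2⟩ := h1' v
    refine ((hl1.sub hl2).touch hT ?_ (by simpa using he)).2.trans hB
    filter_upwards [hev] with τ hτ
    have e1 : m + d + τ • v = m + τ • v + d := by abel
    have e2 : m - d + τ • v = m + τ • v - d := by abel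
    simpa [e1, e2] using hτ
  have hqe : q e - q' e ≤ Br := by
    obtain ⟨l1, hl1⟩ := h1 e
    obtain ⟨l2, hl2⟩ := h1' (-e)
    rw [h3'] at hl2
    obtain ⟨f', g1, g2, g3⟩ := hTr
    have hs : ∀ τ : ℝ, HasDerivAt (fun τ : ℝ => ‖d‖ + τ) 1 τ := fun τ =>
      (hasDerivAt_id' τ).const_add _
    have ht : Tendsto (fun τ : ℝ => ‖d‖ + τ) (𝓝 0) (𝓝 ‖d‖) := by
      have := (hs 0).continuousAt.tendsto
      simpa using this
    have hT' : HasD2 (fun τ => Tr (‖d‖ + τ)) 0 r1 Br := by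
      refine ⟨fun τ => f' (‖d‖ + τ), ?_, ?_, by simp [g3]⟩
      · filter_upwards [ht.eventually g1] with τ hτ
        have := HasDerivAt.comp (h := fun τ : ℝ => ‖d‖ + τ) τ hτ (hs τ)
        rw [mul_one] at this; exact this
      · have g2' : HasDerivAt f' Br (‖d‖ + 0) := by simpa using g2
        have := HasDerivAt.comp (h := fun τ : ℝ => ‖d‖ + τ) 0 g2' (hs 0)
        rw [mul_one] at this; exact this
    refine ((hl1.sub hl2).touch hT' ?_ (by simpa using hr0)).2
    filter_upwards [ht.eventually hr] with τ hτ
    have e0 : ((‖d‖ + τ) / ‖d‖) • d = d + τ • e := by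
      rw [he, smul_smul, add_div, add_smul, div_self hd0.ne', one_smul]
      congr 2; ring
    rw [e0] at hτ
    have e1 : m + d + τ • e = m + (d + τ • e) := by abel
    have e2 : m - d + τ • (-e) = m - (d + τ • e) := by rw [smul_neg]; abel
    simpa only [e1, e2] using hτ
  have hy := (h2.sub h2').touch hT hle heq
  -- adapted basis
  have hn : 0 < n := by
    rcases Nat.eq_zero_or_pos n with h | h
    · subst h; exact absurd (Subsingleton.elim d 0) hd
    · exact h
  let i0 : Fin n := ⟨0, hn⟩
  have horth : Orthonormal ℝ (Set.domRestrict ({i0} : Set (Fin n)) (fun _ : Fin n => e)) := by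
    constructor
    · intro i; simpa using hen
    · intro i j hij
      exact absurd (Subsingleton.elim i j) hij
  obtain ⟨b, hb⟩ := horth.exists_orthonormalBasis_extension_of_card_eq (by simp)
  have hb0 : b i0 = e := hb i0 (by simp)
  have hs := h4 b
  have hs' := h4' b
  have : ∑ i, (q (b i) - q' (b i)) ≤ Br + n * Bm := by
    rw [← Finset.add_sum_erase Finset.univ _ (Finset.mem_univ i0), hb0]
    refine add_le_add hqe ?_
    calc _ ≤ ∑ i ∈ Finset.univ.erase i0, Bm := Finset.sum_le_sum fun i _ => hq _ (by simp)
      _ ≤ ∑ i : Fin n, Bm := Finset.sum_le_sum_of_subset_of_nonneg (Finset.erase_subset _ _)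
          (fun _ _ _ => hBm)
      _ = n * Bm := by simp
  rw [Finset.sum_sub_distrib] at this
  obtain ⟨e1, e2⟩ := hy
  simp only at hs hs'
  have : a / y * y1 = a / y * s1 - a / y * s1' := by rw [← e1]; ring
  linarith

/-- boundary point lemma. -/
lemma bdry_le {v v' : ℝ → ℝ} {a L η : ℝ} (hη : 0 < η)
    (hc : ContinuousOn v (Ico 0 η)) (hd : ∀ y ∈ Ioo 0 η, HasDerivAt v (v' y) y)
    (hle : ∀ y ∈ Ioo 0 η, v y ≤ v 0)
    (hL : Tendsto (fun y : ℝ => y ^ a * v' y) (𝓝[>] 0) (𝓝 L)) : L ≤ 0 := by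
  by_contra hcon
  push Not at hcon
  have h1 : ∀ᶠ y in 𝓝[>] (0:ℝ), 0 < y ^ a * v' y := hL.eventually (lt_mem_nhds hcon)
  obtain ⟨δ, hδ, hδ'⟩ := (mem_nhdsGT_iff_exists_Ioo_subset).1 h1
  have hδ0 : (0:ℝ) < δ := hδ
  set z := min δ η / 2 with hz
  have hz0 : 0 < z := by positivity
  have hzδ : z < δ := by rw [hz]; linarith [min_le_left δ η]
  have hzη : z < η := by rw [hz]; linarith [min_le_right δ η]
  have hmono : StrictMonoOn v (Icc 0 z) := by
    apply strictMonoOn_of_deriv_pos (convex_Icc 0 z)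
    · exact hc.mono fun y hy => ⟨hy.1, hy.2.trans_lt hzη⟩
    · intro y hy
      rw [interior_Icc] at hy
      rw [(hd y ⟨hy.1, hy.2.trans hzη⟩).deriv]
      have : 0 < y ^ a * v' y := hδ' ⟨hy.1, hy.2.trans hzδ⟩
      exact (pos_iff_pos_of_mul_pos this).1 (Real.rpow_pos_of_pos hy.1 a)
  have := hmono (left_mem_Icc.2 hz0.le) (right_mem_Icc.2 hz0.le) hz0
  linarith [hle z ⟨hz0, hzη⟩]

set_option maxHeartbeats 2000000 in
/-- interior gradient estimate, doubled version. -/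
lemma grad_est {n : ℕ} {a : ℝ} (ha0 : 0 ≤ a) (ha1 : a ≤ 1) {w : En n × ℝ → ℝ} {x0 : En n} {y0 r μ : ℝ}
    (hr : 0 < r) (hry : 2 * r ≤ y0) (hμ : 0 < μ)
    (hS : ∀ x y, ‖x - x0‖ ≤ r → |y - y0| ≤ r → SliceH a w (x, y))
    (hC : ContinuousOn w {p | ‖p.1 - x0‖ ≤ r ∧ |p.2 - y0| ≤ r})
    (hB : ∀ x y, ‖x - x0‖ ≤ r → |y - y0| ≤ r → |w (x, y)| ≤ μ) (h : En n) (hh : ‖h‖ ≤ r / 4) :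
    |w (x0 + h, y0) - w (x0 - h, y0)| ≤ 2 * μ * (4 * n + 12) * ‖h‖ / r := by
  have hn0 : (0:ℝ) ≤ n := Nat.cast_nonneg n
  -- test function
  let A : ℝ := 4 * n + 12
  let T : ℝ → En n → ℝ → ℝ := fun ρ m y =>
    2 * μ / r ^ 2 * (4 * (‖m - x0‖ ^ 2 + (y - y0) ^ 2) + A * (ρ * r - ρ ^ 2))
  let Q : Set (En n × En n × ℝ) := {P | ‖P.1 - x0‖ ≤ r / 2 ∧ ‖P.2.1‖ ≤ r / 4 ∧ |P.2.2 - y0| ≤ r / 2}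
  let Φ : En n × En n × ℝ → ℝ := fun P =>
    w (P.1 + P.2.1, P.2.2) - w (P.1 - P.2.1, P.2.2) - T ‖P.2.1‖ P.1 P.2.2
  have hin : ∀ P ∈ Q, ‖P.1 + P.2.1 - x0‖ ≤ r ∧ ‖P.1 - P.2.1 - x0‖ ≤ r ∧ |P.2.2 - y0| ≤ r := by
    rintro ⟨m, d, y⟩ ⟨h1, h2, h3⟩
    simp only at h1 h2 h3 ⊢
    refine ⟨?_, ?_, by linarith⟩
    · calc ‖m + d - x0‖ = ‖(m - x0) + d‖ := by congr 1; abel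
        _ ≤ r := (norm_add_le _ _).trans (by linarith)
    · calc ‖m - d - x0‖ = ‖(m - x0) - d‖ := by congr 1; abel
        _ ≤ r := (norm_sub_le _ _).trans (by linarith)
  have hQc : IsCompact Q := by
    have : Q = (Metric.closedBall x0 (r/2)) ×ˢ ((Metric.closedBall (0: En n) (r/4)) ×ˢ
        (Metric.closedBall y0 (r/2))) := by
      ext ⟨m, d, y⟩
      simp [Q, dist_eq_norm]
    rw [this]
    exact (isCompact_closedBall _ _).prod ((isCompact_closedBall _ _).prod (isCompact_closedBall _ _))
  have hΦc : ContinuousOn Φ Q := by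
    have c1 : ContinuousOn (fun P : En n × En n × ℝ => w (P.1 + P.2.1, P.2.2)) Q :=
      hC.comp (by fun_prop) fun P hP => ⟨(hin P hP).1, (hin P hP).2.2⟩
    have c2 : ContinuousOn (fun P : En n × En n × ℝ => w (P.1 - P.2.1, P.2.2)) Q :=
      hC.comp (by fun_prop) fun P hP => ⟨(hin P hP).2.1, (hin P hP).2.2⟩
    have c3 : Continuous (fun P : En n × En n × ℝ => T ‖P.2.1‖ P.1 P.2.2) := by
      simp only [T]; fun_prop
    exact (c1.sub c2).sub c3.continuousOn
  have hkey : ∀ P ∈ Q, Φ P ≤ 0 := by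
    by_contra hcon
    push Not at hcon
    obtain ⟨P0, hP0, hpos⟩ := hcon
    obtain ⟨⟨m, d, y⟩, hP, hmax⟩ := hQc.exists_isMaxOn ⟨P0, hP0⟩ hΦc
    have hpos' : 0 < Φ (m, d, y) := hpos.trans_le (hmax hP0)
    have hP' := hP
    obtain ⟨q1, q2, q3⟩ := hP'
    obtain ⟨i1, i2, i3⟩ := hin _ hP
    simp only at q1 q2 q3 i1 i2 i3
    have hF2 : w (m + d, y) - w (m - d, y) ≤ 2 * μ := by
      have := hB _ _ i1 i3
      have := hB _ _ i2 i3
      rw [abs_le] at *; linarith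
    have hΦ : Φ (m, d, y) = w (m + d, y) - w (m - d, y) - T ‖d‖ m y := rfl
    set F := w (m + d, y) - w (m - d, y) with hFdef
    have hTlt : T ‖d‖ m y < F := by linarith
    have hT2 : T ‖d‖ m y < 2 * μ := by linarith
    have hT2' : 4 * (‖m - x0‖ ^ 2 + (y - y0) ^ 2) + A * (‖d‖ * r - ‖d‖ ^ 2) < r ^ 2 := by
      have e : T ‖d‖ m y = 2 * μ * ((4 * (‖m - x0‖ ^ 2 + (y - y0) ^ 2) + A * (‖d‖ * r - ‖d‖ ^ 2)) / r ^ 2) := by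
        simp only [T]; ring
      rw [e] at hT2
      have : (4 * (‖m - x0‖ ^ 2 + (y - y0) ^ 2) + A * (‖d‖ * r - ‖d‖ ^ 2)) / r ^ 2 < 1 := by nlinarith
      rwa [div_lt_one (by positivity)] at this
    have hA : 8 ≤ A := by simp only [A]; linarith
    have hd1 : 0 ≤ ‖d‖ * r - ‖d‖ ^ 2 := by nlinarith [norm_nonneg d]
    have hAd : 8 * (‖d‖ * r - ‖d‖ ^ 2) ≤ A * (‖d‖ * r - ‖d‖ ^ 2) := by gcongr
    have s1 : ‖m - x0‖ < r / 2 := by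
      by_contra hc; push Not at hc
      have := le_antisymm q1 hc
      rw [this] at hT2'; nlinarith [sq_nonneg (y - y0)]
    have s2 : |y - y0| < r / 2 := by
      by_contra hc; push Not at hc
      have := le_antisymm q3 hc
      rw [← sq_abs (y - y0), this] at hT2'; nlinarith [sq_nonneg ‖m - x0‖]
    have s3 : ‖d‖ < r / 4 := by
      by_contra hc; push Not at hc
      have := le_antisymm q2 hc
      rw [this] at hT2' hAd; nlinarith [sq_nonneg ‖m - x0‖, sq_nonneg (y - y0)]
    have hd : d ≠ 0 := by
      rintro rfl
      simp only [add_zero, sub_zero, sub_self] at hFdef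
      have : 0 ≤ T ‖(0 : En n)‖ m y := by
        simp only [T, norm_zero]
        have : (0:ℝ) ≤ 4 * (‖m - x0‖ ^ 2 + (y - y0) ^ 2) + A * (0 * r - 0 ^ 2) := by
          have : (0:ℝ) ≤ 4 * (‖m - x0‖ ^ 2 + (y - y0) ^ 2) := by positivity
          linarith
        positivity
      linarith
    have hd0 : 0 < ‖d‖ := norm_pos_iff.mpr hd
    have hnh : ∀ᶠ P in 𝓝 (m, d, y), P ∈ Q := by
      have o1 : IsOpen {P : En n × En n × ℝ | ‖P.1 - x0‖ < r / 2} := isOpen_lt (by fun_prop) (by fun_prop)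
      have o2 : IsOpen {P : En n × En n × ℝ | ‖P.2.1‖ < r / 4} := isOpen_lt (by fun_prop) (by fun_prop)
      have o3 : IsOpen {P : En n × En n × ℝ | |P.2.2 - y0| < r / 2} := isOpen_lt (by fun_prop) (by fun_prop)
      have := o1.inter (o2.inter o3)
      filter_upwards [this.mem_nhds ⟨s1, s3, s2⟩] with P hP
      exact ⟨hP.1.le, hP.2.1.le, hP.2.2.le⟩
    have hloc : ∀ᶠ P in 𝓝 (m, d, y), w (P.1 + P.2.1, P.2.2) - w (P.1 - P.2.1, P.2.2) ≤
        T ‖P.2.1‖ P.1 P.2.2 + Φ (m, d, y) := by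
      filter_upwards [hnh] with P hP
      have : Φ P ≤ Φ (m, d, y) := hmax hP
      simp only [Φ] at this ⊢
      linarith
    set Φ0 := Φ (m, d, y)
    set k := 2 * μ / r ^ 2 with hk
    have hk0 : 0 < k := by positivity
    have hy0 : 0 < y := by rw [abs_lt] at s2; linarith
    have hy3 : |y - y0| ≤ y := by rw [abs_le]; rw [abs_lt] at s2; constructor <;> linarith
    have J := contact2 (a := a) (w := w) (m := m) (d := d) (y := y) (Br := -2 * A * k) (Bm := 8 * k)
      (r1 := k * A * (r - 2 * ‖d‖)) (y1 := k * (8 * (y - y0))) (y2 := 8 * k)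
      (Tr := fun ρ => T ρ m y + Φ0) (Ty := fun η => T ‖d‖ m η + Φ0)
      (hS _ _ i1 i3) (hS _ _ i2 i3) hd (by positivity) ?_ ?_ ?_ ?_ ?_ ?_ ?_
    · have h1 : a / y * (k * (8 * (y - y0))) ≤ 8 * k := by
        have h2 : a / y * (y - y0) ≤ 1 := by
          rw [div_mul_eq_mul_div, div_le_one hy0]
          have := le_abs_self (y - y0)
          nlinarith [abs_nonneg (y - y0)]
        nlinarith
      simp only [A] at J
      nlinarith
    · have := ((((HasD2.ident ‖d‖).const_mul r).sub ((HasD2.ident ‖d‖).mul (HasD2.ident ‖d‖))).const_mul (k * A)).add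
        (HasD2.const (k * (4 * (‖m - x0‖ ^ 2 + (y - y0) ^ 2)) + Φ0) ‖d‖)
      refine (this.congr_val (by ring) (by ring)).congr (Eventually.of_forall fun ρ => ?_)
      simp only [T]; ring
    · have ht : Tendsto (fun τ : ℝ => (m, (τ / ‖d‖) • d, y)) (𝓝 ‖d‖) (𝓝 (m, d, y)) := by
        have : Continuous (fun τ : ℝ => (m, (τ / ‖d‖) • d, y)) := by fun_prop
        have := this.tendsto ‖d‖
        simpa [hd0.ne'] using this
      filter_upwards [ht.eventually hloc, lt_mem_nhds hd0] with τ hτ hτ0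
      have e : ‖(τ / ‖d‖) • d‖ = τ := by
        rw [norm_smul, Real.norm_eq_abs, abs_of_pos (by positivity), div_mul_cancel₀ _ hd0.ne']
      simp only [e] at hτ
      exact hτ
    · simp only [Φ0, hΦ]; ring
    · intro v hv
      refine ⟨fun τ => T ‖d‖ (m + τ • v) y + Φ0, k * (8 * inner ℝ (m - x0) v), 8 * k, ?_, le_rfl, ?_, ?_⟩
      · have := ((((HasD2.ident 0).const_mul (2 * inner ℝ (m - x0) v)).add
          ((HasD2.ident 0).mul (HasD2.ident 0))).const_mul (4 * k)).add
          (HasD2.const (k * (4 * (‖m - x0‖ ^ 2 + (y - y0) ^ 2) + A * (‖d‖ * r - ‖d‖ ^ 2)) + Φ0) 0)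
        refine (this.congr_val (by ring) (by ring)).congr (Eventually.of_forall fun τ => ?_)
        have e : ‖m + τ • v - x0‖ ^ 2 = ‖m - x0‖ ^ 2 + 2 * τ * inner ℝ (m - x0) v + τ ^ 2 := by
          rw [show m + τ • v - x0 = (m - x0) + τ • v by abel, norm_add_sq_real, norm_smul, hv,
            inner_smul_right, mul_one, Real.norm_eq_abs, sq_abs]
          ring
        simp only [T, e]; ring
      · have ht : Tendsto (fun τ : ℝ => (m + τ • v, d, y)) (𝓝 0) (𝓝 (m, d, y)) := by
          have : Continuous (fun τ : ℝ => (m + τ • v, d, y)) := by fun_prop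
          have := this.tendsto 0
          simpa using this
        exact ht.eventually hloc
      · simp only [Φ0, hΦ, zero_smul, add_zero]; ring
    · have := ((((HasD2.ident y).sub (HasD2.const y0 y)).mul ((HasD2.ident y).sub (HasD2.const y0 y))).const_mul (4 * k)).add
        (HasD2.const (k * (4 * (‖m - x0‖ ^ 2) + A * (‖d‖ * r - ‖d‖ ^ 2)) + Φ0) y)
      refine (this.congr_val (by ring) (by ring)).congr (Eventually.of_forall fun ρ => ?_)
      simp only [T]; ring
    · have ht : Tendsto (fun η : ℝ => (m, d, η)) (𝓝 y) (𝓝 (m, d, y)) := by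
        have : Continuous (fun η : ℝ => (m, d, η)) := by fun_prop
        exact this.tendsto y
      exact ht.eventually hloc
    · simp only [Φ0, hΦ]; ring
  have hfin : ∀ d : En n, ‖d‖ ≤ r / 4 → w (x0 + d, y0) - w (x0 - d, y0) ≤ 2 * μ * (4 * n + 12) * ‖d‖ / r := by
    intro d hd
    have := hkey (x0, d, y0) ⟨by simp; positivity, hd, by simp; positivity⟩
    simp only [Φ, T, A, sub_self, norm_zero] at this
    have e : 2 * μ / r ^ 2 * (4 * (0 ^ 2 + 0 ^ 2) + (4 * n + 12) * (‖d‖ * r - ‖d‖ ^ 2)) ≤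
        2 * μ * (4 * n + 12) * ‖d‖ / r := by
      have : 2 * μ * (4 * n + 12) * ‖d‖ / r = 2 * μ / r ^ 2 * ((4 * n + 12) * (‖d‖ * r)) := by
        field_simp
      rw [this]
      gcongr
      nlinarith [sq_nonneg ‖d‖]
    linarith
  rw [abs_le]
  constructor
  · have := hfin (-h) (by simpa using hh)
    simp only [norm_neg, sub_neg_eq_add, ← sub_eq_add_neg] at this
    linarith
  · exact hfin h hh

/-- Extracted properties of a solution on a box. -/
structure Good {n : ℕ} (a γ M U0 F : ℝ) (b : ℝ → En n → En n) (f : ℝ → En n → ℝ)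
    (u : ℝ → En n × ℝ → ℝ) : Prop where
  cont : ContinuousOn (fun q : ℝ × (En n × ℝ) => u q.1 q.2)
    {q | -1 ≤ q.1 ∧ q.1 ≤ 0 ∧ ‖q.2.1‖ ≤ 7/8 ∧ 0 ≤ q.2.2 ∧ q.2.2 ≤ 3/8}
  slice : ∀ t x y, -1 ≤ t → t ≤ 0 → ‖x‖ ≤ 7/8 → 0 < y → y ≤ 3/8 → SliceH a (u t) (x, y)
  bound : ∀ t x y, -1 ≤ t → t ≤ 0 → ‖x‖ ≤ 7/8 → 0 ≤ y → y ≤ 3/8 → |u t (x, y)| ≤ U0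
  eqn : ∀ t x, -1 < t → t ≤ 0 → ‖x‖ ≤ 7/8 → ∃ (Dt L : ℝ) (G : En n →L[ℝ] ℝ) (v' : ℝ → ℝ),
    HasDerivWithinAt (fun τ => u τ (x, 0)) Dt (Iic t) t ∧
    HasFDerivAt (fun z => u t (z, 0)) G x ∧
    (∀ y, 0 < y → y < 3/8 → HasDerivAt (fun η => u t (x, η)) (v' y) y) ∧
    Tendsto (fun y : ℝ => y ^ a * v' y) (𝓝[>] 0) (𝓝 L) ∧
    Dt + G (b t x) - L = f t x
  bM : ∀ t x, -1 ≤ t → t ≤ 0 → ‖x‖ ≤ 7/8 → ‖b t x‖ ≤ M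
  bH : ∀ t x x', -1 ≤ t → t ≤ 0 → ‖x‖ ≤ 7/8 → ‖x'‖ ≤ 7/8 → ‖b t x - b t x'‖ ≤ M * ‖x - x'‖ ^ γ
  fH : ∀ t x x', -1 ≤ t → t ≤ 0 → ‖x‖ ≤ 7/8 → ‖x'‖ ≤ 7/8 → |f t x - f t x'| ≤ F * ‖x - x'‖ ^ γ

lemma HasD2.neg' {f : ℝ → ℝ} {x f1 f2 : ℝ} (hf : HasD2 f x f1 f2) :
    HasD2 (fun y => - f y) x (-f1) (-f2) := hf.neg

lemma SliceH.neg {n : ℕ} {a : ℝ} {w : En n × ℝ → ℝ} {p : En n × ℝ} (hw : SliceH a w p) :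
    SliceH a (fun p => - w p) p := by
  obtain ⟨q, r1, r2, h1, h2, h3, h4⟩ := hw
  refine ⟨fun v => - q v, - r1, - r2, fun v => ?_, h2.neg, fun v => by simp [h3], fun b => ?_⟩
  · obtain ⟨l, hl⟩ := h1 v
    exact ⟨_, hl.neg⟩
  · have := h4 b
    rw [Finset.sum_neg_distrib]
    linear_combination - this

lemma Good.neg {n : ℕ} {a γ M U0 F : ℝ} {b : ℝ → En n → En n} {f : ℝ → En n → ℝ}
    {u : ℝ → En n × ℝ → ℝ} (h : Good a γ M U0 F b f u) :
    Good a γ M U0 F b (fun t x => - f t x) (fun t p => - u t p) where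
  cont := h.cont.neg
  slice t x y h1 h2 h3 h4 h5 := (h.slice t x y h1 h2 h3 h4 h5).neg
  bound t x y h1 h2 h3 h4 h5 := by rw [abs_neg]; exact h.bound t x y h1 h2 h3 h4 h5
  eqn t x h1 h2 h3 := by
    obtain ⟨Dt, L, G, v', e1, e2, e3, e4, e5⟩ := h.eqn t x h1 h2 h3
    refine ⟨-Dt, -L, -G, fun y => - v' y, e1.neg, e2.neg, fun y hy hy' => (e3 y hy hy').neg, ?_, ?_⟩
    · simpa using e4.neg
    · simp only [_root_.neg_apply]; linear_combination - e5
  bM := h.bM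
  bH := h.bH
  fH t x x' h1 h2 h3 h4 := by
    have := h.fH t x x' h1 h2 h3 h4
    rw [← abs_neg]; convert this using 2; ring

lemma box_sub {n : ℕ} {x : En n} {y : ℝ} (h3 : ‖x‖ ≤ 7/8) (h4 : 0 ≤ y) (h5 : y ≤ 3/8) :
    ‖x‖ ^ 2 + y ^ 2 < 1 ^ 2 := by
  nlinarith [norm_nonneg x]

lemma Good.of_sol {n : ℕ} {a γ M U0 F : ℝ} {b : ℝ → En n → En n} {f : ℝ → En n → ℝ}
    {u : ℝ → En n × ℝ → ℝ}
    (hb : ∀ t ∈ Icc (-1 : ℝ) 0, (∀ x ∈ flatBall n 1, ‖b t x‖ ≤ M) ∧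
        ∀ x ∈ flatBall n 1, ∀ x' ∈ flatBall n 1, ‖b t x - b t x'‖ ≤ M * ‖x - x'‖ ^ γ)
    (hf : ∀ t ∈ Icc (-1 : ℝ) 0, (∀ x ∈ flatBall n 1, |f t x| ≤ F) ∧
        ∀ x ∈ flatBall n 1, ∀ x' ∈ flatBall n 1, |f t x - f t x'| ≤ F * ‖x - x'‖ ^ γ)
    (hu : IsExtDDSolution a b f u)
    (hB : ∀ t ∈ Icc (-1 : ℝ) 0, ∀ p ∈ halfBall n 1, |u t p| ≤ U0) : Good a γ M U0 F b f u := by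
  obtain ⟨h1, h2, h3, h4⟩ := hu
  have hfl : ∀ x : En n, ‖x‖ ≤ 7/8 → x ∈ flatBall n 1 := fun x hx => by
    show ‖x‖ < 1
    linarith
  refine ⟨h1.mono ?_, ?_, ?_, ?_, ?_, ?_, ?_⟩
  · rintro ⟨t, x, y⟩ ⟨a1, a2, a3, a4, a5⟩
    exact ⟨⟨a1, a2⟩, (box_sub a3 a4 a5).le, a4⟩
  · intro t x y a1 a2 a3 a4 a5
    exact (h2 t ⟨a1, a2⟩).slice (isOpen_halfBall n 1) ⟨box_sub a3 a4.le a5, a4⟩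
  · intro t x y a1 a2 a3 a4 a5
    rcases a4.eq_or_lt with rfl | a4'
    · have hc : ContinuousWithinAt (fun y => u t (x, y)) (Icc 0 (3/8)) 0 := by
        have := h1.comp (f := fun y : ℝ => (t, x, y)) (s := Icc 0 (3/8)) (by fun_prop)
          (fun y hy => ⟨⟨a1, a2⟩, (box_sub a3 hy.1 hy.2).le, hy.1⟩)
        exact this 0 ⟨le_rfl, by norm_num⟩
      have hc' : Tendsto (fun y => |u t (x, y)|) (𝓝[>] 0) (𝓝 |u t (x, 0)|) := by
        have : Tendsto (fun y => u t (x, y)) (𝓝[>] 0) (𝓝 (u t (x, 0))) := by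
          refine hc.tendsto.mono_left ?_
          rw [← nhdsWithin_Ioo_eq_nhdsGT (show (0:ℝ) < 3/8 by norm_num)]
          exact nhdsWithin_mono _ Ioo_subset_Icc_self
        exact this.abs
      refine le_of_tendsto hc' ?_
      filter_upwards [Ioo_mem_nhdsGT (show (0:ℝ) < 3/8 by norm_num)] with y hy
      exact hB t ⟨a1, a2⟩ _ ⟨box_sub a3 hy.1.le hy.2.le, hy.1⟩
    · exact hB t ⟨a1, a2⟩ _ ⟨box_sub a3 a4 a5, a4'⟩
  · intro t x a1 a2 a3
    have hmem : (t, x) ∈ Ioc (-1 : ℝ) 0 ×ˢ flatBall n 1 := ⟨⟨a1, a2⟩, hfl x a3⟩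
    obtain ⟨L, hL, he⟩ := h4 t x hmem
    have hd := (h3 (t, x) hmem).hasFDerivWithinAt
    set D := fderivWithin ℝ (bdryFun u) (Ioc (-1 : ℝ) 0 ×ˢ flatBall n 1) (t, x)
    refine ⟨D (1, 0), L, D.comp (ContinuousLinearMap.inr ℝ ℝ (En n)), fun y => fderiv ℝ (u t) (x, y) (0, 1),
      ?_, ?_, ?_, hL, by simpa using he⟩
    · have hg : HasDerivWithinAt (fun τ : ℝ => (τ, x)) ((1:ℝ), (0 : En n)) (Ioc (-1) t) t :=
        (hasDerivWithinAt_id t _).prodMk (hasDerivWithinAt_const t _ x)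
      have := hd.comp_hasDerivWithinAt (t := Ioc (-1 : ℝ) 0 ×ˢ flatBall n 1) t hg
        (fun τ hτ => show _ ∈ Ioc (-1 : ℝ) 0 ×ˢ flatBall n 1 from ⟨⟨hτ.1, hτ.2.trans a2⟩, hfl x a3⟩)
      have h5 : HasDerivWithinAt (fun τ => u τ (x, 0)) (D (1, 0)) (Ioc (-1) t) t := this
      refine h5.mono_of_mem_nhdsWithin ?_
      have := inter_mem_nhdsWithin (Iic t) (Ioi_mem_nhds a1)
      filter_upwards [this] with z hz
      exact ⟨hz.2, hz.1⟩
    · have hg : HasFDerivWithinAt (fun z : En n => (t, z)) (ContinuousLinearMap.inr ℝ ℝ (En n)) (flatBall n 1) x :=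
        (hasFDerivAt_prodMk_right t x).hasFDerivWithinAt
      have := hd.comp x hg (fun z hz => ⟨⟨a1, a2⟩, hz⟩)
      have h5 : HasFDerivWithinAt (fun z => u t (z, 0)) (D.comp (ContinuousLinearMap.inr ℝ ℝ (En n))) (flatBall n 1) x := this
      refine h5.hasFDerivAt ?_
      have ho : IsOpen (flatBall n 1) := isOpen_lt (by fun_prop) (by fun_prop)
      exact ho.mem_nhds (hfl x a3)
    · intro y hy hy'
      have hp : (x, y) ∈ halfBall n 1 := ⟨box_sub a3 hy.le hy'.le, hy⟩
      have hdiff : DifferentiableAt ℝ (u t) (x, y) :=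
        ((h2 t ⟨a1.le, a2⟩).1.contDiffAt ((isOpen_halfBall n 1).mem_nhds hp)).differentiableAt (by norm_num)
      have hg : HasDerivAt (fun η : ℝ => (x, η)) ((0 : En n), (1:ℝ)) y :=
        (hasDerivAt_const y x).prodMk (hasDerivAt_id y)
      exact hdiff.hasFDerivAt.comp_hasDerivAt y hg
  · intro t x a1 a2 a3
    exact (hb t ⟨a1, a2⟩).1 x (hfl x a3)
  · intro t x x' a1 a2 a3 a4
    exact (hb t ⟨a1, a2⟩).2 x (hfl x a3) x' (hfl x' a4)
  · intro t x x' a1 a2 a3 a4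
    exact (hf t ⟨a1, a2⟩).2 x (hfl x a3) x' (hfl x' a4)

lemma deriv_left_ge {g T : ℝ → ℝ} {t g' T' : ℝ} (hg : HasDerivWithinAt g g' (Iic t) t)
    (hT : HasDerivAt T T' t) (hle : ∀ᶠ τ in 𝓝[<] t, g τ ≤ T τ) (heq : g t = T t) : T' ≤ g' := by
  have h : HasDerivWithinAt (fun τ => T τ - g τ) (T' - g') (Iic t) t := hT.hasDerivWithinAt.sub hg
  have h2 : HasDerivWithinAt (fun τ => T τ - g τ) (T' - g') (Iio t) t := h.mono Iio_subset_Iic_self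
  rw [hasDerivWithinAt_iff_tendsto_slope' (by simp)] at h2
  have : T' - g' ≤ 0 := by
    refine le_of_tendsto h2 ?_
    filter_upwards [hle, self_mem_nhdsWithin] with τ h3 h4
    rw [slope_def_field]
    apply div_nonpos_of_nonneg_of_nonpos
    · linarith
    · have : τ < t := h4
      linarith
  linarith

/-- cutoff function -/
def thf {n : ℕ} (c R : ℝ) (t : ℝ) (m : En n) : ℝ := (t + c) * (R - ‖m‖ ^ 2)

lemma thf_line {n : ℕ} (c R t : ℝ) (m v : En n) (τ : ℝ) :
    thf c R t (m + τ • v) = thf c R t m + (t + c) * (-(2 * inner ℝ m v) * τ - ‖v‖ ^ 2 * (τ * τ)) := by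
  have e : ‖m + τ • v‖ ^ 2 = ‖m‖ ^ 2 + 2 * τ * inner ℝ m v + τ ^ 2 * ‖v‖ ^ 2 := by
    rw [norm_add_sq_real, norm_smul, inner_smul_right, Real.norm_eq_abs, mul_pow, sq_abs]
    ring
  simp only [thf, e]; ring

lemma thf_D2 {n : ℕ} (c R t : ℝ) (m v : En n) :
    HasD2 (fun τ => thf c R t (m + τ • v)) 0 (-(2 * (t + c) * inner ℝ m v)) (-(2 * (t + c) * ‖v‖ ^ 2)) := by
  have := (((HasD2.ident 0).const_mul (-(2 * inner ℝ m v))).sub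
    (((HasD2.ident 0).mul (HasD2.ident 0)).const_mul (‖v‖ ^ 2))).const_mul (t + c)
  have := (HasD2.const (thf c R t m) 0).add this
  refine (this.congr_val (by ring) (by ring)).congr (Eventually.of_forall fun τ => ?_)
  exact thf_line c R t m v τ

lemma psi_D2 {n : ℕ} {c R t ν : ℝ} {m v : En n} (hν : 0 < ν) (ht0 : 0 < t + c) (ht1 : t + c ≤ 1)
    (hR1 : R ≤ 1) (hθ : 0 < thf c R t m) (hv : ‖v‖ = 1) :
    ∃ l B, HasD2 (fun τ => (thf c R t (m + τ • v)) ^ (-ν)) 0 l B ∧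
      B ≤ (4 * ν ^ 2 + 6 * ν) * thf c R t m ^ (-2 : ℝ) * thf c R t m ^ (-ν) := by
  have h := (thf_D2 c R t m v).rpow (by simpa using hθ) (-ν)
  refine ⟨_, _, h, ?_⟩
  simp only [zero_smul, add_zero, hv]
  have hm : ‖m‖ ^ 2 < R := by
    unfold thf at hθ
    have := (pos_iff_pos_of_mul_pos hθ).1 ht0
    linarith
  have hth1 : thf c R t m ≤ 1 := by
    unfold thf
    have : R - ‖m‖ ^ 2 ≤ 1 := by nlinarith [sq_nonneg ‖m‖]
    nlinarith [sq_nonneg ‖m‖]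
  set θ := thf c R t m with hθd
  have hin : (inner ℝ m v) ^ 2 ≤ 1 := by
    have := abs_real_inner_le_norm m v
    rw [hv, mul_one] at this
    rw [← sq_abs]
    have h2 := abs_nonneg (inner ℝ m v : ℝ)
    nlinarith
  have e1 : θ ^ (-2 : ℝ) * θ ^ (-ν) = θ ^ (-ν - 2) := by
    rw [← Real.rpow_add hθ]; congr 1; ring
  have e2 : θ ^ (-ν - 1) ≤ θ ^ (-ν - 2) := Real.rpow_le_rpow_of_exponent_ge hθ hth1 (by linarith)
  have p1 : 0 < θ ^ (-ν - 1) := Real.rpow_pos_of_pos hθ _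
  have p2 : 0 < θ ^ (-ν - 2) := Real.rpow_pos_of_pos hθ _
  have e3 : (-(2 * (t + c) * inner ℝ m v)) ^ 2 ≤ 4 := by
    have : (t + c) ^ 2 ≤ 1 := by nlinarith
    have h3 : (t + c) ^ 2 * (inner ℝ m v) ^ 2 ≤ 1 * 1 := by gcongr
    nlinarith
  rw [mul_assoc (4 * ν ^ 2 + 6 * ν), e1]
  have t1 : -ν * θ ^ (-ν - 1) * (-(2 * (t + c) * 1 ^ 2)) ≤ 2 * ν * θ ^ (-ν - 2) := by
    have : (t + c) * θ ^ (-ν - 1) ≤ 1 * θ ^ (-ν - 2) := by gcongr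
    nlinarith
  have t2 : -ν * (-ν - 1) * θ ^ (-ν - 2) * (-(2 * (t + c) * inner ℝ m v)) ^ 2 ≤
      ν * (ν + 1) * θ ^ (-ν - 2) * 4 := by
    have : -ν * (-ν - 1) * θ ^ (-ν - 2) = ν * (ν + 1) * θ ^ (-ν - 2) := by ring
    rw [this]
    gcongr
  linarith

lemma psi_dir {n : ℕ} {c R t ν : ℝ} {m v : En n} (hν : 0 < ν) (ht0 : 0 < t + c) (ht1 : t + c ≤ 1)
    (hR1 : R ≤ 1) (hθ : 0 < thf c R t m) :
    ∃ l, HasDerivAt (fun τ : ℝ => (thf c R t (m + τ • v)) ^ (-ν)) l 0 ∧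
      |l| ≤ 2 * ν * ‖v‖ * thf c R t m ^ (-ν) / thf c R t m := by
  have h := ((thf_D2 c R t m v).rpow (by simpa using hθ) (-ν)).hasDerivAt
  refine ⟨_, h, ?_⟩
  simp only [zero_smul, add_zero]
  have hm : ‖m‖ ≤ 1 := by
    unfold thf at hθ
    have := (pos_iff_pos_of_mul_pos hθ).1 ht0
    nlinarith [norm_nonneg m]
  set θ := thf c R t m with hθd
  rw [Real.rpow_sub_one hθ.ne']
  have p1 : 0 < θ ^ (-ν) := Real.rpow_pos_of_pos hθ _
  have hin : |(inner ℝ m v : ℝ)| ≤ ‖v‖ := by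
    have := abs_real_inner_le_norm m v
    nlinarith [norm_nonneg v]
  rw [abs_mul, abs_mul, abs_neg, abs_neg, abs_mul, abs_mul, abs_two, abs_of_pos hν, abs_of_pos ht0,
    abs_of_pos (div_pos p1 hθ)]
  have : ν * (θ ^ (-ν) / θ) * (2 * (t + c) * |(inner ℝ m v : ℝ)|) ≤ ν * (θ ^ (-ν) / θ) * (2 * 1 * ‖v‖) := by
    gcongr
  refine this.trans (le_of_eq ?_)
  ring

lemma psi_t {n : ℕ} {c R t ν : ℝ} {m : En n} (hν : 0 < ν) (hR1 : R ≤ 1) (hθ : 0 < thf c R t m) :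
    ∃ l, HasDerivAt (fun τ => (thf c R τ m) ^ (-ν)) l t ∧ -(ν * thf c R t m ^ (-ν) / thf c R t m) ≤ l := by
  have h1 : HasD2 (fun τ => thf c R τ m) t (R - ‖m‖ ^ 2) 0 := by
    have := ((HasD2.ident t).add (HasD2.const c t)).mul (HasD2.const (R - ‖m‖ ^ 2) t)
    exact this.congr_val (by ring) (by ring)
  have h := (h1.rpow hθ (-ν)).hasDerivAt
  refine ⟨_, h, ?_⟩
  set θ := thf c R t m with hθd
  rw [Real.rpow_sub_one hθ.ne']
  have p1 : 0 < θ ^ (-ν) / θ := div_pos (Real.rpow_pos_of_pos hθ _) hθ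
  have : R - ‖m‖ ^ 2 ≤ 1 := by nlinarith [sq_nonneg ‖m‖]
  have : ν * (θ ^ (-ν) / θ) * (R - ‖m‖ ^ 2) ≤ ν * (θ ^ (-ν) / θ) * 1 := by gcongr
  have e : ν * θ ^ (-ν) / θ = ν * (θ ^ (-ν) / θ) := by ring
  rw [e]; linarith

/-- the doubling profile -/
def Wf (p s ρ y : ℝ) : ℝ :=
  ρ * (1 - 1/4 * (ρ ^ 2 + y ^ 2) ^ p - p/8 * (y ^ (2 * s) * (ρ ^ 2 + y ^ 2) ^ (p - s)))

lemma Wf_bounds {p s ρ y : ℝ} (hp : 0 < p) (hps : p < s) (hs : s < 1/2) (hρ : 0 < ρ) (hy : 0 ≤ y)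
    (hS : ρ ^ 2 + y ^ 2 ≤ 1) : ρ / 2 ≤ Wf p s ρ y ∧ Wf p s ρ y ≤ ρ := by
  have hS0 : 0 < ρ ^ 2 + y ^ 2 := by positivity
  have h1 : (ρ ^ 2 + y ^ 2) ^ p ≤ 1 := Real.rpow_le_one hS0.le hS hp.le
  have h1' : 0 ≤ (ρ ^ 2 + y ^ 2) ^ p := by positivity
  have h2 : y ^ (2 * s) ≤ (ρ ^ 2 + y ^ 2) ^ s := by
    rw [Real.rpow_mul hy]
    have : y ^ (2:ℝ) ≤ ρ ^ 2 + y ^ 2 := by rw [Real.rpow_two]; nlinarith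
    exact Real.rpow_le_rpow (by positivity) this (by linarith)
  have h3 : y ^ (2 * s) * (ρ ^ 2 + y ^ 2) ^ (p - s) ≤ 1 := by
    calc y ^ (2 * s) * (ρ ^ 2 + y ^ 2) ^ (p - s) ≤ (ρ ^ 2 + y ^ 2) ^ s * (ρ ^ 2 + y ^ 2) ^ (p - s) := by gcongr
      _ = (ρ ^ 2 + y ^ 2) ^ p := by rw [← Real.rpow_add hS0]; congr 1; ring
      _ ≤ 1 := h1
  have h3' : 0 ≤ y ^ (2 * s) * (ρ ^ 2 + y ^ 2) ^ (p - s) := by positivity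
  have h4 : p/8 * (y ^ (2 * s) * (ρ ^ 2 + y ^ 2) ^ (p - s)) ≤ 1/4 := by nlinarith
  have h5 : 0 ≤ p/8 * (y ^ (2 * s) * (ρ ^ 2 + y ^ 2) ^ (p - s)) := by positivity
  unfold Wf
  constructor
  · nlinarith
  · nlinarith

lemma Wf_cont {p s : ℝ} (hs : 0 < s) : ContinuousOn (fun q : ℝ × ℝ => Wf p s q.1 q.2) {q | 0 < q.1} := by
  have hS : ∀ r : ℝ, ContinuousOn (fun q : ℝ × ℝ => (q.1 ^ 2 + q.2 ^ 2) ^ r) {q | 0 < q.1} := by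
    intro r
    apply ContinuousOn.rpow_const (by fun_prop)
    intro q hq
    have : 0 < q.1 := hq
    left; positivity
  have hy : Continuous (fun q : ℝ × ℝ => q.2 ^ (2 * s)) :=
    continuous_snd.rpow_const (fun _ => Or.inr (by positivity))
  unfold Wf
  exact continuousOn_fst.mul ((continuousOn_const.sub (continuousOn_const.mul (hS p))).sub
    (continuousOn_const.mul (hy.continuousOn.mul (hS _))))

lemma Wf_zero {p s ρ : ℝ} (hs : 0 < s) (hρ : 0 < ρ) : Wf p s ρ 0 = ρ - 1/4 * ρ ^ (1 + 2 * p) := by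
  unfold Wf
  rw [Real.zero_rpow (by positivity)]
  have : (ρ ^ 2 + (0:ℝ) ^ 2) ^ p = ρ ^ (2 * p) := by
    rw [Real.rpow_mul hρ.le, Real.rpow_two]; norm_num
  rw [this, Real.rpow_add hρ, Real.rpow_one]
  ring

lemma Wf_r0 {p s ρ : ℝ} (hp : 0 < p) (hp1 : p < 1/2) (hs : 0 < s) (hρ : 0 < ρ) (hρ1 : ρ ≤ 1) :
    ∃ r1, HasDerivAt (fun ρ => Wf p s ρ 0) r1 ρ ∧ |r1| ≤ 1 := by
  have h := (HasD2.ident ρ).sub (((HasD2.ident ρ).rpow hρ (1 + 2 * p)).const_mul (1/4))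
  have h2 := h.hasDerivAt
  refine ⟨_, h2.congr_of_eventuallyEq ?_, ?_⟩
  · filter_upwards [lt_mem_nhds hρ] with z hz
    exact Wf_zero hs hz
  · have e1 : ρ ^ (1 + 2 * p - 1) ≤ 1 := Real.rpow_le_one hρ.le hρ1 (by linarith)
    have e2 : 0 ≤ ρ ^ (1 + 2 * p - 1) := by positivity
    rw [abs_le]; constructor <;> nlinarith

lemma Wf_L {p s ρ y : ℝ} (hp : 0 < p) (hps : p < s) (hs : s < 1/2) (hρ : 0 < ρ) (hy : 0 < y) :
    ∃ r1 r2 y1 y2, HasD2 (fun ρ => Wf p s ρ y) ρ r1 r2 ∧ HasD2 (fun y => Wf p s ρ y) y y1 y2 ∧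
      r2 + y2 + (1 - 2 * s) / y * y1 ≤ -(p / 2) * ρ * (ρ ^ 2 + y ^ 2) ^ (p - 1) := by
  have hS0 : 0 < ρ ^ 2 + y ^ 2 := by positivity
  have sq : ∀ x : ℝ, HasD2 (fun x => x ^ 2) x (2 * x) 2 := fun x => by
    refine (((HasD2.ident x).mul (HasD2.ident x)).congr_val (by ring) (by ring)).congr
      (Eventually.of_forall fun z => by simp only; ring)
  have hSr : HasD2 (fun ρ => ρ ^ 2 + y ^ 2) ρ (2 * ρ) 2 :=
    ((sq ρ).add (HasD2.const (y ^ 2) ρ)).congr_val (by ring) (by ring)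
  have hSy : HasD2 (fun y => ρ ^ 2 + y ^ 2) y (2 * y) 2 :=
    ((HasD2.const (ρ ^ 2) y).add (sq y)).congr_val (by ring) (by ring)
  have r := (HasD2.ident ρ).mul (((HasD2.const 1 ρ).sub ((hSr.rpow hS0 p).const_mul (1/4))).sub
    (((hSr.rpow hS0 (p - s)).const_mul (y ^ (2 * s))).const_mul (p/8)))
  have yy := (((HasD2.const 1 y).sub ((hSy.rpow hS0 p).const_mul (1/4))).sub
    ((((HasD2.ident y).rpow hy (2 * s)).mul (hSy.rpow hS0 (p - s))).const_mul (p/8))).const_mul ρ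
  refine ⟨_, _, _, _, r, yy, ?_⟩
  have e1 : (ρ ^ 2 + y ^ 2) ^ (p - 1) = (ρ ^ 2 + y ^ 2) ^ (p - 2) * (ρ ^ 2 + y ^ 2) := by
    rw [← Real.rpow_add_one hS0.ne']; congr 1; ring
  have e2 : (ρ ^ 2 + y ^ 2) ^ (p - s - 1) = (ρ ^ 2 + y ^ 2) ^ (p - s - 2) * (ρ ^ 2 + y ^ 2) := by
    rw [← Real.rpow_add_one hS0.ne']; congr 1; ring
  have e3 : (ρ ^ 2 + y ^ 2) ^ (p - s) = (ρ ^ 2 + y ^ 2) ^ (p - s - 2) * (ρ ^ 2 + y ^ 2) ^ 2 := by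
    rw [← Real.rpow_two (ρ ^ 2 + y ^ 2), ← Real.rpow_add hS0]; congr 1; ring
  have e4 : y ^ (2 * s - 1) = y ^ (2 * s) / y := Real.rpow_sub_one hy.ne' _
  have e5 : y ^ (2 * s - 2) = y ^ (2 * s) / y ^ 2 := by
    rw [Real.rpow_sub hy, Real.rpow_two]
  have hA : y ^ (2 * s) * (ρ ^ 2 + y ^ 2) ^ (p - s - 1) ≤ (ρ ^ 2 + y ^ 2) ^ (p - 1) := by
    have h2 : y ^ (2 * s) ≤ (ρ ^ 2 + y ^ 2) ^ s := by
      rw [Real.rpow_mul hy.le]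
      have : y ^ (2:ℝ) ≤ ρ ^ 2 + y ^ 2 := by rw [Real.rpow_two]; nlinarith
      exact Real.rpow_le_rpow (by positivity) this (by linarith)
    calc y ^ (2 * s) * (ρ ^ 2 + y ^ 2) ^ (p - s - 1) ≤ (ρ ^ 2 + y ^ 2) ^ s * (ρ ^ 2 + y ^ 2) ^ (p - s - 1) := by gcongr
      _ = _ := by rw [← Real.rpow_add hS0]; congr 1; ring
  have hB : 0 ≤ y ^ (2 * s) * (ρ ^ 2 + y ^ 2) ^ (p - s - 1) := by positivity
  have key : ∀ X : ℝ, X = -(ρ * (1/4 * (2 * p * (2 * p + 3 - 2 * s)) * (ρ ^ 2 + y ^ 2) ^ (p - 1) +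
      p/8 * (2 * (p - s) * (2 * p + 3)) * (y ^ (2 * s) * (ρ ^ 2 + y ^ 2) ^ (p - s - 1)))) →
      X ≤ -(p / 2) * ρ * (ρ ^ 2 + y ^ 2) ^ (p - 1) := by
    intro X hX
    have hP : 0 < (ρ ^ 2 + y ^ 2) ^ (p - 1) := by positivity
    set P := (ρ ^ 2 + y ^ 2) ^ (p - 1)
    set Z := y ^ (2 * s) * (ρ ^ 2 + y ^ 2) ^ (p - s - 1)
    have f1 : p * P ≤ 1/4 * (2 * p * (2 * p + 3 - 2 * s)) * P := by
      have : p ≤ 1/4 * (2 * p * (2 * p + 3 - 2 * s)) := by nlinarith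
      gcongr
    have f2 : -(p/2) * P ≤ p/8 * (2 * (p - s) * (2 * p + 3)) * Z := by
      have g1 : -4 ≤ 2 * (p - s) * (2 * p + 3) := by nlinarith
      have g2 : p / 8 * (-4) * Z ≤ p/8 * (2 * (p - s) * (2 * p + 3)) * Z := by gcongr
      nlinarith
    have : p / 2 * P ≤ 1/4 * (2 * p * (2 * p + 3 - 2 * s)) * P + p/8 * (2 * (p - s) * (2 * p + 3)) * Z := by
      linarith
    have := mul_le_mul_of_nonneg_left this hρ.le
    rw [hX]; linarith
  apply key
  simp only [e1, e2, e3, e4, e5]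
  field_simp
  ring

lemma Wf_bdry {p s ρ : ℝ} (hp : 0 < p) (hps : p < s) (hs : s < 1/2) (hρ : 0 < ρ) :
    ∃ W' : ℝ → ℝ, (∀ y > 0, HasDerivAt (fun y => Wf p s ρ y) (W' y) y) ∧
      Tendsto (fun y : ℝ => y ^ (1 - 2 * s) * W' y) (𝓝[>] 0) (𝓝 (-(p * s / 4) * ρ ^ (1 + 2 * (p - s)))) := by
  have sq : ∀ x : ℝ, HasD2 (fun x => x ^ 2) x (2 * x) 2 := fun x => by
    refine (((HasD2.ident x).mul (HasD2.ident x)).congr_val (by ring) (by ring)).congr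
      (Eventually.of_forall fun z => by simp only; ring)
  have hSy : ∀ y, HasD2 (fun y => ρ ^ 2 + y ^ 2) y (2 * y) 2 := fun y =>
    ((HasD2.const (ρ ^ 2) y).add (sq y)).congr_val (by ring) (by ring)
  have hS0 : ∀ y, 0 < ρ ^ 2 + y ^ 2 := fun y => by positivity
  have yy := fun (y : ℝ) (hy : 0 < y) => (((HasD2.const 1 y).sub (((hSy y).rpow (hS0 y) p).const_mul (1/4))).sub
    ((((HasD2.ident y).rpow hy (2 * s)).mul ((hSy y).rpow (hS0 y) (p - s))).const_mul (p/8))).const_mul ρ |>.hasDerivAt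
  refine ⟨_, yy, ?_⟩
  have hcS : ∀ r : ℝ, Continuous (fun y : ℝ => (ρ ^ 2 + y ^ 2) ^ r) := fun r =>
    Continuous.rpow_const (by fun_prop) (fun y => Or.inl (hS0 y).ne')
  have c1 : Continuous (fun y : ℝ => y ^ (1 - 2 * s)) :=
    continuous_id.rpow_const (fun _ => Or.inr (by linarith))
  have hc : Continuous (fun y : ℝ => ρ * (-(1/4) * (p * (ρ ^ 2 + y ^ 2) ^ (p - 1) * (2 * y) * y ^ (1 - 2 * s))
      - p/8 * (2 * s * (ρ ^ 2 + y ^ 2) ^ (p - s) + y * ((p - s) * (ρ ^ 2 + y ^ 2) ^ (p - s - 1) * (2 * y))))) := by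
    have a1 := hcS (p - 1)
    have a2 := hcS (p - s)
    have a3 := hcS (p - s - 1)
    fun_prop
  have ht := (hc.tendsto 0).mono_left (nhdsWithin_le_nhds (s := Ioi 0))
  have hv : ρ * (-(1/4) * (p * (ρ ^ 2 + (0:ℝ) ^ 2) ^ (p - 1) * (2 * 0) * (0:ℝ) ^ (1 - 2 * s))
      - p/8 * (2 * s * (ρ ^ 2 + (0:ℝ) ^ 2) ^ (p - s) + 0 * ((p - s) * (ρ ^ 2 + (0:ℝ) ^ 2) ^ (p - s - 1) * (2 * 0))))
      = -(p * s / 4) * ρ ^ (1 + 2 * (p - s)) := by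
    have : (ρ ^ 2 + (0:ℝ) ^ 2) ^ (p - s) = ρ ^ (2 * (p - s)) := by
      rw [Real.rpow_mul hρ.le, Real.rpow_two]; norm_num
    rw [this, Real.rpow_add hρ, Real.rpow_one]
    ring
  rw [hv] at ht
  refine ht.congr' ?_
  filter_upwards [self_mem_nhdsWithin] with y hy
  have hy' : 0 < y := hy
  have q1 : y ^ (1 - 2 * s) * y ^ (2 * s) = y := by
    rw [← Real.rpow_add hy']; simp
  have q2 : y ^ (1 - 2 * s) * y ^ (2 * s - 1) = 1 := by
    rw [← Real.rpow_add hy']; simp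
  linear_combination (ρ * (p/8) * ((p - s) * (ρ ^ 2 + y ^ 2) ^ (p - s - 1) * (2 * y))) * q1
    + (ρ * (p/8) * (2 * s * (ρ ^ 2 + y ^ 2) ^ (p - s))) * q2

lemma Good.far {n : ℕ} {s γ M U0 F : ℝ} {b : ℝ → En n → En n} {f : ℝ → En n → ℝ}
    {u : ℝ → En n × ℝ → ℝ} (h : Good (1 - 2 * s) γ M U0 F b f u) (hs0 : 0 < s) (hs1 : s < 1/2)
    {t y : ℝ} {m d : En n} (ht : -1 ≤ t) (ht' : t ≤ 0) (hm : ‖m‖ ≤ 3/4) (hd : ‖d‖ ≤ 1/16)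
    (hy : 0 < y) (hy' : y ≤ 1/4) :
    |u t (m + d, y) - u t (m - d, y)| ≤ 4 * U0 * (4 * n + 12) * ‖d‖ / y := by
  have hn0 : (0:ℝ) ≤ n := Nat.cast_nonneg n
  have b1 : |u t (m + d, y)| ≤ U0 :=
    h.bound t _ y ht ht' ((norm_add_le _ _).trans (by linarith)) hy.le (by linarith)
  have b2 : |u t (m - d, y)| ≤ U0 :=
    h.bound t _ y ht ht' ((norm_sub_le _ _).trans (by linarith)) hy.le (by linarith)
  have hU : 0 ≤ U0 := (abs_nonneg _).trans b1
  rcases hU.eq_or_lt with hU0 | hU0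
  · rw [← hU0] at b1 b2 ⊢
    have e1 := abs_nonpos_iff.1 b1
    have e2 := abs_nonpos_iff.1 b2
    rw [e1, e2]; simp
  by_cases hc : ‖d‖ ≤ y / 8
  · have hx : ∀ x : En n, ‖x - m‖ ≤ y / 2 → ‖x‖ ≤ 7/8 := by
      intro x hx
      calc ‖x‖ = ‖(x - m) + m‖ := by rw [sub_add_cancel]
        _ ≤ 7/8 := (norm_add_le _ _).trans (by linarith)
    have hyy : ∀ z : ℝ, |z - y| ≤ y / 2 → 0 < z ∧ z ≤ 3/8 := by
      intro z hz
      rw [abs_le] at hz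
      constructor <;> linarith
    have := grad_est (a := 1 - 2 * s) (by linarith) (by linarith) (w := u t) (x0 := m) (y0 := y) (r := y / 2)
      (μ := U0) (by linarith) (by linarith) hU0
      (fun x z h1 h2 => h.slice t x z ht ht' (hx x h1) (hyy z h2).1 (hyy z h2).2) ?_
      (fun x z h1 h2 => h.bound t x z ht ht' (hx x h1) (hyy z h2).1.le (hyy z h2).2) d (by linarith)
    · refine this.trans (le_of_eq ?_)
      field_simp; norm_num
    · exact h.cont.comp (f := fun p : En n × ℝ => (t, p)) (by fun_prop)
        (fun p hp => ⟨ht, ht', hx _ hp.1, (hyy _ hp.2).1.le, (hyy _ hp.2).2⟩)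
  · push Not at hc
    have h1 : |u t (m + d, y) - u t (m - d, y)| ≤ 2 * U0 := by
      rw [abs_le] at *; constructor <;> linarith
    refine h1.trans ?_
    rw [le_div_iff₀ hy]
    have : 2 * U0 * y ≤ 2 * U0 * (8 * ‖d‖) := by gcongr; linarith
    have h3 : 0 ≤ U0 * ‖d‖ * n := by positivity
    have h4 : 0 ≤ U0 * ‖d‖ := by positivity
    nlinarith

section
variable {n : ℕ} {s γ M U0 F : ℝ} {b : ℝ → En n → En n} {f : ℝ → En n → ℝ} {u : ℝ → En n × ℝ → ℝ}

lemma eventually_norm_lt {m : En n} {c : ℝ} (h : ‖m‖ < c) : ∀ᶠ x in 𝓝 m, ‖x‖ < c :=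
  (continuous_norm.tendsto m).eventually (gt_mem_nhds h)

lemma line_deriv (m B : En n) : HasDerivAt (fun τ : ℝ => m + τ • B) B 0 := by
  have := ((hasDerivAt_id (0:ℝ)).smul_const B).const_add m
  simpa using this

lemma s1_int (h : Good (1 - 2 * s) γ M U0 F b f u) (hs0 : 0 < s) (hs1 : s < 1/2)
    {p : ℝ} (hp : 0 < p) (hps : p < s) {ν : ℝ} (hν : 0 < ν)
    {t y δ K : ℝ} {m d : En n} (hK : 0 < K)
    (hle : ∀ t' (m' d' : En n) y', -1 < t' → t' ≤ 0 → ‖m'‖ < 3/4 → 0 < ‖d'‖ → ‖d'‖ ≤ 1/16 → 0 ≤ y' → y' ≤ 1/4 →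
      u t' (m' + d', y') - u t' (m' - d', y') ≤ δ + K * thf 1 (9/16) t' m' ^ (-ν) * Wf p s ‖d'‖ y')
    (heq : u t (m + d, y) - u t (m - d, y) = δ + K * thf 1 (9/16) t m ^ (-ν) * Wf p s ‖d‖ y)
    (ht : -1 < t) (ht' : t ≤ 0) (hm : ‖m‖ < 3/4) (hd0 : 0 < ‖d‖) (hd : ‖d‖ < 1/16)
    (hy : 0 < y) (hy' : y < 1/4) :
    p / 2 * (‖d‖ ^ 2 + y ^ 2) ^ (p - 1) ≤ n * ((4 * ν ^ 2 + 6 * ν) * thf 1 (9/16) t m ^ (-2:ℝ)) := by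
  have hθ : 0 < thf 1 (9/16) t m := by
    unfold thf
    have : 0 < 9/16 - ‖m‖ ^ 2 := by nlinarith [norm_nonneg m]
    have : 0 < t + 1 := by linarith
    positivity
  set θ := thf 1 (9/16) t m with hθd
  have hψ : 0 < θ ^ (-ν) := Real.rpow_pos_of_pos hθ _
  set ψ := θ ^ (-ν)
  have hWb := Wf_bounds hp hps hs1 hd0 hy.le (by nlinarith)
  obtain ⟨r1, r2, y1, y2, hr, hyd, hL⟩ := Wf_L hp hps hs1 hd0 hy
  have hdne : d ≠ 0 := norm_pos_iff.1 hd0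
  set Bm := K * Wf p s ‖d‖ y * ((4 * ν ^ 2 + 6 * ν) * θ ^ (-2:ℝ) * ψ) with hBm
  have hW0 : 0 < Wf p s ‖d‖ y := by linarith
  have hBm0 : 0 ≤ Bm := by positivity
  have J := contact2 (a := 1 - 2 * s) (w := u t) (m := m) (d := d) (y := y) (Br := K * ψ * r2) (Bm := Bm)
      (r1 := K * ψ * r1) (y1 := K * ψ * y1) (y2 := K * ψ * y2)
      (Tr := fun ρ => K * ψ * Wf p s ρ y + δ) (Ty := fun η => K * ψ * Wf p s ‖d‖ η + δ)
      (h.slice t _ y ht.le ht' ((norm_add_le _ _).trans (by linarith)) hy (by linarith))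
      (h.slice t _ y ht.le ht' ((norm_sub_le _ _).trans (by linarith)) hy (by linarith)) hdne hBm0 ?_ ?_ ?_ ?_ ?_ ?_ ?_
  · have e : (0:ℝ) ≤ K * ψ * (r2 + y2 + (1 - 2 * s) / y * y1) + n * Bm := by
      linarith
    have e2 : K * ψ * (r2 + y2 + (1 - 2 * s) / y * y1) ≤ K * ψ * (-(p / 2) * ‖d‖ * (‖d‖ ^ 2 + y ^ 2) ^ (p - 1)) := by
      gcongr
    have e3 : n * Bm ≤ K * ψ * (‖d‖ * (n * ((4 * ν ^ 2 + 6 * ν) * θ ^ (-2:ℝ)))) := by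
      have : Bm ≤ K * ‖d‖ * ((4 * ν ^ 2 + 6 * ν) * θ ^ (-2:ℝ) * ψ) := by
        rw [hBm]; gcongr; exact hWb.2
      have := mul_le_mul_of_nonneg_left this (Nat.cast_nonneg (α := ℝ) n)
      linarith
    have e4 : 0 ≤ K * ψ * ‖d‖ * (n * ((4 * ν ^ 2 + 6 * ν) * θ ^ (-2:ℝ)) - p / 2 * (‖d‖ ^ 2 + y ^ 2) ^ (p - 1)) := by
      linarith
    have := nonneg_of_mul_nonneg_right e4 (by positivity)
    linarith
  · exact ((hr.const_mul (K * ψ)).add (HasD2.const δ _)).congr_val (by ring) (by ring)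
  · filter_upwards [lt_mem_nhds hd0, gt_mem_nhds hd] with τ hτ0 hτ1
    have e : ‖(τ / ‖d‖) • d‖ = τ := by
      rw [norm_smul, Real.norm_eq_abs, abs_of_pos (by positivity), div_mul_cancel₀ _ hd0.ne']
    have := hle t m ((τ / ‖d‖) • d) y ht ht' hm (by rw [e]; exact hτ0) (by rw [e]; exact hτ1.le) hy.le hy'.le
    rw [e] at this
    linarith
  · linarith
  · intro v hv
    obtain ⟨l, B, hB, hB'⟩ := psi_D2 (c := 1) (R := 9/16) (t := t) (ν := ν) (m := m) (v := v) hν (by linarith)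
      (by linarith) (by norm_num) hθ hv
    refine ⟨fun τ => K * Wf p s ‖d‖ y * thf 1 (9/16) t (m + τ • v) ^ (-ν) + δ, _, _,
      (hB.const_mul (K * Wf p s ‖d‖ y)).add (HasD2.const δ _), ?_, ?_, ?_⟩
    · rw [add_zero, hBm]
      gcongr
    · have ht : Tendsto (fun τ : ℝ => m + τ • v) (𝓝 0) (𝓝 m) := by
        have : Continuous (fun τ : ℝ => m + τ • v) := by fun_prop
        simpa using this.tendsto 0
      filter_upwards [ht.eventually (eventually_norm_lt hm)] with τ hτ
      have := hle t (m + τ • v) d y (by assumption) ht' hτ hd0 hd.le hy.le hy'.le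
      linarith
    · simp only [zero_smul, add_zero]
      linarith
  · exact ((hyd.const_mul (K * ψ)).add (HasD2.const δ _)).congr_val (by ring) (by ring)
  · filter_upwards [lt_mem_nhds hy, gt_mem_nhds hy'] with τ hτ0 hτ1
    have := hle t m d τ ht ht' hm hd0 hd.le hτ0.le hτ1.le
    linarith
  · linarith

set_option maxHeartbeats 1000000 in
lemma s1_bd (h : Good (1 - 2 * s) γ M U0 F b f u) (hs0 : 0 < s) (hs1 : s < 1/2)
    {p : ℝ} (hp : 0 < p) (hps : p < s) {ν : ℝ} (hν : 0 < ν)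
    {t δ K : ℝ} {m d : En n} (hK : 0 < K)
    (hle : ∀ t' (m' d' : En n) y', -1 < t' → t' ≤ 0 → ‖m'‖ < 3/4 → 0 < ‖d'‖ → ‖d'‖ ≤ 1/16 → 0 ≤ y' → y' ≤ 1/4 →
      u t' (m' + d', y') - u t' (m' - d', y') ≤ δ + K * thf 1 (9/16) t' m' ^ (-ν) * Wf p s ‖d'‖ y')
    (heq : u t (m + d, 0) - u t (m - d, 0) = δ + K * thf 1 (9/16) t m ^ (-ν) * Wf p s ‖d‖ 0)
    (ht : -1 < t) (ht' : t ≤ 0) (hm : ‖m‖ < 3/4) (hd0 : 0 < ‖d‖) (hd : ‖d‖ < 1/16) :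
    K * thf 1 (9/16) t m ^ (-ν) * (p * s / 4) * ‖d‖ ^ (1 + 2 * (p - s)) ≤ F * (2 * ‖d‖) ^ γ +
      K * ‖d‖ * (ν * (1 + 2 * M)) * thf 1 (9/16) t m ^ (-ν) / thf 1 (9/16) t m +
      K * thf 1 (9/16) t m ^ (-ν) * (M / 2 * (2 * ‖d‖) ^ γ) := by
  have hθ : 0 < thf 1 (9/16) t m := by
    unfold thf
    have : 0 < 9/16 - ‖m‖ ^ 2 := by nlinarith [norm_nonneg m]
    have : 0 < t + 1 := by linarith
    positivity
  obtain ⟨lt, hlt, hlt'⟩ := psi_t (c := 1) (R := 9/16) (t := t) (m := m) hν (by norm_num) hθ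
  have hn1 : ‖m + d‖ ≤ 7/8 := (norm_add_le _ _).trans (by linarith)
  have hn2 : ‖m - d‖ ≤ 7/8 := (norm_sub_le _ _).trans (by linarith)
  obtain ⟨Dt, L, G, v1, e1, e2, e3, e4, e5⟩ := h.eqn t (m + d) ht ht' hn1
  obtain ⟨Dt', L', G', v2, e1', e2', e3', e4', e5'⟩ := h.eqn t (m - d) ht ht' hn2
  set B := (1/2 : ℝ) • (b t (m + d) + b t (m - d)) with hBdef
  set β := (1/2 : ℝ) • (b t (m + d) - b t (m - d)) with hβdef
  have hBβ : b t (m + d) = B + β := by rw [hBdef, hβdef]; module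
  have hBβ' : b t (m - d) = B - β := by rw [hBdef, hβdef]; module
  have hM1 := h.bM t _ ht.le ht' hn1
  have hM2 := h.bM t _ ht.le ht' hn2
  have hnB : ‖B‖ ≤ M := by
    rw [hBdef, norm_smul]
    have := norm_add_le (b t (m + d)) (b t (m - d))
    rw [Real.norm_eq_abs, abs_of_pos (by norm_num)]
    linarith
  have hM0 : 0 ≤ M := (norm_nonneg _).trans hnB
  have h2d : ‖m + d - (m - d)‖ = 2 * ‖d‖ := by
    have : m + d - (m - d) = (2:ℝ) • d := by module
    rw [this, norm_smul]; norm_num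
  have hnβ : ‖β‖ ≤ M / 2 * (2 * ‖d‖) ^ γ := by
    have := h.bH t _ _ ht.le ht' hn1 hn2
    rw [h2d] at this
    rw [hβdef, norm_smul, Real.norm_eq_abs, abs_of_pos (by norm_num)]
    linarith
  have hfF : f t (m + d) - f t (m - d) ≤ F * (2 * ‖d‖) ^ γ := by
    have := h.fH t _ _ ht.le ht' hn1 hn2
    rw [h2d] at this
    exact (le_abs_self _).trans this
  obtain ⟨lm, hlm, hlm'⟩ := psi_dir (c := 1) (R := 9/16) (t := t) (m := m) (v := B) hν (by linarith)
    (by linarith) (by norm_num) hθ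
  set θ := thf 1 (9/16) t m with hθd
  have hψ : 0 < θ ^ (-ν) := Real.rpow_pos_of_pos hθ _
  set ψ := θ ^ (-ν)
  have hWb := Wf_bounds hp hps hs1 hd0 le_rfl (by nlinarith)
  have hW0 : 0 < Wf p s ‖d‖ 0 := by linarith
  -- time
  have hT : K * lt * Wf p s ‖d‖ 0 ≤ Dt - Dt' := by
    have hTd : HasDerivAt (fun τ => δ + K * thf 1 (9/16) τ m ^ (-ν) * Wf p s ‖d‖ 0) (K * lt * Wf p s ‖d‖ 0) t :=
      ((hlt.const_mul K).mul_const _).const_add δ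
    refine deriv_left_ge (e1.sub e1') hTd ?_ heq
    filter_upwards [Ioo_mem_nhdsLT ht] with τ hτ
    exact hle τ m d 0 hτ.1 (hτ.2.le.trans ht') hm hd0 hd.le le_rfl (by norm_num)
  have hT2 : -(K * ‖d‖ * (ν * ψ / θ)) ≤ Dt - Dt' := by
    refine le_trans ?_ hT
    have a1 : K * Wf p s ‖d‖ 0 * (-(ν * ψ / θ)) ≤ K * Wf p s ‖d‖ 0 * lt := by gcongr
    have a2 : K * Wf p s ‖d‖ 0 * (ν * ψ / θ) ≤ K * ‖d‖ * (ν * ψ / θ) := by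
      have : 0 ≤ ν * ψ / θ := by positivity
      gcongr; exact hWb.2
    linarith
  -- space
  obtain ⟨r1, hr1, hr1'⟩ := Wf_r0 (p := p) (s := s) (ρ := ‖d‖) hp (by linarith) hs0 hd0 (by linarith)
  have hdne : d ≠ 0 := norm_pos_iff.1 hd0
  have hnorm : ∃ l, HasDerivAt (fun τ : ℝ => ‖d + τ • β‖) l 0 ∧ |l| ≤ ‖β‖ := by
    have hline := line_deriv d β
    have hdif : DifferentiableAt ℝ (fun x : En n => ‖x‖) d := (contDiffAt_norm ℝ hdne).differentiableAt (n := 1) (by norm_num)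
    have hc : HasFDerivAt (fun x : En n => ‖x‖) (fderiv ℝ (fun x : En n => ‖x‖) d) (d + (0:ℝ) • β) := by
      simpa using hdif.hasFDerivAt
    refine ⟨_, hc.comp_hasDerivAt (0:ℝ) hline, ?_⟩
    have h1 : ‖fderiv ℝ (fun x : En n => ‖x‖) d‖ ≤ 1 := by
      have := norm_fderiv_le_of_lipschitz ℝ (f := fun x : En n => ‖x‖) (x₀ := d) (C := 1) lipschitzWith_one_norm
      simpa using this
    have := (fderiv ℝ (fun x : En n => ‖x‖) d).le_opNorm β
    rw [Real.norm_eq_abs] at this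
    nlinarith [norm_nonneg β]
  obtain ⟨ln, hln, hln'⟩ := hnorm
  have hsp : G (b t (m + d)) - G' (b t (m - d)) = K * lm * Wf p s ‖d‖ 0 + K * ψ * (r1 * ln) := by
    have l1 : HasDerivAt (fun τ : ℝ => (m + τ • B) + (d + τ • β)) (B + β) 0 := by
      exact (line_deriv m B).add (line_deriv d β)
    have l2 : HasDerivAt (fun τ : ℝ => (m + τ • B) - (d + τ • β)) (B - β) 0 := by
      exact (line_deriv m B).sub (line_deriv d β)
    have k1 : HasDerivAt (fun τ : ℝ => u t ((m + τ • B) + (d + τ • β), 0)) (G (B + β)) 0 := by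
      have e2z : HasFDerivAt (fun z => u t (z, 0)) G ((m + (0:ℝ) • B) + (d + (0:ℝ) • β)) := by simpa using e2
      exact e2z.comp_hasDerivAt (0:ℝ) l1
    have k2 : HasDerivAt (fun τ : ℝ => u t ((m + τ • B) - (d + τ • β), 0)) (G' (B - β)) 0 := by
      have e2z : HasFDerivAt (fun z => u t (z, 0)) G' ((m + (0:ℝ) • B) - (d + (0:ℝ) • β)) := by simpa using e2'
      exact e2z.comp_hasDerivAt (0:ℝ) l2
    have k3 : HasDerivAt (fun τ : ℝ => Wf p s ‖d + τ • β‖ 0) (r1 * ln) 0 := by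
      have hr1z : HasDerivAt (fun ρ => Wf p s ρ 0) r1 ‖d + (0:ℝ) • β‖ := by simpa using hr1
      exact hr1z.comp (0:ℝ) hln
    have k4 := ((hlm.const_mul K).mul k3).const_add δ
    have k5 := (k1.sub k2).sub k4
    have hmax : IsLocalMax (fun τ : ℝ => (u t ((m + τ • B) + (d + τ • β), 0) - u t ((m + τ • B) - (d + τ • β), 0)) -
        (δ + K * thf 1 (9/16) t (m + τ • B) ^ (-ν) * Wf p s ‖d + τ • β‖ 0)) 0 := by
      have t1 : Tendsto (fun τ : ℝ => m + τ • B) (𝓝 0) (𝓝 m) := by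
        have : Continuous (fun τ : ℝ => m + τ • B) := by fun_prop
        simpa using this.tendsto 0
      have t2 : Tendsto (fun τ : ℝ => ‖d + τ • β‖) (𝓝 0) (𝓝 ‖d‖) := by
        have : Continuous (fun τ : ℝ => ‖d + τ • β‖) := by fun_prop
        simpa using this.tendsto 0
      filter_upwards [t1.eventually (eventually_norm_lt hm), t2.eventually (lt_mem_nhds hd0),
        t2.eventually (gt_mem_nhds hd)] with τ q1 q2 q3
      have := hle t _ _ 0 ht ht' q1 q2 q3.le le_rfl (by norm_num)
      simp only [zero_smul, add_zero]
      linarith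
    have := hmax.hasDerivAt_eq_zero k5
    simp only [zero_smul, add_zero] at this
    rw [hBβ, hBβ']
    linarith
  have hsp2 : -(K * ‖d‖ * (2 * ν * M * ψ / θ) + K * ψ * (M / 2 * (2 * ‖d‖) ^ γ)) ≤
      G (b t (m + d)) - G' (b t (m - d)) := by
    rw [hsp]
    have a1 : |K * lm * Wf p s ‖d‖ 0| ≤ K * ‖d‖ * (2 * ν * M * ψ / θ) := by
      rw [abs_mul, abs_mul, abs_of_pos hK, abs_of_pos hW0]
      have : |lm| ≤ 2 * ν * M * ψ / θ := hlm'.trans (by gcongr)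
      calc K * |lm| * Wf p s ‖d‖ 0 ≤ K * (2 * ν * M * ψ / θ) * ‖d‖ := by gcongr; exact hWb.2
        _ = _ := by ring
    have a2 : |K * ψ * (r1 * ln)| ≤ K * ψ * (M / 2 * (2 * ‖d‖) ^ γ) := by
      rw [abs_mul, abs_of_pos (mul_pos hK hψ), abs_mul]
      have : |r1| * |ln| ≤ 1 * (M / 2 * (2 * ‖d‖) ^ γ) := by gcongr; exact hln'.trans hnβ
      rw [one_mul] at this
      gcongr
    have := neg_abs_le (K * lm * Wf p s ‖d‖ 0)
    have := neg_abs_le (K * ψ * (r1 * ln))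
    linarith
  -- normal
  obtain ⟨W', hW1, hW2⟩ := Wf_bdry hp hps hs1 hd0
  have hN : L - L' - K * ψ * (-(p * s / 4) * ‖d‖ ^ (1 + 2 * (p - s))) ≤ 0 := by
    refine bdry_le (v := fun y => u t (m + d, y) - u t (m - d, y) - K * ψ * Wf p s ‖d‖ y)
      (v' := fun y => v1 y - v2 y - K * ψ * W' y) (a := 1 - 2 * s) (η := 1/4) (by norm_num) ?_ ?_ ?_ ?_
    · have c1 : ∀ x : En n, ‖x‖ ≤ 7/8 → ContinuousOn (fun y => u t (x, y)) (Ico 0 (1/4)) := fun x hx =>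
        h.cont.comp (f := fun y : ℝ => (t, (x, y))) (by fun_prop)
          (fun y hy => ⟨ht.le, ht', hx, hy.1, by linarith [hy.2]⟩)
      have c2 : ContinuousOn (fun y => Wf p s ‖d‖ y) (Ico 0 (1/4)) :=
        (Wf_cont hs0).comp (f := fun y : ℝ => (‖d‖, y)) (by fun_prop) (fun y hy => hd0)
      exact ((c1 _ hn1).sub (c1 _ hn2)).sub (continuousOn_const.mul c2)
    · intro y hy
      exact ((e3 y hy.1 (by linarith [hy.2])).sub (e3' y hy.1 (by linarith [hy.2]))).sub ((hW1 y hy.1).const_mul _)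
    · intro y hy
      have := hle t m d y ht ht' hm hd0 hd.le hy.1.le hy.2.le
      linarith
    · have := (e4.sub e4').sub (hW2.const_mul (K * ψ))
      refine this.congr (fun y => ?_)
      ring
  have hX : K * ‖d‖ * (ν * (1 + 2 * M)) * ψ / θ = K * ‖d‖ * (ν * ψ / θ) + K * ‖d‖ * (2 * ν * M * ψ / θ) := by
    ring
  rw [hX]
  linarith

end

lemma pw_ge {s c0 θ z : ℝ} (hs : 0 < s) (hc : 0 < c0) (hθ : 0 < θ) (hz : 0 < z) (h : c0 * θ < z ^ s) :
    c0 ^ (1 / s) / z ≤ θ ^ (-(1 / s)) := by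
  have h1 : θ ≤ z ^ s / c0 := by rw [le_div_iff₀ hc]; linarith
  have h2 : (z ^ s / c0) ^ (-(1 / s)) ≤ θ ^ (-(1 / s)) :=
    Real.rpow_le_rpow_of_nonpos hθ h1 (by simp; positivity)
  refine le_trans (le_of_eq ?_) h2
  rw [Real.div_rpow (by positivity) hc.le, Real.rpow_neg hc.le, ← Real.rpow_mul hz.le]
  have : s * -(1 / s) = -1 := by field_simp
  rw [this, Real.rpow_neg_one]
  field_simp

lemma pw_le {s e z : ℝ} (hs : 0 < s) (hs1 : s < 1/2) (he1 : e ≤ 1) (hz : 0 ≤ z) (h : z ^ s ≤ e) :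
    z ≤ e ^ 2 := by
  have h0 : 0 ≤ z ^ s := by positivity
  have h1 : z = (z ^ s) ^ (1 / s) := by
    rw [← Real.rpow_mul hz, mul_one_div_cancel hs.ne', Real.rpow_one]
  rw [h1]
  rcases h0.eq_or_lt with h0 | h0
  · rw [← h0, Real.zero_rpow (by positivity)]; positivity
  calc (z ^ s) ^ (1 / s) ≤ (z ^ s) ^ (2:ℝ) := by
        apply Real.rpow_le_rpow_of_exponent_ge h0 (h.trans he1)
        rw [le_div_iff₀ hs]; linarith
    _ = (z ^ s) ^ 2 := Real.rpow_two _
    _ ≤ e ^ 2 := by gcongr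

lemma s1_num_int {p c0 θ N ρ y : ℝ} (hp : 0 < p) (hp1 : p ≤ 1/2) (hN : 0 ≤ N) (hc0 : 0 < c0) (hθ : 0 < θ)
    (hθ1 : c0 * θ ≤ 1/2) (hA : N * (2 * c0 ^ 2) < p / 2) (hρ : 0 < ρ) (hρ1 : ρ ≤ (c0 * θ) ^ 2) (hy : 0 ≤ y)
    (hy1 : y ≤ (c0 * θ) ^ 2) (h : p / 2 * (ρ ^ 2 + y ^ 2) ^ (p - 1) ≤ N * θ ^ (-2:ℝ)) : False := by
  have hS : 0 < ρ ^ 2 + y ^ 2 := by positivity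
  have hS2 : ρ ^ 2 + y ^ 2 ≤ (2 * (c0 * θ) ^ 2) ^ 2 := by nlinarith
  have he : (c0 * θ) ^ 2 ≤ 1/4 := by
    have : 0 < c0 * θ := by positivity
    nlinarith
  have hS1 : ρ ^ 2 + y ^ 2 ≤ 1 := by
    have : 0 < (c0 * θ) ^ 2 := by positivity
    nlinarith
  have h3 : (ρ ^ 2 + y ^ 2) ^ (1 - p) ≤ 2 * (c0 * θ) ^ 2 := by
    calc (ρ ^ 2 + y ^ 2) ^ (1 - p) ≤ (ρ ^ 2 + y ^ 2) ^ (1/2 : ℝ) :=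
          Real.rpow_le_rpow_of_exponent_ge hS hS1 (by linarith)
      _ = √(ρ ^ 2 + y ^ 2) := (Real.sqrt_eq_rpow _).symm
      _ ≤ √((2 * (c0 * θ) ^ 2) ^ 2) := Real.sqrt_le_sqrt hS2
      _ = 2 * (c0 * θ) ^ 2 := Real.sqrt_sq (by positivity)
  have h4 : (ρ ^ 2 + y ^ 2) ^ (p - 1) * (ρ ^ 2 + y ^ 2) ^ (1 - p) = 1 := by
    rw [← Real.rpow_add hS]; simp
  have h5 : θ ^ (-2:ℝ) * θ ^ 2 = 1 := by
    rw [← Real.rpow_two, ← Real.rpow_add hθ]; simp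
  have hZ : 0 < (ρ ^ 2 + y ^ 2) ^ (1 - p) := by positivity
  have h6 := mul_le_mul_of_nonneg_right h (mul_nonneg hZ.le (sq_nonneg θ))
  have h7 : p / 2 * θ ^ 2 ≤ N * (ρ ^ 2 + y ^ 2) ^ (1 - p) := by
    calc p / 2 * θ ^ 2 = p / 2 * (ρ ^ 2 + y ^ 2) ^ (p - 1) * ((ρ ^ 2 + y ^ 2) ^ (1 - p) * θ ^ 2) := by
          linear_combination (-(p / 2 * θ ^ 2)) * h4
      _ ≤ _ := h6
      _ = N * (ρ ^ 2 + y ^ 2) ^ (1 - p) := by linear_combination (N * (ρ ^ 2 + y ^ 2) ^ (1 - p)) * h5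
  have h8 : N * (ρ ^ 2 + y ^ 2) ^ (1 - p) ≤ N * (2 * (c0 * θ) ^ 2) := by gcongr
  have h9 : N * (2 * (c0 * θ) ^ 2) < p / 2 * θ ^ 2 := by
    have : 0 < θ ^ 2 := by positivity
    nlinarith
  linarith

lemma s1_num_bd {p s c0 θ ρ K M F ψ ν : ℝ} (hp : 0 < p) (hps : p ≤ s / 2) (hs : s < 1/2) (hM : 0 ≤ M) (hν : 0 < ν)
    (hc0 : 0 < c0) (hθ : 0 < θ) (hθ1 : θ ≤ 1) (hρ : 0 < ρ) (hρ1 : ρ ≤ 1) (hρc : ρ ^ s ≤ c0 * θ) (hψ : 1 ≤ ψ)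
    (hF : 0 ≤ F) (hK : 0 < K) (hFK : F ≤ K)
    (hB : ν * (1 + 2 * M) * c0 + (4 + 2 * M) * c0 ^ (2 * p / s) < p * s / 4)
    (h : K * ψ * (p * s / 4) * ρ ^ (1 + 2 * (p - s)) ≤ F * (2 * ρ) ^ (1 - 2 * s + 4 * p) +
      K * ρ * (ν * (1 + 2 * M)) * ψ / θ + K * ψ * (M / 2 * (2 * ρ) ^ (1 - 2 * s + 4 * p))) : False := by
  have hs0 : 0 < s := by linarith
  set R := ρ ^ (1 + 2 * (p - s)) with hR
  have hR0 : 0 < R := by positivity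
  set Z := ρ ^ (2 * p) with hZ
  have hZ0 : 0 < Z := by positivity
  have hZc : Z ≤ c0 ^ (2 * p / s) := by
    have : Z = (ρ ^ s) ^ (2 * p / s) := by
      rw [hZ, ← Real.rpow_mul hρ.le]; congr 1; field_simp
    rw [this]
    apply Real.rpow_le_rpow (by positivity) _ (by positivity)
    nlinarith
  have e1 : (2 * ρ) ^ (1 - 2 * s + 4 * p) ≤ 4 * (R * Z) := by
    rw [Real.mul_rpow (by norm_num) hρ.le, hR, hZ, ← Real.rpow_add hρ]
    have e : 1 + 2 * (p - s) + 2 * p = 1 - 2 * s + 4 * p := by ring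
    rw [e]
    have : (2:ℝ) ^ (1 - 2 * s + 4 * p) ≤ 4 := by
      calc (2:ℝ) ^ (1 - 2 * s + 4 * p) ≤ (2:ℝ) ^ (2:ℝ) :=
            Real.rpow_le_rpow_of_exponent_le (by norm_num) (by linarith)
        _ = 4 := by norm_num
    gcongr
  have e2 : ρ ≤ R * (c0 * θ) := by
    have : ρ = R * ρ ^ (2 * s - 2 * p) := by
      rw [hR, ← Real.rpow_add hρ]
      conv_lhs => rw [← Real.rpow_one ρ]
      congr 1; ring
    have h2 : ρ ^ (2 * s - 2 * p) ≤ ρ ^ s := Real.rpow_le_rpow_of_exponent_ge hρ hρ1 (by linarith)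
    calc ρ = R * ρ ^ (2 * s - 2 * p) := this
      _ ≤ R * (c0 * θ) := by gcongr; exact h2.trans hρc
  have t1 : F * (2 * ρ) ^ (1 - 2 * s + 4 * p) ≤ K * ψ * R * (4 * Z) := by
    calc F * (2 * ρ) ^ (1 - 2 * s + 4 * p) ≤ (K * ψ) * (4 * (R * Z)) := by
          gcongr
          nlinarith
      _ = _ := by ring
  have t2 : K * ρ * (ν * (1 + 2 * M)) * ψ / θ ≤ K * ψ * R * (ν * (1 + 2 * M) * c0) := by
    rw [div_le_iff₀ hθ]
    have : K * (ν * (1 + 2 * M)) * ψ * ρ ≤ K * (ν * (1 + 2 * M)) * ψ * (R * (c0 * θ)) := by gcongr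
    linarith
  have t3 : K * ψ * (M / 2 * (2 * ρ) ^ (1 - 2 * s + 4 * p)) ≤ K * ψ * R * (2 * M * Z) := by
    have : K * ψ * (M / 2 * (2 * ρ) ^ (1 - 2 * s + 4 * p)) ≤ K * ψ * (M / 2 * (4 * (R * Z))) := by gcongr
    linarith
  have hX : 0 < K * ψ * R := by positivity
  have h5 : K * ψ * R * (p * s / 4) ≤ K * ψ * R * (ν * (1 + 2 * M) * c0 + (4 + 2 * M) * Z) := by linarith
  have h6 := le_of_mul_le_mul_left h5 hX
  have h7 : (4 + 2 * M) * Z ≤ (4 + 2 * M) * c0 ^ (2 * p / s) := by gcongr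
  linarith

lemma s1_consts (N p s M ν : ℝ) (hp : 0 < p) (hs : 0 < s) :
    ∃ c0 : ℝ, 0 < c0 ∧ c0 < 1/8 ∧ N * (2 * c0 ^ 2) < p / 2 ∧
      ν * (1 + 2 * M) * c0 + (4 + 2 * M) * c0 ^ (2 * p / s) < p * s / 4 := by
  have c1 : Continuous (fun c : ℝ => N * (2 * c ^ 2)) := by fun_prop
  have c2 : Continuous (fun c : ℝ => ν * (1 + 2 * M) * c + (4 + 2 * M) * c ^ (2 * p / s)) := by
    have : Continuous (fun c : ℝ => c ^ (2 * p / s)) :=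
      continuous_id.rpow_const (fun _ => Or.inr (by positivity))
    fun_prop
  have l1 : ∀ᶠ c in 𝓝[>] (0:ℝ), N * (2 * c ^ 2) < p / 2 :=
    ((c1.tendsto 0).mono_left nhdsWithin_le_nhds).eventually (gt_mem_nhds (by simp; positivity))
  have l2 : ∀ᶠ c in 𝓝[>] (0:ℝ), ν * (1 + 2 * M) * c + (4 + 2 * M) * c ^ (2 * p / s) < p * s / 4 :=
    ((c2.tendsto 0).mono_left nhdsWithin_le_nhds).eventually (gt_mem_nhds (by
      rw [Real.zero_rpow (by positivity)]; simp; positivity))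
  have l3 : ∀ᶠ c in 𝓝[>] (0:ℝ), c ∈ Ioo (0:ℝ) (1/8) := Ioo_mem_nhdsGT (by norm_num)
  obtain ⟨c, h1, h2, h3⟩ := (l1.and (l2.and l3)).exists
  exact ⟨c, h3.1, h3.2, h1, h2⟩

lemma nl_sq {z c : ℝ} (h0 : 0 ≤ z) (h : z ≤ c) : z ^ 2 ≤ c ^ 2 := pow_le_pow_left₀ h0 h 2
lemma nl_sqlt {z c : ℝ} (h0 : 0 ≤ z) (h : z < c) : z ^ 2 < c ^ 2 := pow_lt_pow_left₀ h h0 (by norm_num)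
lemma nl_Wb {ρ y : ℝ} (h0 : 0 ≤ ρ) (h1 : ρ ≤ 1/16) (h2 : 0 ≤ y) (h3 : y ≤ 1/4) : ρ ^ 2 + y ^ 2 ≤ 1 := by
  have := nl_sq h0 h1
  have := nl_sq h2 h3
  norm_num at *; linarith
lemma nl_th1 {t z : ℝ} (h0 : -1 ≤ t) (h1 : t ≤ 0) (hz : 0 ≤ 9/16 - z) (hz' : 0 ≤ z) : (t + 1) * (9/16 - z) ≤ 1 := by
  nlinarith
lemma nl_h {A d δ X B : ℝ} (hA : 0 ≤ A) (hd : d < δ) (hB : 0 ≤ B) (h : B < A * (d - δ)) : False := by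
  nlinarith
lemma nl_C {n c : ℝ} (hn : 0 ≤ n) (hc : 1 ≤ c) : 1 ≤ 8 * (4 * n + 13) * c := by nlinarith
lemma nl_th2 {t z : ℝ} (h0 : -3/4 ≤ t) (hz : 11/64 ≤ 9/16 - z) : 1/32 ≤ (t + 1) * (9/16 - z) := by nlinarith

set_option maxHeartbeats 1000000 in
lemma s1_contact {n : ℕ} {s p M U0 F : ℝ} {b : ℝ → En n → En n} {f : ℝ → En n → ℝ} {u : ℝ → En n × ℝ → ℝ}
    (h : Good (1 - 2 * s) (1 - 2 * s + 4 * p) M U0 F b f u) (hs0 : 0 < s) (hs1 : s < 1/2)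
    (hp : 0 < p) (hps : p ≤ s / 2) (hM : 0 ≤ M) (hF : 0 ≤ F) {c0 : ℝ} (hc0 : 0 < c0) (hc1 : c0 < 1/8)
    (hA : (n * (4 * (1 / s) ^ 2 + 6 * (1 / s))) * (2 * c0 ^ 2) < p / 2)
    (hB : 1 / s * (1 + 2 * M) * c0 + (4 + 2 * M) * c0 ^ (2 * p / s) < p * s / 4)
    {δ : ℝ} (hδ : 0 < δ) {K t1 y1 : ℝ} {m1 d1 : En n} (hU : 0 ≤ U0) (hK : 0 < K)
    (hKbig : (8 * (4 * n + 13) * c0 ^ (-(1 / s))) * (U0 + F) < K)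
    (hle : ∀ t' (m' d' : En n) y', -1 < t' → t' ≤ 0 → ‖m'‖ < 3/4 → 0 < ‖d'‖ → ‖d'‖ ≤ 1/16 → 0 ≤ y' → y' ≤ 1/4 →
      u t' (m' + d', y') - u t' (m' - d', y') ≤ δ + K * thf 1 (9/16) t' m' ^ (-(1 / s)) * Wf p s ‖d'‖ y')
    (heq : u t1 (m1 + d1, y1) - u t1 (m1 - d1, y1) = δ + K * thf 1 (9/16) t1 m1 ^ (-(1 / s)) * Wf p s ‖d1‖ y1)
    (ht1 : -1 < t1) (q1 : -1 ≤ t1 ∧ t1 ≤ 0) (q2 : ‖m1‖ ≤ 3/4) (hm1 : ‖m1‖ < 3/4) (q3 : ‖d1‖ ≤ 1/16) (hρ : 0 < ‖d1‖)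
    (q4 : 0 ≤ y1 ∧ y1 ≤ 1/4) (hWP : ‖d1‖ / 2 ≤ Wf p s ‖d1‖ y1)
    (hθ : 0 < thf 1 (9/16) t1 m1) (hθ1 : thf 1 (9/16) t1 m1 ≤ 1) : False := by
  have hn0 : (0:ℝ) ≤ n := Nat.cast_nonneg n
  set ν := 1 / s with hνd
  have hν : 0 < ν := by positivity
  have hcν : 1 ≤ c0 ^ (-ν) := Real.one_le_rpow_of_pos_of_le_one_of_nonpos hc0 (by linarith) (by linarith)
  have hcν' : c0 ^ (-ν) * c0 ^ ν = 1 := by rw [← Real.rpow_add hc0]; simp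
  have hcν0 : 0 < c0 ^ ν := by positivity
  have hpps : p < s := by linarith
  have hn1 : ‖m1 + d1‖ ≤ 7/8 := (norm_add_le _ _).trans (by linarith)
  have hn2 : ‖m1 - d1‖ ≤ 7/8 := (norm_sub_le _ _).trans (by linarith)
  have hC1 : 1 ≤ 8 * (4 * n + 13) * c0 ^ (-ν) := by
    have : (1:ℝ) ≤ 8 * (4 * n + 13) := by linarith
    calc (1:ℝ) = 1 * 1 := by ring
      _ ≤ 8 * (4 * n + 13) * c0 ^ (-ν) := by gcongr
  set C := 8 * (4 * n + 13) * c0 ^ (-ν) with hC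
  have hCU : C * U0 < K := by
    have : 0 ≤ C * F := by positivity
    linarith [mul_add C U0 F]
  have hFK : F ≤ K := by
    have h1 : 0 ≤ C * U0 := by positivity
    have h2 : 1 * F ≤ C * F := by gcongr
    linarith [mul_add C U0 F]
  clear_value C
  set θ := thf 1 (9/16) t1 m1 with hθd
  have hψ1 : 1 ≤ θ ^ (-ν) := Real.one_le_rpow_of_pos_of_le_one_of_nonpos hθ hθ1 (by linarith)
  have hC8 : 8 * (4 * n + 13) * U0 < K * c0 ^ ν := by
    have h2 : C * U0 * c0 ^ ν < K * c0 ^ ν := by gcongr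
    have h3 : C * U0 * c0 ^ ν = 8 * (4 * n + 13) * U0 := by
      rw [hC]; linear_combination (8 * (4 * n + 13) * U0) * hcν'
    linarith
  -- case i
  have hi : ‖d1‖ ^ s ≤ c0 * θ := by
    by_contra hc
    push Not at hc
    have h1 := pw_ge hs0 hc0 hθ hρ hc
    rw [← hνd] at h1
    have b1 := h.bound t1 _ y1 q1.1 q1.2 hn1 q4.1 (by linarith)
    have b2 := h.bound t1 _ y1 q1.1 q1.2 hn2 q4.1 (by linarith)
    have h2 : K * (c0 ^ ν / ‖d1‖) * (‖d1‖ / 2) ≤ K * θ ^ (-ν) * Wf p s ‖d1‖ y1 := by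
      gcongr
    have h3 : K * (c0 ^ ν / ‖d1‖) * (‖d1‖ / 2) = K * c0 ^ ν / 2 := by field_simp
    rw [abs_le] at b1 b2
    have hnU : 0 ≤ n * U0 := by positivity
    have hδ' := hδ.le
    have e9 : 8 * (4 * n + 13) * U0 = 32 * (n * U0) + 104 * U0 := by ring
    linarith [b1.1, b1.2, b2.1, b2.2]
  have hii : y1 ^ s ≤ c0 * θ := by
    by_contra hc
    push Not at hc
    rcases q4.1.eq_or_lt with hy | hy
    · rw [← hy, Real.zero_rpow hs0.ne'] at hc
      have : 0 < c0 * θ := by positivity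
      linarith
    have h1 := pw_ge hs0 hc0 hθ hy hc
    rw [← hνd] at h1
    have h2 : K * (c0 ^ ν / y1) * (‖d1‖ / 2) ≤ K * θ ^ (-ν) * Wf p s ‖d1‖ y1 := by
      gcongr
    have h3 := (le_abs_self _).trans (h.far hs0 hs1 q1.1 q1.2 q2 q3 hy q4.2)
    have h4 : K * (c0 ^ ν / y1) * (‖d1‖ / 2) < 4 * U0 * (4 * n + 12) * ‖d1‖ / y1 := by linarith
    have h5 : K * (c0 ^ ν / y1) * (‖d1‖ / 2) = (K * c0 ^ ν) * (‖d1‖ / (2 * y1)) := by field_simp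
    have h6 : 4 * U0 * (4 * n + 12) * ‖d1‖ / y1 = (8 * (4 * n + 12) * U0) * (‖d1‖ / (2 * y1)) := by
      field_simp; ring
    rw [h5, h6] at h4
    have h7 := lt_of_mul_lt_mul_right h4 (by positivity)
    linarith
  have he1 : c0 * θ ≤ 1/8 := by
    calc c0 * θ ≤ (1/8) * 1 := by gcongr
      _ = 1/8 := by norm_num
  have he0 : 0 < c0 * θ := by positivity
  have hρ2 := pw_le hs0 hs1 (by linarith) hρ.le hi
  have hy2 := pw_le hs0 hs1 (by linarith) q4.1 hii
  have hsq : (c0 * θ) ^ 2 ≤ 1/64 := (nl_sq he0.le he1).trans (by norm_num)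
  have hρ3 : ‖d1‖ < 1/16 := by linarith
  have hy3 : y1 < 1/4 := by linarith
  rcases q4.1.eq_or_lt with hy | hy
  · subst hy
    have := s1_bd h hs0 hs1 hp hpps hν hK hle heq ht1 q1.2 hm1 hρ hρ3
    refine s1_num_bd (ψ := θ ^ (-ν)) hp hps hs1 hM hν hc0 hθ hθ1 hρ (by linarith) hi hψ1 hF hK hFK hB this
  · have := s1_int h hs0 hs1 hp hpps hν hK hle heq ht1 q1.2 hm1 hρ hρ3 hy hy3
    refine s1_num_int hp (by linarith) (by positivity) hc0 hθ (by linarith) hA hρ hρ2 q4.1 hy2 ?_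
    rw [mul_assoc]; exact this

set_option maxHeartbeats 1000000 in
lemma s1_core {n : ℕ} {s p M U0 F : ℝ} {b : ℝ → En n → En n} {f : ℝ → En n → ℝ} {u : ℝ → En n × ℝ → ℝ}
    (h : Good (1 - 2 * s) (1 - 2 * s + 4 * p) M U0 F b f u) (hs0 : 0 < s) (hs1 : s < 1/2)
    (hp : 0 < p) (hps : p ≤ s / 2) (hM : 0 ≤ M) (hF : 0 ≤ F) {c0 : ℝ} (hc0 : 0 < c0) (hc1 : c0 < 1/8)
    (hA : (n * (4 * (1 / s) ^ 2 + 6 * (1 / s))) * (2 * c0 ^ 2) < p / 2)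
    (hB : 1 / s * (1 + 2 * M) * c0 + (4 + 2 * M) * c0 ^ (2 * p / s) < p * s / 4)
    {δ : ℝ} (hδ : 0 < δ) {t : ℝ} {m d : En n} (ht : -1 ≤ t) (ht' : t ≤ 0) (hm : ‖m‖ ≤ 3/4) (hd : ‖d‖ ≤ 1/16) :
    thf 1 (9/16) t m ^ (1 / s) * (u t (m + d, 0) - u t (m - d, 0) - δ) ≤
      (8 * (4 * n + 13) * c0 ^ (-(1 / s))) * (U0 + F) * ‖d‖ := by
  have hn0 : (0:ℝ) ≤ n := Nat.cast_nonneg n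
  set ν := 1 / s with hνd
  have hν : 0 < ν := by positivity
  have hU : 0 ≤ U0 := (abs_nonneg _).trans (h.bound 0 0 0 (by norm_num) le_rfl (by simp; norm_num) le_rfl (by norm_num))
  have hcν : 1 ≤ c0 ^ (-ν) := Real.one_le_rpow_of_pos_of_le_one_of_nonpos hc0 (by linarith) (by linarith)
  have hcν' : c0 ^ (-ν) * c0 ^ ν = 1 := by rw [← Real.rpow_add hc0]; simp
  have hcν0 : 0 < c0 ^ ν := by positivity
  set C := 8 * (4 * n + 13) * c0 ^ (-ν) with hC
  have hC1 : 1 ≤ C := nl_C hn0 hcν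
  by_contra hcon
  push Not at hcon
  have hpps : p < s := by linarith
  -- uniform continuity
  let D : Set (ℝ × (En n × ℝ)) := {q | -1 ≤ q.1 ∧ q.1 ≤ 0 ∧ ‖q.2.1‖ ≤ 7/8 ∧ 0 ≤ q.2.2 ∧ q.2.2 ≤ 3/8}
  have hDc : IsCompact D := by
    have : D = Icc (-1:ℝ) 0 ×ˢ (Metric.closedBall (0 : En n) (7/8) ×ˢ Icc (0:ℝ) (3/8)) := by
      ext ⟨t, x, y⟩
      simp [D, and_assoc]
    rw [this]
    exact isCompact_Icc.prod ((isCompact_closedBall _ _).prod isCompact_Icc)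
  have huc := hDc.uniformContinuousOn_of_continuous h.cont
  obtain ⟨ε, hε, huc⟩ := Metric.uniformContinuousOn_iff.1 huc δ hδ
  have hsum : ∀ {m d : En n}, ‖m‖ ≤ 3/4 → ‖d‖ ≤ 1/16 → ‖m + d‖ ≤ 7/8 ∧ ‖m - d‖ ≤ 7/8 := fun {m d} h1 h2 =>
    ⟨(norm_add_le _ _).trans (by linarith), (norm_sub_le _ _).trans (by linarith)⟩
  have hsmall : ∀ t (m d : En n) y, -1 ≤ t → t ≤ 0 → ‖m‖ ≤ 3/4 → ‖d‖ ≤ 1/16 → 0 ≤ y → y ≤ 1/4 → ‖d‖ < ε / 2 →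
      u t (m + d, y) - u t (m - d, y) < δ := by
    intro t m d y h1 h2 h3 h4 h5 h6 h7
    have := huc (t, (m + d, y)) ⟨h1, h2, (hsum h3 h4).1, h5, by simp only; linarith⟩
      (t, (m - d, y)) ⟨h1, h2, (hsum h3 h4).2, h5, by simp only; linarith⟩ ?_
    · rw [Real.dist_eq] at this
      exact (le_abs_self _).trans_lt this
    · have h2d : ‖m + d - (m - d)‖ = 2 * ‖d‖ := by
        have : m + d - (m - d) = (2:ℝ) • d := by module
        rw [this, norm_smul]; norm_num
      rw [Prod.dist_eq, Prod.dist_eq]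
      simp only [dist_self, dist_eq_norm (m + d) (m - d), h2d]
      rw [max_lt_iff, max_lt_iff]
      refine ⟨hε, by linarith, hε⟩
  set ρ0 := ε / 2 with hρ0d
  have hρ0 : 0 < ρ0 := by positivity
  -- the compact set
  let Q : Set (ℝ × En n × En n × ℝ) := {P | (-1 ≤ P.1 ∧ P.1 ≤ 0) ∧ ‖P.2.1‖ ≤ 3/4 ∧
    (ρ0 ≤ ‖P.2.2.1‖ ∧ ‖P.2.2.1‖ ≤ 1/16) ∧ 0 ≤ P.2.2.2 ∧ P.2.2.2 ≤ 1/4}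
  have hQc : IsCompact Q := by
    have : Q = Icc (-1:ℝ) 0 ×ˢ (Metric.closedBall (0 : En n) (3/4) ×ˢ
        ((Metric.closedBall (0 : En n) (1/16) ∩ {d | ρ0 ≤ ‖d‖}) ×ˢ Icc (0:ℝ) (1/4))) := by
      ext ⟨t, m, d, y⟩
      simp only [Q, Set.mem_ofPred_eq, mem_prod, mem_Icc, Metric.mem_closedBall, dist_zero_right, mem_inter_iff]
      tauto
    rw [this]
    exact isCompact_Icc.prod ((isCompact_closedBall _ _).prod
      (((isCompact_closedBall _ _).inter_right (isClosed_le (by fun_prop) (by fun_prop))).prod isCompact_Icc))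
  have hd1 : ρ0 ≤ ‖d‖ := by
    by_contra hc
    push Not at hc
    have h1 := hsmall t m d 0 ht ht' hm hd le_rfl (by norm_num) hc
    have h2 : 0 ≤ thf 1 (9/16) t m ^ ν := by
      apply Real.rpow_nonneg
      unfold thf
      apply mul_nonneg
      · linarith
      · linarith [nl_sq (norm_nonneg m) hm]
    have h3 : 0 ≤ C * (U0 + F) * ‖d‖ := by positivity
    exact nl_h (X := 0) h2 h1 h3 hcon
  have hWQ : ∀ P ∈ Q, ‖P.2.2.1‖ / 2 ≤ Wf p s ‖P.2.2.1‖ P.2.2.2 ∧ Wf p s ‖P.2.2.1‖ P.2.2.2 ≤ ‖P.2.2.1‖ := by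
    rintro ⟨t, m, d, y⟩ ⟨q1, q2, q3, q4⟩
    simp only at q1 q2 q3 q4 ⊢
    exact Wf_bounds hp hpps hs1 (by linarith [q3.1]) q4.1 (nl_Wb (norm_nonneg _) q3.2 q4.1 q4.2)
  let Ξ : ℝ × En n × En n × ℝ → ℝ := fun P =>
    thf 1 (9/16) P.1 P.2.1 ^ ν * (u P.1 (P.2.1 + P.2.2.1, P.2.2.2) - u P.1 (P.2.1 - P.2.2.1, P.2.2.2) - δ) /
      Wf p s ‖P.2.2.1‖ P.2.2.2
  have hΞc : ContinuousOn Ξ Q := by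
    have c1 : Continuous (fun P : ℝ × En n × En n × ℝ => thf 1 (9/16) P.1 P.2.1 ^ ν) := by
      apply Continuous.rpow_const
      · unfold thf; fun_prop
      · intro _; right; exact hν.le
    have c2 : ContinuousOn (fun P : ℝ × En n × En n × ℝ => u P.1 (P.2.1 + P.2.2.1, P.2.2.2)) Q := by
      refine h.cont.comp (f := fun P : ℝ × En n × En n × ℝ => (P.1, (P.2.1 + P.2.2.1, P.2.2.2))) (by fun_prop) ?_
      rintro ⟨t, m, d, y⟩ ⟨q1, q2, q3, q4⟩
      exact ⟨q1.1, q1.2, (hsum q2 q3.2).1, q4.1, q4.2.trans (by norm_num)⟩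
    have c3 : ContinuousOn (fun P : ℝ × En n × En n × ℝ => u P.1 (P.2.1 - P.2.2.1, P.2.2.2)) Q := by
      refine h.cont.comp (f := fun P : ℝ × En n × En n × ℝ => (P.1, (P.2.1 - P.2.2.1, P.2.2.2))) (by fun_prop) ?_
      rintro ⟨t, m, d, y⟩ ⟨q1, q2, q3, q4⟩
      exact ⟨q1.1, q1.2, (hsum q2 q3.2).2, q4.1, q4.2.trans (by norm_num)⟩
    have c4 : ContinuousOn (fun P : ℝ × En n × En n × ℝ => Wf p s ‖P.2.2.1‖ P.2.2.2) Q := by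
      refine (Wf_cont hs0).comp (f := fun P : ℝ × En n × En n × ℝ => (‖P.2.2.1‖, P.2.2.2)) (by fun_prop) ?_
      rintro ⟨t, m, d, y⟩ ⟨q1, q2, q3, q4⟩
      exact hρ0.trans_le q3.1
    refine (c1.continuousOn.mul ((c2.sub c3).sub continuousOn_const)).div c4 ?_
    intro P hP
    have := (hWQ P hP).1
    have h2 : ρ0 ≤ ‖P.2.2.1‖ := hP.2.2.1.1
    have : 0 < Wf p s ‖P.2.2.1‖ P.2.2.2 := by linarith
    exact this.ne'
  have hP0 : (t, m, d, (0:ℝ)) ∈ Q := ⟨⟨ht, ht'⟩, hm, ⟨hd1, hd⟩, le_rfl, by norm_num⟩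
  obtain ⟨⟨t1, m1, d1, y1⟩, hP1, hmax⟩ := hQc.exists_isMaxOn ⟨_, hP0⟩ hΞc
  set K := Ξ (t1, m1, d1, y1) with hKd
  have hKbig : C * (U0 + F) < K := by
    have h1 : Ξ (t, m, d, 0) ≤ K := hmax hP0
    have h2 := hWQ _ hP0
    simp only at h2
    have hd0 : 0 < ‖d‖ := by linarith
    have hW0 : 0 < Wf p s ‖d‖ 0 := by linarith
    have h3 : C * (U0 + F) < Ξ (t, m, d, 0) := by
      simp only [Ξ]
      rw [lt_div_iff₀ hW0]
      refine lt_of_le_of_lt ?_ hcon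
      have : 0 ≤ C * (U0 + F) := by positivity
      gcongr
      exact h2.2
    linarith
  have hUF : 0 ≤ C * (U0 + F) := by positivity
  have hK : 0 < K := by linarith
  have hWP := hWQ _ hP1
  obtain ⟨q1, q2, q3, q4⟩ := hP1
  simp only at q1 q2 q3 q4 hWP
  have hρ : 0 < ‖d1‖ := by linarith [q3.1]
  have hW0 : 0 < Wf p s ‖d1‖ y1 := by linarith
  have hm2 : 0 ≤ 9/16 - ‖m1‖ ^ 2 := by linarith [nl_sq (norm_nonneg m1) q2]
  have hθ0 : 0 ≤ thf 1 (9/16) t1 m1 := mul_nonneg (by linarith) hm2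
  have hθ1 : thf 1 (9/16) t1 m1 ≤ 1 := by
    unfold thf
    exact nl_th1 q1.1 q1.2 hm2 (sq_nonneg _)
  have hθ : 0 < thf 1 (9/16) t1 m1 := by
    refine hθ0.lt_of_ne' ?_
    intro hz
    have : K = 0 := by
      rw [hKd]; simp only [Ξ]
      rw [hz, Real.zero_rpow hν.ne']; simp
    linarith
  have ht1 : -1 < t1 := by
    refine q1.1.lt_of_ne' ?_
    rintro rfl
    unfold thf at hθ; norm_num at hθ
  have hm1 : ‖m1‖ < 3/4 := by
    refine q2.lt_of_ne ?_
    intro hz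
    unfold thf at hθ; rw [hz] at hθ; norm_num at hθ
  have hle : ∀ t' (m' d' : En n) y', -1 < t' → t' ≤ 0 → ‖m'‖ < 3/4 → 0 < ‖d'‖ → ‖d'‖ ≤ 1/16 → 0 ≤ y' → y' ≤ 1/4 →
      u t' (m' + d', y') - u t' (m' - d', y') ≤ δ + K * thf 1 (9/16) t' m' ^ (-ν) * Wf p s ‖d'‖ y' := by
    intro t' m' d' y' a1 a2 a3 a4 a5 a6 a7
    have hθ' : 0 < thf 1 (9/16) t' m' := by
      unfold thf
      have : 0 < 9/16 - ‖m'‖ ^ 2 := by linarith [nl_sqlt (norm_nonneg m') a3]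
      have : 0 < t' + 1 := by linarith
      positivity
    have hW' : 0 < Wf p s ‖d'‖ y' := by
      have := (Wf_bounds hp hpps hs1 a4 a6 (nl_Wb (norm_nonneg _) a5 a6 a7)).1
      linarith
    by_cases hc : ‖d'‖ < ρ0
    · have := hsmall t' m' d' y' a1.le a2 a3.le a5 a6 a7 hc
      have : 0 < K * thf 1 (9/16) t' m' ^ (-ν) * Wf p s ‖d'‖ y' := by positivity
      linarith
    · push Not at hc
      have h1 : Ξ (t', m', d', y') ≤ K := hmax (show (t', m', d', y') ∈ Q from ⟨⟨a1.le, a2⟩, a3.le, ⟨hc, a5⟩, a6, a7⟩)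
      simp only [Ξ] at h1
      rw [div_le_iff₀ hW'] at h1
      have e : thf 1 (9/16) t' m' ^ (-ν) * thf 1 (9/16) t' m' ^ ν = 1 := by rw [← Real.rpow_add hθ']; simp
      have hψ' : 0 < thf 1 (9/16) t' m' ^ (-ν) := by positivity
      have h2 := mul_le_mul_of_nonneg_left h1 hψ'.le
      rw [← mul_assoc, e] at h2
      linarith
  have heq : u t1 (m1 + d1, y1) - u t1 (m1 - d1, y1) = δ + K * thf 1 (9/16) t1 m1 ^ (-ν) * Wf p s ‖d1‖ y1 := by
    have e : thf 1 (9/16) t1 m1 ^ (-ν) * thf 1 (9/16) t1 m1 ^ ν = 1 := by rw [← Real.rpow_add hθ]; simp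
    have : K * Wf p s ‖d1‖ y1 = thf 1 (9/16) t1 m1 ^ ν * (u t1 (m1 + d1, y1) - u t1 (m1 - d1, y1) - δ) := by
      rw [hKd]; simp only [Ξ]
      rw [div_mul_cancel₀ _ hW0.ne']
    linear_combination (-(thf 1 (9/16) t1 m1 ^ (-ν))) * this
      - (u t1 (m1 + d1, y1) - u t1 (m1 - d1, y1) - δ) * e
  exact s1_contact h hs0 hs1 hp hps hM hF hc0 hc1 hA hB hδ hU hK hKbig hle heq ht1 q1 q2 hm1 q3.2 hρ q4 hWP.1 hθ hθ1

lemma step1 (n : ℕ) {s p M : ℝ} (hs0 : 0 < s) (hs1 : s < 1/2) (hp : 0 < p) (hps : p ≤ s / 2) (hM : 0 ≤ M) :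
    ∃ C : ℝ, 0 < C ∧ ∀ (U0 F : ℝ) (b : ℝ → En n → En n) (f : ℝ → En n → ℝ) (u : ℝ → En n × ℝ → ℝ), 0 ≤ F →
      Good (1 - 2 * s) (1 - 2 * s + 4 * p) M U0 F b f u →
      ∀ t (x : En n), -3/4 ≤ t → t ≤ 0 → ‖x‖ < 5/8 → ∀ G : En n →L[ℝ] ℝ,
        HasFDerivAt (fun z => u t (z, 0)) G x → ‖G‖ ≤ C * (U0 + F) := by
  obtain ⟨c0, h1, h2, h3, h4⟩ := s1_consts (n * (4 * (1 / s) ^ 2 + 6 * (1 / s))) p s M (1 / s) hp hs0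
  set C := 8 * (4 * n + 13) * c0 ^ (-(1 / s)) with hC
  have hC0 : 0 < C := by positivity
  refine ⟨C * (1/32 : ℝ) ^ (-(1 / s)), by positivity, ?_⟩
  intro U0 F b f u hF h t x ht ht' hx G hG
  have hU : 0 ≤ U0 := (abs_nonneg _).trans (h.bound 0 0 0 (by norm_num) le_rfl (by simp; norm_num) le_rfl (by norm_num))
  set Λ := C * (1/32 : ℝ) ^ (-(1 / s)) * (U0 + F) with hΛ
  have hΛ0 : 0 ≤ Λ := by positivity
  have key : ∀ m d : En n, ‖m‖ < 5/8 → ‖d‖ ≤ 1/16 → u t (m + d, 0) - u t (m - d, 0) ≤ Λ * ‖d‖ := by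
    intro m d hm hd
    have hθ : 1/32 ≤ thf 1 (9/16) t m := by
      unfold thf
      have a1 : 11/64 ≤ 9/16 - ‖m‖ ^ 2 := by linarith [nl_sq (norm_nonneg m) hm.le]
      exact nl_th2 ht a1
    have hθ0 : 0 < thf 1 (9/16) t m := by linarith
    have hpos : 0 < thf 1 (9/16) t m ^ (1 / s) := by positivity
    refine le_of_forall_pos_le_add fun δ hδ => ?_
    have := s1_core h hs0 hs1 hp hps hM hF h1 h2 h3 h4 hδ (t := t) (m := m) (d := d) (by linarith) ht' (by linarith) hd
    have e : thf 1 (9/16) t m ^ (-(1 / s)) * thf 1 (9/16) t m ^ (1 / s) = 1 := by rw [← Real.rpow_add hθ0]; simp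
    have hψ : thf 1 (9/16) t m ^ (-(1 / s)) ≤ (1/32 : ℝ) ^ (-(1 / s)) :=
      Real.rpow_le_rpow_of_nonpos (by norm_num) hθ (by simp; positivity)
    have hψ0 : 0 < thf 1 (9/16) t m ^ (-(1 / s)) := by positivity
    have h5 := mul_le_mul_of_nonneg_left this hψ0.le
    rw [← mul_assoc, e, one_mul] at h5
    have h6 : thf 1 (9/16) t m ^ (-(1 / s)) * (C * (U0 + F) * ‖d‖) ≤ Λ * ‖d‖ := by
      calc _ ≤ (1/32 : ℝ) ^ (-(1 / s)) * (C * (U0 + F) * ‖d‖) := by gcongr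
        _ = Λ * ‖d‖ := by rw [hΛ]; ring
    linarith
  have hlip : ∀ z : En n, ‖z - x‖ < (5/8 - ‖x‖) ⊓ (1/16) → u t (z, 0) - u t (x, 0) ≤ Λ * ‖z - x‖ ∧
      u t (x, 0) - u t (z, 0) ≤ Λ * ‖z - x‖ := by
    intro z hz
    rw [lt_inf_iff] at hz
    have hnd : ‖(1/2 : ℝ) • (z - x)‖ = ‖z - x‖ / 2 := by
      rw [norm_smul, Real.norm_eq_abs, abs_of_pos (by norm_num)]; ring
    have hmn : ‖x + (1/2 : ℝ) • (z - x)‖ < 5/8 := by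
      refine (norm_add_le _ _).trans_lt ?_
      rw [hnd]; linarith [hz.1, norm_nonneg (z - x)]
    have k1 := key (x + (1/2 : ℝ) • (z - x)) ((1/2 : ℝ) • (z - x)) hmn (by rw [hnd]; linarith [hz.2, norm_nonneg (z - x)])
    have k2 := key (x + (1/2 : ℝ) • (z - x)) (-((1/2 : ℝ) • (z - x))) hmn (by rw [norm_neg, hnd]; linarith [hz.2, norm_nonneg (z - x)])
    have e1 : x + (1/2 : ℝ) • (z - x) + (1/2 : ℝ) • (z - x) = z := by module
    have e2 : x + (1/2 : ℝ) • (z - x) - (1/2 : ℝ) • (z - x) = x := by module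
    rw [norm_neg, ← sub_eq_add_neg, sub_neg_eq_add] at k2
    rw [e1, e2, hnd] at k1 k2
    have : 0 ≤ Λ * ‖z - x‖ := by positivity
    constructor <;> linarith
  refine hG.le_of_lip' hΛ0 ?_
  have hev : ∀ᶠ z in 𝓝 x, ‖z - x‖ < (5/8 - ‖x‖) ⊓ (1/16) := by
    have : Tendsto (fun z : En n => ‖z - x‖) (𝓝 x) (𝓝 0) := by
      have h : Continuous (fun z : En n => ‖z - x‖) := by fun_prop
      simpa using h.tendsto x
    exact this.eventually (gt_mem_nhds (by rw [lt_inf_iff]; constructor <;> [linarith; norm_num]))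
  filter_upwards [hev] with z hz
  rw [Real.norm_eq_abs, abs_le]
  have := hlip z hz
  constructor <;> linarith [this.1, this.2]

def gs (s ρ y : ℝ) : ℝ := 1 - 1/4 * ρ ^ (-(2 * s)) * y ^ (2 * s) - 1 / (4 * ρ ^ 2) * y ^ 2

def gf (s ρ y : ℝ) : ℝ := gs s ρ (min y ρ)

lemma gs_bounds {s ρ y : ℝ} (hs : 0 < s) (hρ : 0 < ρ) (hy : 0 ≤ y) (hy' : y ≤ ρ) :
    1/2 ≤ gs s ρ y ∧ gs s ρ y ≤ 1 := by
  have e1 : ρ ^ (-(2 * s)) * ρ ^ (2 * s) = 1 := by rw [← Real.rpow_add hρ]; simp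
  have e2 : ρ ^ (-(2 * s)) * y ^ (2 * s) ≤ 1 := by
    rw [← e1]; gcongr
  have e3 : 0 ≤ ρ ^ (-(2 * s)) * y ^ (2 * s) := by positivity
  have e4 : 1 / (4 * ρ ^ 2) * y ^ 2 ≤ 1/4 := by
    calc 1 / (4 * ρ ^ 2) * y ^ 2 ≤ 1 / (4 * ρ ^ 2) * ρ ^ 2 := by gcongr
      _ = 1/4 := by field_simp
  have e5 : 0 ≤ 1 / (4 * ρ ^ 2) * y ^ 2 := by positivity
  unfold gs
  constructor <;> linarith

lemma gf_bounds {s ρ y : ℝ} (hs : 0 < s) (hρ : 0 < ρ) (hy : 0 ≤ y) :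
    1/2 ≤ gf s ρ y ∧ gf s ρ y ≤ 1 :=
  gs_bounds hs hρ (le_min hy hρ.le) (min_le_right _ _)

lemma gf_far {s ρ y : ℝ} (hρ : 0 < ρ) (hy : ρ ≤ y) : gf s ρ y = 1/2 := by
  unfold gf gs
  rw [min_eq_right hy]
  have e1 : ρ ^ (-(2 * s)) * ρ ^ (2 * s) = 1 := by rw [← Real.rpow_add hρ]; simp
  have e2 : 1 / (4 * ρ ^ 2) * ρ ^ 2 = 1/4 := by field_simp
  rw [e2]; linear_combination (-1/4) * e1

lemma gf_near {s ρ y : ℝ} (hy : y ≤ ρ) : gf s ρ y = gs s ρ y := by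
  unfold gf; rw [min_eq_left hy]

lemma gf_zero {s ρ : ℝ} (hs : 0 < s) (hρ : 0 < ρ) : gf s ρ 0 = 1 := by
  rw [gf_near hρ.le]; unfold gs; rw [Real.zero_rpow (by positivity)]; simp

lemma gf_cont {s : ℝ} (hs : 0 < s) :
    ContinuousOn (fun q : ℝ × ℝ => gf s q.1 q.2) {q | 0 < q.1} := by
  unfold gf gs
  have c0 : Continuous (fun q : ℝ × ℝ => min q.2 q.1) := by fun_prop
  have c1 : Continuous (fun q : ℝ × ℝ => (min q.2 q.1) ^ (2 * s)) :=
    c0.rpow_const (fun _ => Or.inr (by positivity))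
  have c2 : ContinuousOn (fun q : ℝ × ℝ => q.1 ^ (-(2 * s))) {q | 0 < q.1} :=
    ContinuousOn.rpow_const (by fun_prop) (fun q hq => Or.inl (ne_of_gt hq))
  have c3 : ContinuousOn (fun q : ℝ × ℝ => 1 / (4 * q.1 ^ 2)) {q | 0 < q.1} := by
    refine ContinuousOn.div (by fun_prop) (by fun_prop) (fun q hq => ?_)
    have : (0:ℝ) < q.1 := hq
    positivity
  exact ((continuousOn_const.sub ((continuousOn_const.mul c2).mul c1.continuousOn))).sub
    (c3.mul (c0.pow 2).continuousOn)

lemma gs_D2 {s ρ y : ℝ} (hy : 0 < y) (hρ : 0 < ρ) : ∃ y1 y2, HasD2 (fun η => gs s ρ η) y y1 y2 ∧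
    y2 + (1 - 2 * s) / y * y1 = - ((1 - s) / ρ ^ 2) ∧
    y1 = - (1/4 * ρ ^ (-(2 * s)) * (2 * s * y ^ (2 * s - 1))) - 1 / (4 * ρ ^ 2) * (2 * y) := by
  have sq : HasD2 (fun x => x ^ 2) y (2 * y) 2 := by
    refine (((HasD2.ident y).mul (HasD2.ident y)).congr_val (by ring) (by ring)).congr
      (Eventually.of_forall fun z => by simp only; ring)
  have h := ((HasD2.const 1 y).sub (((HasD2.ident y).rpow hy (2 * s)).const_mul (1/4 * ρ ^ (-(2 * s))))).sub
    (sq.const_mul (1 / (4 * ρ ^ 2)))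
  refine ⟨_, _, h, ?_, ?_⟩
  · have e : y ^ (2 * s - 1) = y * y ^ (2 * s - 1 - 1) := by
      conv_lhs => rw [show 2 * s - 1 = (2 * s - 1 - 1) + 1 by ring, Real.rpow_add hy, Real.rpow_one]
      ring
    rw [e]
    field_simp
    ring
  · ring

section
variable {n : ℕ} {s γ M U0 F : ℝ} {b : ℝ → En n → En n} {f : ℝ → En n → ℝ} {u : ℝ → En n × ℝ → ℝ}

/-- second difference -/
def wd (u : En n × ℝ → ℝ) (h : En n) (p : En n × ℝ) : ℝ := u (p.1 + h, p.2) - u p - (u p - u (p.1 - h, p.2))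

lemma Good.wslice (hg : Good (1 - 2 * s) γ M U0 F b f u) {t y : ℝ} {x h : En n} (ht : -1 ≤ t) (ht' : t ≤ 0)
    (hx : ‖x‖ ≤ 3/4) (hh : ‖h‖ ≤ 1/16) (hy : 0 < y) (hy' : y ≤ 3/8) : SliceH (1 - 2 * s) (wd (u t) h) (x, y) := by
  have k0 := hg.slice t x y ht ht' (by linarith) hy hy'
  have k1 := hg.slice t (x + h) y ht ht' ((norm_add_le _ _).trans (by linarith)) hy hy'
  have k2 := hg.slice t (x - h) y ht ht' ((norm_sub_le _ _).trans (by linarith)) hy hy'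
  rw [sub_eq_add_neg] at k2
  have := (k1.trans (p := (x, y)) h |>.sub k0).sub (k0.sub (k2.trans (p := (x, y)) (-h)))
  simp only [← sub_eq_add_neg] at this
  exact this

lemma nl_thpos {t : ℝ} {x : En n} (ht : -3/4 < t) (hx : ‖x‖ < 9/16) : 0 < thf (3/4) (81/256) t x := by
  unfold thf
  have := nl_sqlt (norm_nonneg x) hx
  norm_num at this
  apply mul_pos <;> linarith

lemma s2_int (hg : Good (1 - 2 * s) γ M U0 F b f u) (hs0 : 0 < s) (hs1 : s < 1/2)
    {ν : ℝ} (hν : 0 < ν) {t y A ρ : ℝ} {x h : En n} (hA : 0 < A) (hρ : 0 < ρ)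
    (hle : ∀ t' (x' : En n) y', -3/4 < t' → t' ≤ 0 → ‖x'‖ < 9/16 → 0 ≤ y' → y' ≤ 1/8 →
      wd (u t') h (x', y') ≤ A * thf (3/4) (81/256) t' x' ^ (-ν) * gf s ρ y')
    (heq : wd (u t) h (x, y) = A * thf (3/4) (81/256) t x ^ (-ν) * gf s ρ y)
    (ht : -3/4 < t) (ht' : t ≤ 0) (hx : ‖x‖ < 9/16) (hh : ‖h‖ ≤ 1/16)
    (hy : 0 < y) (hy' : y < 1/8) (hyρ : y < ρ) :
    1/2 / ρ ^ 2 ≤ n * ((4 * ν ^ 2 + 6 * ν) * thf (3/4) (81/256) t x ^ (-2:ℝ)) := by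
  have hθ := nl_thpos ht hx
  set θ := thf (3/4) (81/256) t x with hθd
  have hψ : 0 < θ ^ (-ν) := Real.rpow_pos_of_pos hθ _
  set ψ := θ ^ (-ν)
  obtain ⟨y1, y2, hD, hL, -⟩ := gs_D2 (s := s) hy hρ
  have hgb := gf_bounds (s := s) hs0 hρ hy.le
  set Bm := A * gf s ρ y * ((4 * ν ^ 2 + 6 * ν) * θ ^ (-2:ℝ) * ψ) with hBm
  have hg0 : 0 < gf s ρ y := by linarith
  have J := contact1 (a := 1 - 2 * s) (w := wd (u t) h) (x := x) (y := y) (Bm := Bm)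
    (y1 := A * ψ * y1) (y2 := A * ψ * y2) (Ty := fun η => A * ψ * gs s ρ η)
    (hg.wslice (by linarith) ht' (by linarith) hh hy (by linarith)) ?_ (hD.const_mul _) ?_ ?_
  · have e : (0:ℝ) ≤ A * ψ * (y2 + (1 - 2 * s) / y * y1) + n * Bm := by linarith
    rw [hL] at e
    have e3 : n * Bm ≤ A * ψ * (n * ((4 * ν ^ 2 + 6 * ν) * θ ^ (-2:ℝ))) := by
      have : Bm ≤ A * 1 * ((4 * ν ^ 2 + 6 * ν) * θ ^ (-2:ℝ) * ψ) := by
        rw [hBm]; gcongr; exact hgb.2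
      have := mul_le_mul_of_nonneg_left this (Nat.cast_nonneg (α := ℝ) n)
      linarith
    have e4 : 0 ≤ A * ψ * (n * ((4 * ν ^ 2 + 6 * ν) * θ ^ (-2:ℝ)) - (1 - s) / ρ ^ 2) := by
      linarith
    have e5 := nonneg_of_mul_nonneg_right e4 (by positivity)
    have e6 : 1/2 / ρ ^ 2 ≤ (1 - s) / ρ ^ 2 := by gcongr; linarith
    linarith
  · intro v hv
    obtain ⟨l, B, hB, hB'⟩ := psi_D2 (c := 3/4) (R := 81/256) (t := t) (ν := ν) (m := x) (v := v) hν (by linarith)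
      (by linarith) (by norm_num) hθ hv
    refine ⟨fun τ => A * gf s ρ y * thf (3/4) (81/256) t (x + τ • v) ^ (-ν), _, _,
      hB.const_mul (A * gf s ρ y), ?_, ?_, ?_⟩
    · rw [hBm]; gcongr
    · have htt : Tendsto (fun τ : ℝ => x + τ • v) (𝓝 0) (𝓝 x) := by
        have : Continuous (fun τ : ℝ => x + τ • v) := by fun_prop
        simpa using this.tendsto 0
      filter_upwards [htt.eventually (eventually_norm_lt hx)] with τ hτ
      have := hle t (x + τ • v) y ht ht' hτ hy.le hy'.le
      linarith
    · simp only [zero_smul, add_zero]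
      linarith
  · filter_upwards [lt_mem_nhds hy, gt_mem_nhds hy', gt_mem_nhds hyρ] with τ hτ0 hτ1 hτ2
    have := hle t x τ ht ht' hx hτ0.le hτ1.le
    rwa [gf_near hτ2.le] at this
  · rw [heq, gf_near hyρ.le]

set_option maxHeartbeats 1000000 in
lemma s2_bd (hg : Good (1 - 2 * s) γ M U0 F b f u) (hs0 : 0 < s) (hs1 : s < 1/2)
    {ν : ℝ} (hν : 0 < ν) {t A ρ Λ : ℝ} {x h : En n} (hA : 0 < A) (hρ : 0 < ρ)
    (hΛ : ∀ t (x : En n), -3/4 ≤ t → t ≤ 0 → ‖x‖ < 5/8 → ∀ G : En n →L[ℝ] ℝ,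
        HasFDerivAt (fun z => u t (z, 0)) G x → ‖G‖ ≤ Λ)
    (hle : ∀ t' (x' : En n) y', -3/4 < t' → t' ≤ 0 → ‖x'‖ < 9/16 → 0 ≤ y' → y' ≤ 1/8 →
      wd (u t') h (x', y') ≤ A * thf (3/4) (81/256) t' x' ^ (-ν) * gf s ρ y')
    (heq : wd (u t) h (x, 0) = A * thf (3/4) (81/256) t x ^ (-ν))
    (ht : -3/4 < t) (ht' : t ≤ 0) (hx : ‖x‖ < 9/16) (hh : ‖h‖ ≤ 1/16) :
    A * thf (3/4) (81/256) t x ^ (-ν) * (s / 2 * ρ ^ (-(2 * s))) ≤ (2 * F + 2 * M * Λ) * ‖h‖ ^ γ +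
      A * thf (3/4) (81/256) t x ^ (-ν) * (ν * (1 + 2 * M)) / thf (3/4) (81/256) t x := by
  have hθ := nl_thpos ht hx
  obtain ⟨lt, hlt, hlt'⟩ := psi_t (c := 3/4) (R := 81/256) (t := t) (m := x) hν (by norm_num) hθ
  have hn1 : ‖x + h‖ < 5/8 := (norm_add_le _ _).trans_lt (by linarith)
  have hn2 : ‖x - h‖ < 5/8 := (norm_sub_le _ _).trans_lt (by linarith)
  have k0 : ‖x‖ ≤ 7/8 := by linarith
  have k1 : ‖x + h‖ ≤ 7/8 := by linarith
  have k2 : ‖x - h‖ ≤ 7/8 := by linarith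
  have t1 : -1 < t := by linarith
  obtain ⟨Dt, L, G, v1, e1, e2, e3, e4, e5⟩ := hg.eqn t (x + h) t1 ht' k1
  obtain ⟨Dt', L', G', v2, e1', e2', e3', e4', e5'⟩ := hg.eqn t (x - h) t1 ht' k2
  obtain ⟨Dt0, L0, G0, v0, c1, c2, c3, c4, c5⟩ := hg.eqn t x t1 ht' k0
  have hG1 := hΛ t _ ht.le ht' hn1 G e2
  have hG2 := hΛ t _ ht.le ht' hn2 G' e2'
  have hM0 := hg.bM t _ t1.le ht' k0
  have hΛ0 : 0 ≤ Λ := (norm_nonneg _).trans hG1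
  have hMp : 0 ≤ M := (norm_nonneg _).trans hM0
  have d1 : x + h - x = h := by abel
  have d2 : x - h - x = -h := by abel
  have hb1 := hg.bH t _ _ t1.le ht' k1 k0
  have hb2 := hg.bH t _ _ t1.le ht' k2 k0
  have hf1 := hg.fH t _ _ t1.le ht' k1 k0
  have hf2 := hg.fH t _ _ t1.le ht' k2 k0
  rw [d1] at hb1 hf1
  rw [d2, norm_neg] at hb2 hf2
  set B := b t x with hB
  set H := ‖h‖ ^ γ with hH
  have hGb1 : -(Λ * (M * H)) ≤ G (b t (x + h) - B) := by
    have a1 := G.le_opNorm (b t (x + h) - B)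
    rw [Real.norm_eq_abs] at a1
    have a2 : ‖G‖ * ‖b t (x + h) - B‖ ≤ Λ * (M * H) := by gcongr
    linarith [neg_abs_le (G (b t (x + h) - B))]
  have hGb2 : -(Λ * (M * H)) ≤ G' (b t (x - h) - B) := by
    have a1 := G'.le_opNorm (b t (x - h) - B)
    rw [Real.norm_eq_abs] at a1
    have a2 : ‖G'‖ * ‖b t (x - h) - B‖ ≤ Λ * (M * H) := by gcongr
    linarith [neg_abs_le (G' (b t (x - h) - B))]
  obtain ⟨lm, hlm, hlm'⟩ := psi_dir (c := 3/4) (R := 81/256) (t := t) (m := x) (v := B) hν (by linarith)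
    (by linarith) (by norm_num) hθ
  set θ := thf (3/4) (81/256) t x with hθd
  have hψ : 0 < θ ^ (-ν) := Real.rpow_pos_of_pos hθ _
  set ψ := θ ^ (-ν)
  have hg0 := gf_zero hs0 hρ
  have hle0 : ∀ t' (x' : En n), -3/4 < t' → t' ≤ 0 → ‖x'‖ < 9/16 →
      wd (u t') h (x', 0) ≤ A * thf (3/4) (81/256) t' x' ^ (-ν) := fun t' x' a1 a2 a3 => by
    have := hle t' x' 0 a1 a2 a3 le_rfl (by norm_num)
    rwa [hg0, mul_one] at this
  -- time
  have hT : A * lt ≤ Dt - Dt0 - (Dt0 - Dt') := by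
    have hTd := hlt.const_mul A
    refine deriv_left_ge ((e1.sub c1).sub (c1.sub e1')) hTd ?_ heq
    filter_upwards [Ioo_mem_nhdsLT ht] with τ hτ
    exact hle0 τ x hτ.1 (hτ.2.le.trans ht') hx
  have hT2 : -(A * (ν * ψ / θ)) ≤ Dt - Dt0 - (Dt0 - Dt') := by
    refine le_trans ?_ hT
    have a1 : A * (-(ν * ψ / θ)) ≤ A * lt := by gcongr
    linarith
  -- space
  have hsp : G B - G0 B - (G0 B - G' B) = A * lm := by
    have l1 : HasDerivAt (fun τ : ℝ => (x + τ • B) + h) B 0 := (line_deriv x B).add_const h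
    have l2 : HasDerivAt (fun τ : ℝ => (x + τ • B) - h) B 0 := (line_deriv x B).sub_const h
    have m1 : HasDerivAt (fun τ : ℝ => u t ((x + τ • B) + h, 0)) (G B) 0 := by
      have e2z : HasFDerivAt (fun z => u t (z, 0)) G ((x + (0:ℝ) • B) + h) := by simpa using e2
      exact e2z.comp_hasDerivAt (0:ℝ) l1
    have m2 : HasDerivAt (fun τ : ℝ => u t ((x + τ • B) - h, 0)) (G' B) 0 := by
      have e2z : HasFDerivAt (fun z => u t (z, 0)) G' ((x + (0:ℝ) • B) - h) := by simpa using e2'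
      exact e2z.comp_hasDerivAt (0:ℝ) l2
    have m0 : HasDerivAt (fun τ : ℝ => u t (x + τ • B, 0)) (G0 B) 0 := by
      have e2z : HasFDerivAt (fun z => u t (z, 0)) G0 (x + (0:ℝ) • B) := by simpa using c2
      exact e2z.comp_hasDerivAt (0:ℝ) (line_deriv x B)
    have m5 := ((m1.sub m0).sub (m0.sub m2)).sub (hlm.const_mul A)
    have hmax : IsLocalMax (fun τ : ℝ => (u t ((x + τ • B) + h, 0) - u t (x + τ • B, 0) -
        (u t (x + τ • B, 0) - u t ((x + τ • B) - h, 0))) -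
        A * thf (3/4) (81/256) t (x + τ • B) ^ (-ν)) 0 := by
      have t1 : Tendsto (fun τ : ℝ => x + τ • B) (𝓝 0) (𝓝 x) := by
        have : Continuous (fun τ : ℝ => x + τ • B) := by fun_prop
        simpa using this.tendsto 0
      filter_upwards [t1.eventually (eventually_norm_lt hx)] with τ q1
      have := hle0 t _ ht ht' q1
      simp only [wd] at this heq
      simp only [zero_smul, add_zero]
      linarith
    have := hmax.hasDerivAt_eq_zero m5
    linarith
  have hsp2 : -(A * (2 * ν * M * ψ / θ)) ≤ A * lm := by
    have a0 : |lm| ≤ 2 * ν * M * ψ / θ := hlm'.trans (by gcongr)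
    have a1 : A * (-(2 * ν * M * ψ / θ)) ≤ A * lm := by
      gcongr
      linarith [neg_abs_le lm]
    linarith
  -- normal
  have hN : L - L0 - (L0 - L') - A * ψ * (-(s / 2 * ρ ^ (-(2 * s)))) ≤ 0 := by
    have hη : 0 < min ρ (1/8) := by positivity
    refine bdry_le (v := fun y => wd (u t) h (x, y) - A * ψ * gs s ρ y)
      (v' := fun y => v1 y - v0 y - (v0 y - v2 y) -
        A * ψ * (- (1/4 * ρ ^ (-(2 * s)) * (2 * s * y ^ (2 * s - 1))) - 1 / (4 * ρ ^ 2) * (2 * y)))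
      (a := 1 - 2 * s) (η := min ρ (1/8)) hη ?_ ?_ ?_ ?_
    · have cc : ∀ x : En n, ‖x‖ ≤ 7/8 → ContinuousOn (fun y => u t (x, y)) (Ico 0 (min ρ (1/8))) := fun x hx =>
        hg.cont.comp (f := fun y : ℝ => (t, (x, y))) (by fun_prop)
          (fun y hy => ⟨t1.le, ht', hx, hy.1, by
            have := hy.2.le.trans (min_le_right _ _)
            simp only; linarith⟩)
      have cg : Continuous (fun y => gs s ρ y) := by
        unfold gs
        have : Continuous (fun y : ℝ => y ^ (2 * s)) := continuous_id.rpow_const (fun _ => Or.inr (by positivity))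
        fun_prop
      exact (((cc _ k1).sub (cc _ k0)).sub ((cc _ k0).sub (cc _ k2))).sub (continuousOn_const.mul cg.continuousOn)
    · intro y hy
      have hy8 : y < 3/8 := by
        have := hy.2.le.trans (min_le_right _ _); linarith
      obtain ⟨y1, y2, hD, -, hy1⟩ := gs_D2 (s := s) hy.1 hρ
      rw [← hy1]
      exact (((e3 y hy.1 hy8).sub (c3 y hy.1 hy8)).sub ((c3 y hy.1 hy8).sub (e3' y hy.1 hy8))).sub
        (hD.hasDerivAt.const_mul _)
    · intro y hy
      have := hle t x y ht ht' hx hy.1.le (hy.2.le.trans (min_le_right _ _))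
      rw [gf_near (hy.2.le.trans (min_le_left _ _))] at this
      have h0 : gs s ρ 0 = 1 := by rw [← gf_near hρ.le]; exact hg0
      simp only [h0]
      linarith
    · have c0 : Continuous (fun y : ℝ => y ^ (1 - 2 * s) * y) :=
        (continuous_id.rpow_const (fun _ => Or.inr (by linarith))).mul continuous_id
      have hc : Continuous (fun y : ℝ => -(s / 2 * ρ ^ (-(2 * s))) - 1 / (4 * ρ ^ 2) * (2 * (y ^ (1 - 2 * s) * y))) := by
        fun_prop
      have htd := (hc.tendsto 0).mono_left (nhdsWithin_le_nhds (s := Ioi 0))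
      have hv0 : -(s / 2 * ρ ^ (-(2 * s))) - 1 / (4 * ρ ^ 2) * (2 * ((0:ℝ) ^ (1 - 2 * s) * 0)) =
          -(s / 2 * ρ ^ (-(2 * s))) := by ring
      rw [hv0] at htd
      have := ((e4.sub c4).sub (c4.sub e4')).sub (htd.const_mul (A * ψ))
      refine this.congr' ?_
      filter_upwards [self_mem_nhdsWithin] with y hy
      have q2 : y ^ (1 - 2 * s) * y ^ (2 * s - 1) = 1 := by
        rw [← Real.rpow_add (show (0:ℝ) < y from hy)]; simp
      linear_combination (-(A * ψ * (s / 2 * ρ ^ (-(2 * s))))) * q2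
  have hX : A * ψ * (ν * (1 + 2 * M)) / θ = A * (ν * ψ / θ) + A * (2 * ν * M * ψ / θ) := by
    ring
  rw [hX]
  rw [map_sub] at hGb1 hGb2
  have f1 := abs_le.1 hf1
  have f2 := abs_le.1 hf2
  linarith [f1.2, f2.2]

end

section
variable {n : ℕ} {s γ M U0 F : ℝ} {b : ℝ → En n → En n} {f : ℝ → En n → ℝ} {u : ℝ → En n × ℝ → ℝ}

lemma fejer (v : En n × ℝ → ℝ) (h x : En n) (y : ℝ) (N : ℕ) :
    wd v ((N:ℝ) • h) (x, y) =
      ∑ i ∈ Finset.range N, ∑ j ∈ Finset.range N, wd v h (x + ((i:ℝ) - (j:ℝ)) • h, y) := by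
  have h1 : ∀ i : ℕ, ∑ j ∈ Finset.range N, wd v h (x + ((i:ℝ) - (j:ℝ)) • h, y) =
      (v (x + ((i + 1 : ℕ) : ℝ) • h, y) - v (x + (i:ℝ) • h, y)) -
      (v (x + (((i + 1 : ℕ) : ℝ) - N) • h, y) - v (x + ((i:ℝ) - N) • h, y)) := by
    intro i
    have := Finset.sum_range_sub' (fun j : ℕ => v (x + ((i:ℝ) - (j:ℝ)) • h + h, y) - v (x + ((i:ℝ) - (j:ℝ)) • h, y)) N
    have e1 : x + (i:ℝ) • h + h = x + ((i + 1 : ℕ) : ℝ) • h := by push_cast; module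
    have e2 : x + ((i:ℝ) - ((0:ℕ):ℝ)) • h = x + (i:ℝ) • h := by push_cast; module
    have e3 : x + ((i:ℝ) - (N:ℝ)) • h + h = x + (((i + 1 : ℕ) : ℝ) - N) • h := by push_cast; module
    simp only [e2, e1, e3] at this
    rw [← this]
    refine Finset.sum_congr rfl fun j _ => ?_
    have e5 : x + ((i:ℝ) - ((j + 1 : ℕ):ℝ)) • h = x + ((i:ℝ) - (j:ℝ)) • h - h := by push_cast; module
    simp only [wd, e5, sub_add_cancel]
  rw [Finset.sum_congr rfl (fun i _ => h1 i), Finset.sum_sub_distrib,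
    Finset.sum_range_sub (fun i : ℕ => v (x + (i:ℝ) • h, y)),
    Finset.sum_range_sub (fun i : ℕ => v (x + ((i:ℝ) - N) • h, y))]
  have e6 : x + ((0:ℕ):ℝ) • h = x := by simp
  have e7 : x + ((N:ℝ) - N) • h = x := by simp
  have e8 : x + (((0:ℕ):ℝ) - N) • h = x - (N:ℝ) • h := by push_cast; module
  simp only [wd, e6, e7, e8]

lemma Good.wcont (hg : Good (1 - 2 * s) γ M U0 F b f u) {t : ℝ} {h : En n} (ht : -1 ≤ t) (ht' : t ≤ 0)
    (hh : ‖h‖ ≤ 1/16) : ContinuousOn (wd (u t) h) {p | ‖p.1‖ ≤ 3/4 ∧ 0 ≤ p.2 ∧ p.2 ≤ 3/8} := by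
  have c0 : ContinuousOn (fun p : En n × ℝ => u t p) {p | ‖p.1‖ ≤ 3/4 ∧ 0 ≤ p.2 ∧ p.2 ≤ 3/8} :=
    hg.cont.comp (f := fun p : En n × ℝ => (t, p)) (by fun_prop)
      (fun p hp => ⟨ht, ht', hp.1.trans (by norm_num), hp.2.1, hp.2.2⟩)
  have c1 : ContinuousOn (fun p : En n × ℝ => u t (p.1 + h, p.2)) {p | ‖p.1‖ ≤ 3/4 ∧ 0 ≤ p.2 ∧ p.2 ≤ 3/8} :=
    hg.cont.comp (f := fun p : En n × ℝ => (t, (p.1 + h, p.2))) (by fun_prop)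
      (fun p hp => ⟨ht, ht', (norm_add_le _ _).trans (by linarith [hp.1]), hp.2.1, hp.2.2⟩)
  have c2 : ContinuousOn (fun p : En n × ℝ => u t (p.1 - h, p.2)) {p | ‖p.1‖ ≤ 3/4 ∧ 0 ≤ p.2 ∧ p.2 ≤ 3/8} :=
    hg.cont.comp (f := fun p : En n × ℝ => (t, (p.1 - h, p.2))) (by fun_prop)
      (fun p hp => ⟨ht, ht', (norm_sub_le _ _).trans (by linarith [hp.1]), hp.2.1, hp.2.2⟩)
  exact (c1.sub c0).sub (c0.sub c2)

lemma s2_shift (hg : Good (1 - 2 * s) γ M U0 F b f u) (hs0 : 0 < s) (hs1 : s < 1/2)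
    {t y μ R N k : ℝ} {x h : En n} (ht : -1 ≤ t) (ht' : t ≤ 0) (hh0 : 0 < ‖h‖) (hh : ‖h‖ ≤ 1/16) (hN : 0 < N)
    (hR : 4 * N ≤ R) (hk : |k| ≤ N) (hμ : 0 < μ) (hyR : R * ‖h‖ ≤ y) (hx : ‖x‖ + R * ‖h‖ ≤ 3/4)
    (hy : y + R * ‖h‖ / 2 ≤ 3/8)
    (hB : ∀ z η, ‖z - x‖ ≤ R * ‖h‖ → |η - y| ≤ R * ‖h‖ / 2 → |wd (u t) h (z, η)| ≤ μ) :
    |wd (u t) h (x + k • h, y) - wd (u t) h (x, y)| ≤ 2 * μ * (4 * n + 12) * (N / R) := by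
  have hn0 : (0:ℝ) ≤ n := Nat.cast_nonneg n
  have hR0 : 0 < R := by linarith
  have hr : 0 < R * ‖h‖ := by positivity
  have hkh : ‖(k / 2) • h‖ = |k| / 2 * ‖h‖ := by
    rw [norm_smul, Real.norm_eq_abs, abs_div, abs_two]
  have hkh2 : |k| / 2 * ‖h‖ ≤ R * ‖h‖ / 2 / 4 := by
    have : |k| * ‖h‖ ≤ R / 4 * ‖h‖ := by gcongr; linarith
    linarith
  have hz : ∀ z : En n, ‖z - (x + (k / 2) • h)‖ ≤ R * ‖h‖ / 2 → ‖z - x‖ ≤ R * ‖h‖ := by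
    intro z hz
    calc ‖z - x‖ = ‖(z - (x + (k / 2) • h)) + (k / 2) • h‖ := by congr 1; module
      _ ≤ _ := norm_add_le _ _
      _ ≤ R * ‖h‖ := by rw [hkh]; linarith
  have hz2 : ∀ z : En n, ‖z - x‖ ≤ R * ‖h‖ → ‖z‖ ≤ 3/4 := by
    intro z hz
    calc ‖z‖ = ‖(z - x) + x‖ := by congr 1; module
      _ ≤ _ := norm_add_le _ _
      _ ≤ 3/4 := by linarith
  have hη : ∀ η, |η - y| ≤ R * ‖h‖ / 2 → 0 < η ∧ η ≤ 3/8 := by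
    intro η h1
    rw [abs_le] at h1
    constructor <;> linarith [h1.1, h1.2]
  have := grad_est (a := 1 - 2 * s) (by linarith) (by linarith) (w := wd (u t) h) (x0 := x + (k / 2) • h) (y0 := y)
    (r := R * ‖h‖ / 2) (μ := μ) (by linarith) (by linarith) hμ
    (fun z η h1 h2 => hg.wslice ht ht' (hz2 z (hz z h1)) hh (hη η h2).1 (hη η h2).2)
    ((hg.wcont ht ht' hh).mono (fun p hp => ⟨hz2 _ (hz _ hp.1), (hη _ hp.2).1.le, (hη _ hp.2).2⟩))
    (fun z η h1 h2 => hB z η (hz z h1) h2) ((k / 2) • h) (by rw [hkh]; exact hkh2)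
  have e1 : x + (k / 2) • h + (k / 2) • h = x + k • h := by module
  have e2 : x + (k / 2) • h - (k / 2) • h = x := by module
  rw [e1, e2, hkh] at this
  refine this.trans ?_
  have e3 : 2 * μ * (4 * n + 12) * (|k| / 2 * ‖h‖) / (R * ‖h‖ / 2) = 2 * μ * (4 * n + 12) * (|k| / R) := by
    field_simp
  rw [e3]
  gcongr

lemma s2_far (hg : Good (1 - 2 * s) γ M U0 F b f u) (hs0 : 0 < s) (hs1 : s < 1/2)
    {t y μ R : ℝ} {N : ℕ} {x h : En n} (ht : -1 ≤ t) (ht' : t ≤ 0) (hh0 : 0 < ‖h‖) (hh : ‖h‖ ≤ 1/16) (hN : 0 < N)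
    (hR : 4 * (N:ℝ) ≤ R) (hμ : 0 < μ) (hyR : R * ‖h‖ ≤ y) (hx : ‖x‖ + R * ‖h‖ ≤ 3/4)
    (hy : y + R * ‖h‖ / 2 ≤ 3/8)
    (hB : ∀ z η, ‖z - x‖ ≤ R * ‖h‖ → |η - y| ≤ R * ‖h‖ / 2 → |wd (u t) h (z, η)| ≤ μ) :
    (N:ℝ) ^ 2 * (wd (u t) h (x, y) - 2 * μ * (4 * n + 12) * (N / R)) ≤ wd (u t) ((N:ℝ) • h) (x, y) := by
  rw [fejer]
  have hN' : (0:ℝ) < N := by exact_mod_cast hN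
  have key : ∀ i ∈ Finset.range N, ∀ j ∈ Finset.range N,
      wd (u t) h (x, y) - 2 * μ * (4 * n + 12) * (N / R) ≤ wd (u t) h (x + ((i:ℝ) - (j:ℝ)) • h, y) := by
    intro i hi j hj
    have hi' : (i:ℝ) ≤ N := by exact_mod_cast (Finset.mem_range.1 hi).le
    have hj' : (j:ℝ) ≤ N := by exact_mod_cast (Finset.mem_range.1 hj).le
    have hi0 : (0:ℝ) ≤ i := Nat.cast_nonneg i
    have hj0 : (0:ℝ) ≤ j := Nat.cast_nonneg j
    have := s2_shift hg hs0 hs1 (k := (i:ℝ) - j) ht ht' hh0 hh hN' hR (by rw [abs_le]; constructor <;> linarith) hμ hyR hx hy hB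
    linarith [(abs_le.1 this).1]
  calc (N:ℝ) ^ 2 * (wd (u t) h (x, y) - 2 * μ * (4 * n + 12) * (N / R))
      = ∑ i ∈ Finset.range N, ∑ j ∈ Finset.range N, (wd (u t) h (x, y) - 2 * μ * (4 * n + 12) * (N / R)) := by
        simp only [Finset.sum_const, Finset.card_range, nsmul_eq_mul]; ring
    _ ≤ _ := Finset.sum_le_sum fun i hi => Finset.sum_le_sum fun j hj => key i hi j hj

lemma s2_top (hg : Good (1 - 2 * s) γ M U0 F b f u) (hs0 : 0 < s) (hs1 : s < 1/2)
    {t y U : ℝ} {x h : En n} (ht : -1 ≤ t) (ht' : t ≤ 0) (hh0 : 0 < ‖h‖) (hh : ‖h‖ ≤ 1/64) (hx : ‖x‖ ≤ 9/16)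
    (hy : 1/16 ≤ y) (hy' : y ≤ 1/8) (hU : U0 ≤ U) (hU0 : 0 < U) :
    |wd (u t) h (x, y)| ≤ 2048 * (4 * n + 12) ^ 2 * U * ‖h‖ ^ 2 := by
  have hn0 : (0:ℝ) ≤ n := Nat.cast_nonneg n
  have hhalf : ‖(1/2 : ℝ) • h‖ = ‖h‖ / 2 := by
    rw [norm_smul, Real.norm_eq_abs, abs_of_pos (by norm_num)]; ring
  set x0 := x - (1/2 : ℝ) • h with hx0
  have hz : ∀ z : En n, ‖z - x0‖ ≤ 1/32 → ‖z‖ ≤ 5/8 := by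
    intro z hz
    calc ‖z‖ = ‖(z - x0) + (x - (1/2 : ℝ) • h)‖ := by congr 1; rw [hx0]; module
      _ ≤ ‖z - x0‖ + (‖x‖ + ‖(1/2 : ℝ) • h‖) := (norm_add_le _ _).trans (by gcongr; exact norm_sub_le _ _)
      _ ≤ 5/8 := by rw [hhalf]; linarith
  have hη : ∀ η, |η - y| ≤ 1/32 → 1/32 ≤ η ∧ η ≤ 5/32 := by
    intro η h1
    rw [abs_le] at h1
    constructor <;> linarith [h1.1, h1.2]
  set D : En n × ℝ → ℝ := fun p => u t (p.1 + h, p.2) - u t p with hD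
  have cD : ContinuousOn D {p | ‖p.1‖ ≤ 5/8 ∧ 0 ≤ p.2 ∧ p.2 ≤ 3/8} := by
    have c0 : ContinuousOn (fun p : En n × ℝ => u t p) {p | ‖p.1‖ ≤ 5/8 ∧ 0 ≤ p.2 ∧ p.2 ≤ 3/8} :=
      hg.cont.comp (f := fun p : En n × ℝ => (t, p)) (by fun_prop)
        (fun p hp => ⟨ht, ht', hp.1.trans (by norm_num), hp.2.1, hp.2.2⟩)
    have c1 : ContinuousOn (fun p : En n × ℝ => u t (p.1 + h, p.2)) {p | ‖p.1‖ ≤ 5/8 ∧ 0 ≤ p.2 ∧ p.2 ≤ 3/8} :=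
      hg.cont.comp (f := fun p : En n × ℝ => (t, (p.1 + h, p.2))) (by fun_prop)
        (fun p hp => ⟨ht, ht', (norm_add_le _ _).trans (by linarith [hp.1]), hp.2.1, hp.2.2⟩)
    exact c1.sub c0
  have := grad_est (a := 1 - 2 * s) (by linarith) (by linarith) (w := D) (x0 := x0) (y0 := y)
    (r := 1/32) (μ := 64 * U * (4 * n + 12) * ‖h‖) (by norm_num) (by linarith) (by positivity) ?_
    (cD.mono (fun p hp => ⟨hz _ hp.1, (hη _ hp.2).1.trans' (by norm_num), (hη _ hp.2).2.trans (by norm_num)⟩)) ?_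
    ((1/2 : ℝ) • h) (by rw [hhalf]; linarith)
  · have e1 : x0 + (1/2 : ℝ) • h = x := by rw [hx0]; module
    have e2 : x0 - (1/2 : ℝ) • h = x - h := by rw [hx0]; module
    rw [e1, e2, hhalf] at this
    have e3 : D (x, y) - D (x - h, y) = wd (u t) h (x, y) := by
      simp only [hD, wd, sub_add_cancel]
    rw [e3] at this
    refine this.trans (le_of_eq ?_)
    ring
  · intro z η h1 h2
    have a1 := hg.slice t z η ht ht' ((hz z h1).trans (by norm_num)) (by linarith [(hη η h2).1]) (by linarith [(hη η h2).2])
    have a2 := hg.slice t (z + h) η ht ht' ((norm_add_le _ _).trans (by linarith [hz z h1])) (by linarith [(hη η h2).1]) (by linarith [(hη η h2).2])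
    exact (a2.trans (p := (z, η)) h).sub a1
  · intro z η h1 h2
    have hηη := hη η h2
    have hη0 : 0 < η := by linarith [hηη.1]
    have := hg.far hs0 hs1 ht ht' (m := z + (1/2 : ℝ) • h) (d := (1/2 : ℝ) • h) (y := η)
      ((norm_add_le _ _).trans (by rw [hhalf]; linarith [hz z h1])) (by rw [hhalf]; linarith) hη0 (by linarith [hηη.2])
    have e1 : z + (1/2 : ℝ) • h + (1/2 : ℝ) • h = z + h := by module
    have e2 : z + (1/2 : ℝ) • h - (1/2 : ℝ) • h = z := by module
    rw [e1, e2, hhalf] at this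
    refine this.trans ?_
    rw [div_le_iff₀ hη0]
    calc 4 * U0 * (4 * n + 12) * (‖h‖ / 2) ≤ 4 * U * (4 * n + 12) * (‖h‖ / 2) := by gcongr
      _ = 64 * U * (4 * n + 12) * ‖h‖ * (1/32) := by ring
      _ ≤ 64 * U * (4 * n + 12) * ‖h‖ * η := by gcongr; exact hηη.1

end

section
variable {n : ℕ} {s α M U0 F : ℝ} {b : ℝ → En n → En n} {f : ℝ → En n → ℝ} {u : ℝ → En n × ℝ → ℝ}

lemma nl_thz {t e : ℝ} {x z : En n} (ht : -3/4 < t) (ht' : t ≤ 0) (hx : ‖x‖ < 9/16) (he : ‖z - x‖ ≤ e)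
    (he' : 16 * e ≤ thf (3/4) (81/256) t x) (he1 : e ≤ 1/64) :
    thf (3/4) (81/256) t x / 2 ≤ thf (3/4) (81/256) t z := by
  have he0 : 0 ≤ e := (norm_nonneg _).trans he
  have h1 : ‖z‖ ≤ ‖x‖ + e := by
    calc ‖z‖ = ‖x + (z - x)‖ := by congr 1; module
      _ ≤ _ := norm_add_le _ _
      _ ≤ _ := by linarith
  have h2 : ‖z‖ ^ 2 ≤ (‖x‖ + e) ^ 2 := nl_sq (norm_nonneg _) h1
  have h3 : ‖z‖ ^ 2 ≤ ‖x‖ ^ 2 + 2 * e := by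
    have a1 : ‖x‖ * e ≤ 9/16 * e := by gcongr
    have a2 : e * e ≤ 1/64 * e := by gcongr
    linarith [h2, show (‖x‖ + e) ^ 2 = ‖x‖ ^ 2 + 2 * (‖x‖ * e) + e * e by ring]
  unfold thf at he' ⊢
  have h4 : (t + 3/4) * (‖z‖ ^ 2 - ‖x‖ ^ 2) ≤ 2 * e := by
    calc (t + 3/4) * (‖z‖ ^ 2 - ‖x‖ ^ 2) ≤ (t + 3/4) * (2 * e) := by
          apply mul_le_mul_of_nonneg_left <;> linarith
      _ ≤ 1 * (2 * e) := by apply mul_le_mul_of_nonneg_right <;> linarith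
      _ = 2 * e := one_mul _
  linarith [show (t + 3/4) * (81/256 - ‖z‖ ^ 2) = (t + 3/4) * (81/256 - ‖x‖ ^ 2) - (t + 3/4) * (‖z‖ ^ 2 - ‖x‖ ^ 2) by ring]

lemma nl_thle {t : ℝ} {x : En n} (ht : -3/4 < t) (ht' : t ≤ 0) (hx : ‖x‖ < 9/16) :
    thf (3/4) (81/256) t x ≤ 1/4 := by
  unfold thf
  have h1 : 0 ≤ 81/256 - ‖x‖ ^ 2 := by linarith [nl_sq (norm_nonneg x) hx.le]
  calc (t + 3/4) * (81/256 - ‖x‖ ^ 2) ≤ (3/4) * (81/256) := by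
        gcongr <;> linarith [sq_nonneg ‖x‖]
    _ ≤ 1/4 := by norm_num

lemma nl_thlt {t : ℝ} {z : En n} (ht : -3/4 < t) (h : 0 < thf (3/4) (81/256) t z) : ‖z‖ < 9/16 := by
  unfold thf at h
  have := pos_of_mul_pos_right h (by linarith)
  by_contra hc
  push Not at hc
  linarith [nl_sq (by norm_num) hc]

lemma s2_num_int {Z R c0 θ r : ℝ} (hZ : 0 ≤ Z) (hR : 0 < R) (hc : 0 < c0) (hθ : 0 < θ) (hr : 0 < r)
    (h : r ≤ c0 * θ) (hA : 2 * R ^ 2 * c0 ^ 2 * Z < 1) (hh : 1/2 / (R * r) ^ 2 ≤ Z * θ ^ (-2:ℝ)) : False := by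
  have e : θ ^ (-2:ℝ) = 1 / θ ^ 2 := by
    rw [Real.rpow_neg hθ.le, one_div]; norm_num
  rw [e, div_le_iff₀ (by positivity)] at hh
  have h1 : (R * r) ^ 2 ≤ (R * (c0 * θ)) ^ 2 := nl_sq (by positivity) (by gcongr)
  have h2 : Z * (1 / θ ^ 2) * (R * r) ^ 2 ≤ Z * (1 / θ ^ 2) * (R * (c0 * θ)) ^ 2 := by gcongr
  have h3 : Z * (1 / θ ^ 2) * (R * (c0 * θ)) ^ 2 = R ^ 2 * c0 ^ 2 * Z := by field_simp
  linarith

lemma s2_num_bd {R c0 θ r ψ K V ν : ℝ} (hs0 : 0 < s) (hM : 0 ≤ M) (hν : 0 < ν) (hR : 0 < R) (hθ : 0 < θ) (hr : 0 < r)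
    (hψ : 1 ≤ ψ) (hK : 0 < K) (h : r ^ (2 * s) ≤ c0 * θ) (hc3 : ν * (1 + 2 * M) * c0 ≤ s / 4 * R ^ (-(2 * s)))
    (hV : V < K * (s / 4 * R ^ (-(2 * s))))
    (hh : K * r ^ (1 + α) * ψ * (s / 2 * (R * r) ^ (-(2 * s))) ≤ V * r ^ (1 - 2 * s + α) +
      K * r ^ (1 + α) * ψ * (ν * (1 + 2 * M)) / θ) : False := by
  have e1 : r ^ (1 + α) = r ^ (1 - 2 * s + α) * r ^ (2 * s) := by
    rw [← Real.rpow_add hr]; congr 1; ring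
  have e2 : (R * r) ^ (-(2 * s)) = R ^ (-(2 * s)) * r ^ (-(2 * s)) := Real.mul_rpow hR.le hr.le
  have e3 : r ^ (2 * s) * r ^ (-(2 * s)) = 1 := by rw [← Real.rpow_add hr]; simp
  have hq : 0 < r ^ (1 - 2 * s + α) := by positivity
  rw [e1, e2] at hh
  set q := r ^ (1 - 2 * s + α)
  set w := r ^ (2 * s)
  set w' := r ^ (-(2 * s))
  set P := R ^ (-(2 * s)) with hP
  have hP0 : 0 < P := by positivity
  have h1 : K * (q * w) * ψ * (s / 2 * (P * w')) = q * (K * ψ * (s / 2 * P)) := by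
    linear_combination (K * q * ψ * (s / 2) * P) * e3
  have h2 : K * (q * w) * ψ * (ν * (1 + 2 * M)) / θ = q * (K * ψ * (ν * (1 + 2 * M) * (w / θ))) := by
    field_simp
  rw [h1, h2] at hh
  have h3 : w / θ ≤ c0 := by rw [div_le_iff₀ hθ]; exact h
  have h4 : K * ψ * (ν * (1 + 2 * M) * (w / θ)) ≤ K * ψ * (s / 4 * P) := by
    have : ν * (1 + 2 * M) * (w / θ) ≤ s / 4 * P := le_trans (by gcongr) hc3
    gcongr
  have h5 : q * (K * ψ * (s / 2 * P)) ≤ q * (V + K * ψ * (s / 4 * P)) := by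
    have : q * (K * ψ * (ν * (1 + 2 * M) * (w / θ))) ≤ q * (K * ψ * (s / 4 * P)) := by gcongr
    linarith
  have h6 := le_of_mul_le_mul_left h5 hq
  have h7 : K * 1 * (s / 4 * P) ≤ K * ψ * (s / 4 * P) := by gcongr
  linarith [show K * ψ * (s / 2 * P) = 2 * (K * ψ * (s / 4 * P)) by ring]

lemma s2_num_i {c0 θ r K : ℝ} (hs0 : 0 < s) (hα1 : α ≤ 1) (hc : 0 < c0) (hθ : 0 < θ) (hr : 0 < r) (hr1 : r ≤ 1)
    (hK : 0 < K) (h : c0 * θ < r ^ (2 * s)) : K * c0 ^ (1 / s) ≤ K * r ^ (1 + α) * θ ^ (-(1 / s)) := by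
  have h1 := pw_ge (by positivity : 0 < 2 * s) hc hθ hr h
  have h2 := nl_sq (by positivity) h1
  have e1 : ∀ z : ℝ, 0 < z → (z ^ (1 / (2 * s))) ^ 2 = z ^ (1 / s) := fun z hz => by
    rw [← Real.rpow_natCast, ← Real.rpow_mul hz.le]; congr 1; push_cast; field_simp
  have e2 : (θ ^ (-(1 / (2 * s)))) ^ 2 = θ ^ (-(1 / s)) := by
    rw [← Real.rpow_natCast, ← Real.rpow_mul hθ.le]; congr 1; push_cast; field_simp
  rw [div_pow, e1 _ hc, e2] at h2
  have h3 : r ^ 2 ≤ r ^ (1 + α) := by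
    rw [← Real.rpow_natCast]
    exact Real.rpow_le_rpow_of_exponent_ge hr hr1 (by push_cast; linarith)
  have h4 : c0 ^ (1 / s) ≤ r ^ (1 + α) * θ ^ (-(1 / s)) := by
    calc c0 ^ (1 / s) = r ^ 2 * (c0 ^ (1 / s) / r ^ 2) := by field_simp
      _ ≤ _ := by gcongr
  rw [mul_assoc]; gcongr

lemma s2_num_far {B ν2 R N w W n4 a1 : ℝ} (hB : 0 < B) (hN : 0 < N) (hR : 0 < R)
    (hR2 : 16 * ν2 * n4 * N ≤ R) (h1 : N ^ 2 * (w - 2 * (B * ν2) * n4 * (N / R)) ≤ W) (hW : W ≤ a1 * B)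
    (ha : 16 * a1 ≤ N ^ 2) (hw : w = B / 2) : False := by
  have h2 : 2 * (B * ν2) * n4 * (N / R) ≤ B / 8 := by
    have : 2 * (B * ν2) * n4 * (N / R) = (16 * ν2 * n4 * N) * (B / (8 * R)) := by field_simp; ring
    rw [this]
    calc _ ≤ R * (B / (8 * R)) := by gcongr
      _ = B / 8 := by field_simp
  have h3 : N ^ 2 * (B / 2 - B / 8) ≤ N ^ 2 * (w - 2 * (B * ν2) * n4 * (N / R)) := by
    gcongr; exact hw.ge
  have h4 : 16 * a1 * B ≤ N ^ 2 * B := by gcongr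
  have h5 : 0 < N ^ 2 * B := by positivity
  linarith [show N ^ 2 * (B / 2 - B / 8) = 3/8 * (N ^ 2 * B) by ring]

set_option maxHeartbeats 1000000 in
lemma s2_contact (hg : Good (1 - 2 * s) (1 - 2 * s + α) M U0 F b f u) (hs0 : 0 < s) (hs1 : s < 1/2)
    (hα0 : 0 < α) (hα1 : α ≤ 1) (hM : 0 ≤ M) {N : ℕ} {R c0 K Λ U : ℝ} (hN : 0 < N)
    (hNα : 16 * (N:ℝ) ^ (1 + α) ≤ (N:ℝ) ^ 2) (hR : 4 * (N:ℝ) ≤ R)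
    (hR2 : 16 * (2:ℝ) ^ (1 / s) * (4 * n + 12) * N ≤ R)
    (hc0 : 0 < c0) (hc1 : 16 * R * c0 ≤ 1)
    (hc2 : 2 * R ^ 2 * c0 ^ 2 * (n * (4 * (1 / s) ^ 2 + 6 * (1 / s))) < 1)
    (hc3 : 1 / s * (1 + 2 * M) * c0 ≤ s / 4 * R ^ (-(2 * s)))
    (hΛ : ∀ t (x : En n), -3/4 ≤ t → t ≤ 0 → ‖x‖ < 5/8 → ∀ G : En n →L[ℝ] ℝ,
        HasFDerivAt (fun z => u t (z, 0)) G x → ‖G‖ ≤ Λ)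
    (hK : 0 < K) (hU : U0 ≤ U) (hU0 : 0 < U)
    (hK1 : 8 * U < K * c0 ^ (1 / s)) (hK2 : 4096 * (4 * n + 12) ^ 2 * U < K)
    (hK4 : 2 * F + 2 * M * Λ < K * (s / 4 * R ^ (-(2 * s))))
    {t y : ℝ} {x h : En n}
    (hle : ∀ t' (x' h' : En n) y', -3/4 < t' → t' ≤ 0 → ‖x'‖ < 9/16 → ‖h‖ ≤ ‖h'‖ → ‖h'‖ ≤ 1/64 → 0 ≤ y' → y' ≤ 1/8 →
      |wd (u t') h' (x', y')| ≤ K * ‖h'‖ ^ (1 + α) * thf (3/4) (81/256) t' x' ^ (-(1 / s)) * gf s (R * ‖h'‖) y')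
    (heq : wd (u t) h (x, y) = K * ‖h‖ ^ (1 + α) * thf (3/4) (81/256) t x ^ (-(1 / s)) * gf s (R * ‖h‖) y)
    (ht : -3/4 < t) (ht' : t ≤ 0) (hx : ‖x‖ < 9/16) (hh0 : 0 < ‖h‖) (hh : ‖h‖ ≤ 1/64) (hy : 0 ≤ y) (hy' : y ≤ 1/8) :
    False := by
  have hn0 : (0:ℝ) ≤ n := Nat.cast_nonneg n
  have hN' : (0:ℝ) < N := by exact_mod_cast hN
  have hR0 : 0 < R := by linarith
  set ν := 1 / s with hνd
  have hν : 0 < ν := by positivity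
  have hθ := nl_thpos ht hx
  have hθ1 := nl_thle ht ht' hx
  set θ := thf (3/4) (81/256) t x with hθd
  set r := ‖h‖ with hrd
  have hρ : 0 < R * r := by positivity
  have hψ1 : 1 ≤ θ ^ (-ν) := Real.one_le_rpow_of_pos_of_le_one_of_nonpos hθ (by linarith) (by linarith)
  have hgb := gf_bounds hs0 hρ hy
  have hB0 : 0 < K * r ^ (1 + α) * θ ^ (-ν) := by positivity
  have hBw : K * r ^ (1 + α) * θ ^ (-ν) * (1/2) ≤ wd (u t) h (x, y) := by
    rw [heq]; gcongr; exact hgb.1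
  have hi : r ^ (2 * s) ≤ c0 * θ := by
    by_contra hc
    push Not at hc
    have h1 := s2_num_i hs0 hα1 hc0 hθ hh0 (by linarith) hK hc
    have b0 := hg.bound t x y (by linarith) ht' (by linarith) hy (by linarith)
    have b1 := hg.bound t (x + h) y (by linarith) ht' ((norm_add_le _ _).trans (by linarith)) hy (by linarith)
    have b2 := hg.bound t (x - h) y (by linarith) ht' ((norm_sub_le _ _).trans (by linarith)) hy (by linarith)
    rw [abs_le] at b0 b1 b2
    unfold wd at hBw
    simp only at hBw
    linarith [b0.1, b0.2, b1.1, b1.2, b2.1, b2.2]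
  have hr : r ≤ c0 * θ := by
    refine le_trans ?_ hi
    calc r = r ^ (1:ℝ) := (Real.rpow_one r).symm
      _ ≤ _ := Real.rpow_le_rpow_of_exponent_ge hh0 (by linarith) (by linarith)
  have hRr : 16 * (R * r) ≤ θ := by
    calc 16 * (R * r) ≤ 16 * (R * (c0 * θ)) := by gcongr
      _ = (16 * R * c0) * θ := by ring
      _ ≤ 1 * θ := by gcongr
      _ = θ := one_mul _
  have hRr1 : R * r ≤ 1/64 := by linarith
  have hleh : ∀ t' (x' : En n) y', -3/4 < t' → t' ≤ 0 → ‖x'‖ < 9/16 → 0 ≤ y' → y' ≤ 1/8 →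
      wd (u t') h (x', y') ≤ (K * r ^ (1 + α)) * thf (3/4) (81/256) t' x' ^ (-ν) * gf s (R * r) y' :=
    fun t' x' y' a1 a2 a3 a4 a5 => (le_abs_self _).trans (hle t' x' h y' a1 a2 a3 le_rfl hh a4 a5)
  have hA : 0 < K * r ^ (1 + α) := by positivity
  by_cases hytop : 1/16 ≤ y
  · have h1 := (le_abs_self _).trans (s2_top hg hs0 hs1 (by linarith) ht' hh0 hh hx.le hytop hy' hU hU0)
    have h3 : r ^ 2 ≤ r ^ (1 + α) := by
      rw [← Real.rpow_natCast]
      exact Real.rpow_le_rpow_of_exponent_ge hh0 (by linarith) (by push_cast; linarith)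
    have h4 : K * r ^ 2 * 1 ≤ K * r ^ (1 + α) * θ ^ (-ν) := by gcongr
    have h5 : 4096 * (4 * n + 12) ^ 2 * U * r ^ 2 < K * r ^ 2 := by gcongr
    have h6 : 2048 * (4 * n + 12) ^ 2 * U * ‖h‖ ^ 2 = (4096 * (4 * n + 12) ^ 2 * U * r ^ 2) / 2 := by rw [hrd]; ring
    rw [h6] at h1
    linarith
  push Not at hytop
  by_cases hyf : R * r ≤ y
  · have hB : ∀ (z : En n) η, ‖z - x‖ ≤ R * ‖h‖ → |η - y| ≤ R * ‖h‖ / 2 →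
        |wd (u t) h (z, η)| ≤ (K * r ^ (1 + α) * θ ^ (-ν)) * 2 ^ ν := by
      intro z η h1 h2
      rw [← hrd] at h1 h2
      rw [abs_le] at h2
      have h3 := nl_thz ht ht' hx h1 hRr hRr1
      rw [← hθd] at h3
      have h4 : 0 < thf (3/4) (81/256) t z := by linarith
      have h5 := hle t z h η ht ht' (nl_thlt ht h4) le_rfl hh (by linarith [h2.1]) (by linarith [h2.2])
      refine h5.trans ?_
      have h6 : thf (3/4) (81/256) t z ^ (-ν) ≤ θ ^ (-ν) * 2 ^ ν := by
        have e : θ ^ (-ν) * 2 ^ ν = (θ / 2) ^ (-ν) := by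
          rw [Real.div_rpow hθ.le (by norm_num), Real.rpow_neg (by norm_num : (0:ℝ) ≤ 2), div_inv_eq_mul]
        rw [e]
        exact Real.rpow_le_rpow_of_nonpos (by linarith) h3 (by linarith)
      have h7 : gf s (R * r) η ≤ 1 := (gf_bounds hs0 hρ (by linarith [h2.1])).2
      have h8 : 0 ≤ gf s (R * r) η := by linarith [(gf_bounds hs0 hρ (by linarith [h2.1] : 0 ≤ η)).1]
      calc K * ‖h‖ ^ (1 + α) * thf (3/4) (81/256) t z ^ (-ν) * gf s (R * ‖h‖) η
          ≤ K * ‖h‖ ^ (1 + α) * (θ ^ (-ν) * 2 ^ ν) * 1 := by gcongr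
        _ = _ := by rw [← hrd]; ring
    have h1 := s2_far hg hs0 hs1 (by linarith) ht' hh0 (by rw [← hrd]; linarith) hN hR (by positivity) hyf
      (by rw [← hrd]; linarith) (by rw [← hrd]; linarith) hB
    have hn : ‖(N:ℝ) • h‖ = N * r := by rw [norm_smul, Real.norm_eq_abs, abs_of_pos hN']
    have hNr : N * r ≤ R * r := by gcongr; linarith
    have hN1 : (1:ℝ) ≤ N := by exact_mod_cast hN
    have h2 := (le_abs_self _).trans (hle t x ((N:ℝ) • h) y ht ht' hx (by rw [hn]; exact le_mul_of_one_le_left hh0.le hN1)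
      (by rw [hn]; linarith) hy hy')
    rw [hn, Real.mul_rpow hN'.le hh0.le] at h2
    have h7 := gf_bounds hs0 (by positivity : 0 < R * (N * r)) hy
    have h3 : K * ((N:ℝ) ^ (1 + α) * r ^ (1 + α)) * θ ^ (-ν) * gf s (R * (N * r)) y ≤
        (N:ℝ) ^ (1 + α) * (K * r ^ (1 + α) * θ ^ (-ν)) := by
      calc _ ≤ K * ((N:ℝ) ^ (1 + α) * r ^ (1 + α)) * θ ^ (-ν) * 1 := by gcongr; exact h7.2
        _ = _ := by ring
    refine s2_num_far hB0 hN' hR0 hR2 h1 (h2.trans h3) hNα ?_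
    rw [heq, gf_far hρ hyf]; ring
  · push Not at hyf
    rcases hy.eq_or_lt with hy0 | hy0
    · subst hy0
      rw [gf_zero hs0 hρ, mul_one] at heq
      have h1 := s2_bd hg hs0 hs1 hν hA hρ hΛ hleh heq ht ht' hx (by rw [← hrd]; linarith)
      exact s2_num_bd hs0 hM hν hR0 hθ hh0 hψ1 hK hi hc3 hK4 h1
    · have h1 := s2_int hg hs0 hs1 hν hA hρ hleh heq ht ht' hx (by rw [← hrd]; linarith) hy0 (by linarith) hyf
      refine s2_num_int (by positivity) hR0 hc0 hθ hh0 hr hc2 ?_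
      rw [mul_assoc]; exact h1

end

section
variable {n : ℕ} {s α M U0 F : ℝ} {b : ℝ → En n → En n} {f : ℝ → En n → ℝ} {u : ℝ → En n × ℝ → ℝ}

lemma wd_neg (v : En n × ℝ → ℝ) (h : En n) (p : En n × ℝ) : wd (fun q => - v q) h p = - wd v h p := by
  unfold wd; ring

set_option maxHeartbeats 1000000 in
lemma s2_core (hg : Good (1 - 2 * s) (1 - 2 * s + α) M U0 F b f u) (hs0 : 0 < s) (hs1 : s < 1/2)
    (hα0 : 0 < α) (hα1 : α ≤ 1) (hM : 0 ≤ M) {N : ℕ} {R c0 C Λ U : ℝ} (hN : 0 < N)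
    (hNα : 16 * (N:ℝ) ^ (1 + α) ≤ (N:ℝ) ^ 2) (hR : 4 * (N:ℝ) ≤ R)
    (hR2 : 16 * (2:ℝ) ^ (1 / s) * (4 * n + 12) * N ≤ R)
    (hc0 : 0 < c0) (hc1 : 16 * R * c0 ≤ 1)
    (hc2 : 2 * R ^ 2 * c0 ^ 2 * (n * (4 * (1 / s) ^ 2 + 6 * (1 / s))) < 1)
    (hc3 : 1 / s * (1 + 2 * M) * c0 ≤ s / 4 * R ^ (-(2 * s)))
    (hΛ : ∀ t (x : En n), -3/4 ≤ t → t ≤ 0 → ‖x‖ < 5/8 → ∀ G : En n →L[ℝ] ℝ,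
        HasFDerivAt (fun z => u t (z, 0)) G x → ‖G‖ ≤ Λ)
    (hC : 0 < C) (hU : U0 ≤ U) (hU0 : 0 < U)
    (hK1 : 8 ≤ C * c0 ^ (1 / s)) (hK2 : 4096 * (4 * n + 12) ^ 2 ≤ C)
    (hK4 : 2 * F + 2 * M * Λ ≤ C * U * (s / 4 * R ^ (-(2 * s))))
    {t : ℝ} {x h : En n} (ht : -3/4 ≤ t) (ht' : t ≤ 0) (hx : ‖x‖ ≤ 9/16) (hh0 : 0 < ‖h‖) (hh : ‖h‖ ≤ 1/64) :
    thf (3/4) (81/256) t x ^ (1 / s) * |wd (u t) h (x, 0)| ≤ C * U * ‖h‖ ^ (1 + α) := by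
  have hN' : (0:ℝ) < N := by exact_mod_cast hN
  have hR0 : 0 < R := by linarith
  have hn0 : (0:ℝ) ≤ n := Nat.cast_nonneg n
  set ν := 1 / s with hνd
  have hν : 0 < ν := by positivity
  by_contra hcon
  push Not at hcon
  let Q : Set (ℝ × En n × En n × ℝ) := {P | (-3/4 ≤ P.1 ∧ P.1 ≤ 0) ∧ ‖P.2.1‖ ≤ 9/16 ∧
    (‖h‖ ≤ ‖P.2.2.1‖ ∧ ‖P.2.2.1‖ ≤ 1/64) ∧ 0 ≤ P.2.2.2 ∧ P.2.2.2 ≤ 1/8}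
  have hQc : IsCompact Q := by
    have : Q = Icc (-3/4:ℝ) 0 ×ˢ (Metric.closedBall (0 : En n) (9/16) ×ˢ
        ((Metric.closedBall (0 : En n) (1/64) ∩ {d | ‖h‖ ≤ ‖d‖}) ×ˢ Icc (0:ℝ) (1/8))) := by
      ext ⟨t, m, d, y⟩
      simp only [Q, Set.mem_ofPred_eq, mem_prod, mem_Icc, Metric.mem_closedBall, dist_zero_right, mem_inter_iff]
      tauto
    rw [this]
    exact isCompact_Icc.prod ((isCompact_closedBall _ _).prod
      (((isCompact_closedBall _ _).inter_right (isClosed_le (by fun_prop) (by fun_prop))).prod isCompact_Icc))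
  have hsum : ∀ {m d : En n}, ‖m‖ ≤ 9/16 → ‖d‖ ≤ 1/64 → ‖m + d‖ ≤ 7/8 ∧ ‖m - d‖ ≤ 7/8 := fun {m d} h1 h2 =>
    ⟨(norm_add_le _ _).trans (by linarith), (norm_sub_le _ _).trans (by linarith)⟩
  have hWQ : ∀ P ∈ Q, 0 < ‖P.2.2.1‖ ^ (1 + α) * gf s (R * ‖P.2.2.1‖) P.2.2.2 := by
    rintro ⟨t, m, d, y⟩ ⟨q1, q2, q3, q4⟩
    simp only at q1 q2 q3 q4 ⊢
    have hd : 0 < ‖d‖ := hh0.trans_le q3.1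
    have := (gf_bounds hs0 (by positivity : 0 < R * ‖d‖) q4.1).1
    have : 0 < gf s (R * ‖d‖) y := by linarith
    positivity
  let Ξ : ℝ × En n × En n × ℝ → ℝ := fun P =>
    thf (3/4) (81/256) P.1 P.2.1 ^ ν * |wd (u P.1) P.2.2.1 (P.2.1, P.2.2.2)| /
      (‖P.2.2.1‖ ^ (1 + α) * gf s (R * ‖P.2.2.1‖) P.2.2.2)
  have hΞc : ContinuousOn Ξ Q := by
    have c1 : Continuous (fun P : ℝ × En n × En n × ℝ => thf (3/4) (81/256) P.1 P.2.1 ^ ν) := by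
      apply Continuous.rpow_const
      · unfold thf; fun_prop
      · intro _; right; exact hν.le
    have c2 : ContinuousOn (fun P : ℝ × En n × En n × ℝ => u P.1 (P.2.1 + P.2.2.1, P.2.2.2)) Q := by
      refine hg.cont.comp (f := fun P : ℝ × En n × En n × ℝ => (P.1, (P.2.1 + P.2.2.1, P.2.2.2))) (by fun_prop) ?_
      rintro ⟨t, m, d, y⟩ ⟨q1, q2, q3, q4⟩
      exact ⟨q1.1.trans' (by norm_num), q1.2, (hsum q2 q3.2).1, q4.1, q4.2.trans (by norm_num)⟩
    have c3 : ContinuousOn (fun P : ℝ × En n × En n × ℝ => u P.1 (P.2.1 - P.2.2.1, P.2.2.2)) Q := by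
      refine hg.cont.comp (f := fun P : ℝ × En n × En n × ℝ => (P.1, (P.2.1 - P.2.2.1, P.2.2.2))) (by fun_prop) ?_
      rintro ⟨t, m, d, y⟩ ⟨q1, q2, q3, q4⟩
      exact ⟨q1.1.trans' (by norm_num), q1.2, (hsum q2 q3.2).2, q4.1, q4.2.trans (by norm_num)⟩
    have c5 : ContinuousOn (fun P : ℝ × En n × En n × ℝ => u P.1 (P.2.1, P.2.2.2)) Q := by
      refine hg.cont.comp (f := fun P : ℝ × En n × En n × ℝ => (P.1, (P.2.1, P.2.2.2))) (by fun_prop) ?_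
      rintro ⟨t, m, d, y⟩ ⟨q1, q2, q3, q4⟩
      exact ⟨q1.1.trans' (by norm_num), q1.2, q2.trans (by norm_num), q4.1, q4.2.trans (by norm_num)⟩
    have c4 : ContinuousOn (fun P : ℝ × En n × En n × ℝ => gf s (R * ‖P.2.2.1‖) P.2.2.2) Q := by
      refine (gf_cont hs0).comp (f := fun P : ℝ × En n × En n × ℝ => (R * ‖P.2.2.1‖, P.2.2.2)) (by fun_prop) ?_
      rintro ⟨t, m, d, y⟩ ⟨q1, q2, q3, q4⟩
      exact mul_pos hR0 (hh0.trans_le q3.1)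
    have c6 : Continuous (fun P : ℝ × En n × En n × ℝ => ‖P.2.2.1‖ ^ (1 + α)) := by
      apply Continuous.rpow_const
      · fun_prop
      · intro _; right; linarith
    refine (c1.continuousOn.mul ((c2.sub c5).sub (c5.sub c3)).abs).div (c6.continuousOn.mul c4) ?_
    intro P hP
    exact (hWQ P hP).ne'
  have hP0 : (t, x, h, (0:ℝ)) ∈ Q := ⟨⟨ht, ht'⟩, hx, ⟨le_rfl, hh⟩, le_rfl, by norm_num⟩
  obtain ⟨⟨t1, x1, h1, y1⟩, hP1, hmax⟩ := hQc.exists_isMaxOn ⟨_, hP0⟩ hΞc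
  set K := Ξ (t1, x1, h1, y1) with hKd
  have hKbig : C * U < K := by
    have h1 : Ξ (t, x, h, 0) ≤ K := hmax hP0
    have h2 : C * U < Ξ (t, x, h, 0) := by
      simp only [Ξ]
      rw [gf_zero hs0 (by positivity), mul_one, lt_div_iff₀ (by positivity)]
      exact hcon
    linarith
  have hCU : 0 < C * U := by positivity
  have hK : 0 < K := by linarith
  have hW0 := hWQ _ hP1
  obtain ⟨q1, q2, q3, q4⟩ := hP1
  simp only at q1 q2 q3 q4 hW0
  have hm2 : 0 ≤ 81/256 - ‖x1‖ ^ 2 := by linarith [nl_sq (norm_nonneg x1) q2]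
  have hθ0 : 0 ≤ thf (3/4) (81/256) t1 x1 := mul_nonneg (by linarith) hm2
  have hθ : 0 < thf (3/4) (81/256) t1 x1 := by
    refine hθ0.lt_of_ne' ?_
    intro hz
    have : K = 0 := by
      rw [hKd]; simp only [Ξ]
      rw [hz, Real.zero_rpow hν.ne']; simp
    linarith
  have ht1 : -3/4 < t1 := by
    refine q1.1.lt_of_ne' ?_
    rintro rfl
    unfold thf at hθ; norm_num at hθ
  have hx1 : ‖x1‖ < 9/16 := nl_thlt ht1 hθ
  have hle : ∀ t' (x' h' : En n) y', -3/4 < t' → t' ≤ 0 → ‖x'‖ < 9/16 → ‖h1‖ ≤ ‖h'‖ → ‖h'‖ ≤ 1/64 → 0 ≤ y' → y' ≤ 1/8 →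
      |wd (u t') h' (x', y')| ≤ K * ‖h'‖ ^ (1 + α) * thf (3/4) (81/256) t' x' ^ (-ν) * gf s (R * ‖h'‖) y' := by
    intro t' x' h' y' a1 a2 a3 a4 a5 a6 a7
    have hθ' := nl_thpos a1 a3
    have hQ : (t', x', h', y') ∈ Q := ⟨⟨a1.le, a2⟩, a3.le, ⟨q3.1.trans a4, a5⟩, a6, a7⟩
    have h1 : Ξ (t', x', h', y') ≤ K := hmax hQ
    have hW' := hWQ _ hQ
    simp only [Ξ] at h1 hW'
    rw [div_le_iff₀ hW'] at h1
    have e : thf (3/4) (81/256) t' x' ^ (-ν) * thf (3/4) (81/256) t' x' ^ ν = 1 := by rw [← Real.rpow_add hθ']; simp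
    have hψ' : 0 < thf (3/4) (81/256) t' x' ^ (-ν) := by positivity
    have h2 := mul_le_mul_of_nonneg_left h1 hψ'.le
    rw [← mul_assoc, e, one_mul] at h2
    refine h2.trans (le_of_eq ?_)
    ring
  have heq : |wd (u t1) h1 (x1, y1)| = K * ‖h1‖ ^ (1 + α) * thf (3/4) (81/256) t1 x1 ^ (-ν) * gf s (R * ‖h1‖) y1 := by
    have e : thf (3/4) (81/256) t1 x1 ^ (-ν) * thf (3/4) (81/256) t1 x1 ^ ν = 1 := by rw [← Real.rpow_add hθ]; simp
    have : K * (‖h1‖ ^ (1 + α) * gf s (R * ‖h1‖) y1) = thf (3/4) (81/256) t1 x1 ^ ν * |wd (u t1) h1 (x1, y1)| := by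
      rw [hKd]; simp only [Ξ]
      rw [div_mul_cancel₀ _ hW0.ne']
    linear_combination (-(thf (3/4) (81/256) t1 x1 ^ (-ν))) * this - |wd (u t1) h1 (x1, y1)| * e
  clear_value K
  have k1 : 8 * U < K * c0 ^ ν := by
    calc 8 * U ≤ C * c0 ^ ν * U := by gcongr
      _ = (C * U) * c0 ^ ν := by ring
      _ < K * c0 ^ ν := by gcongr
  have k2 : 4096 * (4 * n + 12) ^ 2 * U < K := lt_of_le_of_lt (by gcongr) hKbig
  have k4 : 2 * F + 2 * M * Λ < K * (s / 4 * R ^ (-(2 * s))) := hK4.trans_lt (by gcongr)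
  have hh1 : 0 < ‖h1‖ := hh0.trans_le q3.1
  rcases le_total 0 (wd (u t1) h1 (x1, y1)) with hw | hw
  · rw [abs_of_nonneg hw] at heq
    exact s2_contact hg hs0 hs1 hα0 hα1 hM hN hNα hR hR2 hc0 hc1 hc2 hc3 hΛ hK hU hU0 k1 k2 k4 hle heq ht1 q1.2 hx1
      hh1 q3.2 q4.1 q4.2
  · rw [abs_of_nonpos hw] at heq
    refine s2_contact hg.neg hs0 hs1 hα0 hα1 hM hN hNα hR hR2 hc0 hc1 hc2 hc3 ?_ hK hU hU0 k1 k2 k4 ?_ ?_ ht1 q1.2 hx1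
      hh1 q3.2 q4.1 q4.2
    · intro t x a1 a2 a3 G hG
      have := hΛ t x a1 a2 a3 (-G) (by
        have h9 := hG.neg
        have e9 : (-fun z : En n => -u t (z, 0)) = fun z => u t (z, 0) := by
          funext z; simp
        rw [e9] at h9; exact h9)
      simpa using this
    · intro t' x' h' y' a1 a2 a3 a4 a5 a6 a7
      rw [wd_neg, abs_neg]
      exact hle t' x' h' y' a1 a2 a3 a4 a5 a6 a7
    · rw [wd_neg]; exact heq

lemma s2_consts (n : ℕ) {s α M : ℝ} (hs0 : 0 < s) (hα1 : α < 1) (hM : 0 ≤ M) :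
    ∃ (N : ℕ) (R c0 : ℝ), 0 < N ∧ 16 * (N:ℝ) ^ (1 + α) ≤ (N:ℝ) ^ 2 ∧ 4 * (N:ℝ) ≤ R ∧
      16 * (2:ℝ) ^ (1 / s) * (4 * n + 12) * N ≤ R ∧ 0 < c0 ∧ 16 * R * c0 ≤ 1 ∧
      2 * R ^ 2 * c0 ^ 2 * (n * (4 * (1 / s) ^ 2 + 6 * (1 / s))) < 1 ∧
      1 / s * (1 + 2 * M) * c0 ≤ s / 4 * R ^ (-(2 * s)) := by
  have h1 : Tendsto (fun N : ℕ => (N:ℝ) ^ (1 - α)) atTop atTop :=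
    (tendsto_rpow_atTop (by linarith)).comp tendsto_natCast_atTop_atTop
  obtain ⟨N, hN1, hN2⟩ := ((h1.eventually_ge_atTop 16).and (eventually_gt_atTop 0)).exists
  have hN' : (0:ℝ) < N := by exact_mod_cast hN2
  set R : ℝ := 4 * N + 16 * (2:ℝ) ^ (1 / s) * (4 * n + 12) * N with hR
  have hA : 0 ≤ 16 * (2:ℝ) ^ (1 / s) * (4 * n + 12) * N := by positivity
  have hR0 : 0 < R := by positivity
  have t1 : Tendsto (fun c : ℝ => 16 * R * c) (𝓝[>] 0) (𝓝 0) := by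
    have : Continuous (fun c : ℝ => 16 * R * c) := by fun_prop
    have := this.tendsto 0
    simp only [mul_zero] at this
    exact this.mono_left nhdsWithin_le_nhds
  have t2 : Tendsto (fun c : ℝ => 2 * R ^ 2 * c ^ 2 * (n * (4 * (1 / s) ^ 2 + 6 * (1 / s)))) (𝓝[>] 0) (𝓝 0) := by
    have : Continuous (fun c : ℝ => 2 * R ^ 2 * c ^ 2 * (n * (4 * (1 / s) ^ 2 + 6 * (1 / s)))) := by fun_prop
    have := this.tendsto 0
    simp only [ne_eq, OfNat.ofNat_ne_zero, not_false_eq_true, zero_pow, mul_zero, zero_mul] at this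
    exact this.mono_left nhdsWithin_le_nhds
  have t3 : Tendsto (fun c : ℝ => 1 / s * (1 + 2 * M) * c) (𝓝[>] 0) (𝓝 0) := by
    have : Continuous (fun c : ℝ => 1 / s * (1 + 2 * M) * c) := by fun_prop
    have := this.tendsto 0
    simp only [mul_zero] at this
    exact this.mono_left nhdsWithin_le_nhds
  have hP : 0 < s / 4 * R ^ (-(2 * s)) := by positivity
  obtain ⟨c0, ⟨⟨a1, a2⟩, a3⟩, a4⟩ := (((t1.eventually (gt_mem_nhds one_pos)).and
    (t2.eventually (gt_mem_nhds one_pos))).and (t3.eventually (gt_mem_nhds hP))).and self_mem_nhdsWithin |>.exists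
  refine ⟨N, R, c0, hN2, ?_, by linarith, by linarith, a4, a1.le, a2, a3.le⟩
  calc 16 * (N:ℝ) ^ (1 + α) ≤ (N:ℝ) ^ (1 - α) * (N:ℝ) ^ (1 + α) := by gcongr
    _ = (N:ℝ) ^ 2 := by
      rw [← Real.rpow_add hN', ← Real.rpow_natCast]; congr 1; push_cast; ring

lemma nl_th3 {t z : ℝ} (h0 : -1/2 ≤ t) (hz : 35/1024 ≤ 81/256 - z) : 1/128 ≤ (t + 3/4) * (81/256 - z) := by nlinarith

set_option maxHeartbeats 1000000 in
lemma step2 (n : ℕ) {s α M : ℝ} (hs0 : 0 < s) (hs1 : s < 1/2) (hα0 : 0 < α) (hα1 : α < 2 * s) (hM : 0 ≤ M) :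
    ∃ C : ℝ, 0 < C ∧ ∀ (U0 F : ℝ) (b : ℝ → En n → En n) (f : ℝ → En n → ℝ) (u : ℝ → En n × ℝ → ℝ), 0 ≤ F →
      Good (1 - 2 * s) (1 - 2 * s + α) M U0 F b f u →
      (∀ t (x : En n), -3/4 ≤ t → t ≤ 0 → ‖x‖ < 5/8 → ∀ G : En n →L[ℝ] ℝ,
        HasFDerivAt (fun z => u t (z, 0)) G x → ‖G‖ ≤ C * (U0 + F)) ∧
      (∀ t (x h : En n), -1/2 ≤ t → t ≤ 0 → ‖x‖ ≤ 17/32 → ‖h‖ ≤ 1/64 →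
        |wd (u t) h (x, 0)| ≤ C * (U0 + F) * ‖h‖ ^ (1 + α)) := by
  obtain ⟨C1, hC1, H1⟩ := step1 n hs0 hs1 (p := α / 4) (by linarith) (by linarith) hM
  obtain ⟨N, R, c0, hN, hNα, hR, hR2, hc0, hc1, hc2, hc3⟩ := s2_consts n hs0 (α := α) (by linarith) hM
  have hN' : (0:ℝ) < N := by exact_mod_cast hN
  have hR0 : 0 < R := by linarith
  have hP : 0 < s / 4 * R ^ (-(2 * s)) := by positivity
  set P := s / 4 * R ^ (-(2 * s)) with hPd
  have hcν : 0 < c0 ^ (1 / s) := by positivity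
  have hn0 : (0:ℝ) ≤ n := Nat.cast_nonneg n
  set C2 : ℝ := 8 / c0 ^ (1 / s) + 4096 * (4 * n + 12) ^ 2 + (2 + 2 * M * C1) / P with hC2
  have p1 : 0 < 8 / c0 ^ (1 / s) := by positivity
  have p2 : 0 < 4096 * (4 * (n:ℝ) + 12) ^ 2 := by positivity
  have p3 : 0 < (2 + 2 * M * C1) / P := by positivity
  have hC20 : 0 < C2 := by positivity
  have hK1 : 8 ≤ C2 * c0 ^ (1 / s) := by
    rw [← div_le_iff₀ hcν]; linarith
  have hK2 : 4096 * (4 * (n:ℝ) + 12) ^ 2 ≤ C2 := by linarith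
  have hK3 : 2 + 2 * M * C1 ≤ C2 * P := by
    rw [← div_le_iff₀ hP]; linarith
  have hCψ : 0 < C2 * (1/128 : ℝ) ^ (-(1 / s)) := by positivity
  refine ⟨C1 + C2 * (1/128 : ℝ) ^ (-(1 / s)), by positivity, ?_⟩
  intro U0 F b f u hF hg
  have hU : 0 ≤ U0 := (abs_nonneg _).trans (hg.bound 0 0 0 (by norm_num) le_rfl (by simp; norm_num) le_rfl (by norm_num))
  have hΛ := H1 U0 F b f u hF (by rw [show 4 * (α / 4) = α by ring]; exact hg)
  refine ⟨fun t x a1 a2 a3 G hG => (hΛ t x a1 a2 a3 G hG).trans (by gcongr; linarith), ?_⟩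
  intro t x h ht ht' hx hh
  rcases (norm_nonneg h).eq_or_lt with h0 | h0
  · have : h = 0 := norm_eq_zero.1 h0.symm
    subst this
    have e : wd (u t) 0 (x, 0) = 0 := by simp [wd]
    rw [e, abs_zero]; positivity
  have hθ : 1/128 ≤ thf (3/4) (81/256) t x := by
    unfold thf
    exact nl_th3 ht (by linarith [nl_sq (norm_nonneg x) hx])
  have hθ0 : 0 < thf (3/4) (81/256) t x := by linarith
  have e : thf (3/4) (81/256) t x ^ (-(1 / s)) * thf (3/4) (81/256) t x ^ (1 / s) = 1 := by rw [← Real.rpow_add hθ0]; simp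
  have hψ : thf (3/4) (81/256) t x ^ (-(1 / s)) ≤ (1/128 : ℝ) ^ (-(1 / s)) :=
    Real.rpow_le_rpow_of_nonpos (by norm_num) hθ (by simp; positivity)
  have hψ0 : 0 < thf (3/4) (81/256) t x ^ (-(1 / s)) := by positivity
  have key : |wd (u t) h (x, 0)| ≤ (1/128 : ℝ) ^ (-(1 / s)) * (C2 * (U0 + F) * ‖h‖ ^ (1 + α)) := by
    set Z := (1/128 : ℝ) ^ (-(1 / s)) with hZ
    have hZ0 : 0 < Z := by positivity
    refine le_of_forall_pos_le_add fun δ hδ => ?_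
    have hc : 0 < Z * (C2 * ‖h‖ ^ (1 + α)) := by positivity
    have hUpos : 0 < U0 + F + δ / (Z * (C2 * ‖h‖ ^ (1 + α))) := by positivity
    have hδ' : 0 < δ / (Z * (C2 * ‖h‖ ^ (1 + α))) := by positivity
    have h1 := s2_core hg hs0 hs1 hα0 (by linarith) hM hN hNα hR hR2 hc0 hc1 hc2 hc3 hΛ hC20
      (U := U0 + F + δ / (Z * (C2 * ‖h‖ ^ (1 + α)))) (by linarith) hUpos hK1 hK2 ?_ (t := t) (x := x) (h := h)
      (by linarith) ht' (by linarith) h0 hh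
    · have h5 := mul_le_mul_of_nonneg_left h1 hψ0.le
      rw [← mul_assoc, e, one_mul] at h5
      refine h5.trans ?_
      calc _ ≤ Z * (C2 * (U0 + F + δ / (Z * (C2 * ‖h‖ ^ (1 + α)))) * ‖h‖ ^ (1 + α)) := by gcongr
        _ = _ := by field_simp
    · rw [← hPd]
      calc 2 * F + 2 * M * (C1 * (U0 + F)) ≤ (2 + 2 * M * C1) * (U0 + F) := by linarith
        _ ≤ (C2 * P) * (U0 + F) := by gcongr
        _ ≤ (C2 * P) * (U0 + F + δ / (Z * (C2 * ‖h‖ ^ (1 + α)))) := by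
          apply mul_le_mul_of_nonneg_left _ (by positivity); linarith
        _ = _ := by ring
  refine key.trans ?_
  calc _ = (C2 * (1/128 : ℝ) ^ (-(1 / s))) * (U0 + F) * ‖h‖ ^ (1 + α) := by ring
    _ ≤ _ := by gcongr; linarith

end

section
variable {n : ℕ}

lemma s3_A {v : En n → ℝ} {α K : ℝ} (hα : 0 < α) (hK : 0 ≤ K)
    (h2 : ∀ x h : En n, ‖x‖ ≤ 17/32 → ‖h‖ ≤ 1/64 → |v (x + h) - v x - (v x - v (x - h))| ≤ K * ‖h‖ ^ (1 + α))
    {x h : En n} {G : En n →L[ℝ] ℝ} (hG : HasFDerivAt v G x) (hx : ‖x‖ ≤ 1/2 + 1/64) (hh : ‖h‖ ≤ 1/64) :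
    |v (x + h) - v x - G h| ≤ K / (1 - 2 ^ (-α)) * ‖h‖ ^ (1 + α) := by
  have hq1 : (2:ℝ) ^ (-α) < 1 := Real.rpow_lt_one_of_one_lt_of_neg (by norm_num) (by linarith)
  let g : ℕ → ℝ := fun k => (2:ℝ) ^ k * (v (x + ((2:ℝ) ^ k)⁻¹ • h) - v x)
  have hlim : Tendsto g atTop (𝓝 (G h)) := by
    have := (hG.lim_real h).comp (tendsto_pow_atTop_atTop_of_one_lt (by norm_num : (1:ℝ) < 2))
    simpa [Function.comp_def, g] using this
  have hgeo : ∀ k, dist (g k) (g (k + 1)) ≤ (K * ‖h‖ ^ (1 + α)) * ((2:ℝ) ^ (-α)) ^ k := by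
    intro k
    set c : ℝ := ((2:ℝ) ^ (k + 1))⁻¹ with hc
    have hc0 : 0 < c := by positivity
    have hc1 : c ≤ 1/2 := by
      rw [hc, pow_succ, mul_inv]
      have : ((2:ℝ) ^ k)⁻¹ ≤ 1 := inv_le_one_of_one_le₀ (one_le_pow₀ (by norm_num))
      linarith
    have hn : ‖c • h‖ = c * ‖h‖ := by rw [norm_smul, Real.norm_eq_abs, abs_of_pos hc0]
    have hch : c * ‖h‖ ≤ 1/128 := by
      calc c * ‖h‖ ≤ 1/2 * (1/64) := by gcongr
        _ = _ := by norm_num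
    have h3 := h2 (x + c • h) (c • h) ((norm_add_le _ _).trans (by rw [hn]; linarith)) (by rw [hn]; linarith)
    have hcc : ((2:ℝ) ^ k)⁻¹ = 2 * c := by rw [hc, pow_succ]; field_simp
    have e1 : x + c • h + c • h = x + ((2:ℝ) ^ k)⁻¹ • h := by rw [hcc]; module
    rw [e1, add_sub_cancel_right, hn] at h3
    have e2 : g k - g (k + 1) = (2:ℝ) ^ k * (v (x + ((2:ℝ) ^ k)⁻¹ • h) - v (x + c • h) - (v (x + c • h) - v x)) := by
      simp only [g]; rw [← hc, pow_succ]; ring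
    rw [Real.dist_eq, e2, abs_mul, abs_of_pos (by positivity : (0:ℝ) < 2 ^ k)]
    have e3 : (2:ℝ) ^ k * c ^ (1 + α) ≤ ((2:ℝ) ^ (-α)) ^ k := by
      have a1 : (2:ℝ) ^ k = 2 ^ (k:ℝ) := (Real.rpow_natCast _ _).symm
      have a2 : c = (2:ℝ) ^ (-((k:ℝ) + 1)) := by
        rw [hc, Real.rpow_neg (by norm_num), ← Real.rpow_natCast]; push_cast; rfl
      rw [a1, a2, ← Real.rpow_mul (by norm_num), ← Real.rpow_add (by norm_num), ← Real.rpow_natCast, ← Real.rpow_mul (by norm_num)]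
      apply Real.rpow_le_rpow_of_exponent_le (by norm_num)
      linarith [show (k:ℝ) + -((k:ℝ) + 1) * (1 + α) = -α * k - 1 - α by ring]
    calc (2:ℝ) ^ k * |v (x + ((2:ℝ) ^ k)⁻¹ • h) - v (x + c • h) - (v (x + c • h) - v x)|
        ≤ (2:ℝ) ^ k * (K * (c * ‖h‖) ^ (1 + α)) := by gcongr
      _ = (K * ‖h‖ ^ (1 + α)) * ((2:ℝ) ^ k * c ^ (1 + α)) := by
        rw [Real.mul_rpow hc0.le (norm_nonneg _)]; ring
      _ ≤ _ := by gcongr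
  have := dist_le_of_le_geometric_of_tendsto₀ _ _ hq1 hgeo hlim
  rw [Real.dist_eq] at this
  simp only [g, pow_zero, inv_one, one_smul, one_mul] at this
  refine this.trans (le_of_eq ?_)
  ring

lemma s3_B {v : En n → ℝ} {α K : ℝ} (hα : 0 < α) (hα1 : α ≤ 1) (hK : 0 ≤ K)
    (h2 : ∀ x h : En n, ‖x‖ ≤ 17/32 → ‖h‖ ≤ 1/64 → |v (x + h) - v x - (v x - v (x - h))| ≤ K * ‖h‖ ^ (1 + α))
    {x x' : En n} {G G' : En n →L[ℝ] ℝ} (hG : HasFDerivAt v G x) (hG' : HasFDerivAt v G' x')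
    (hx : ‖x‖ < 1/2) (hx' : ‖x'‖ < 1/2) (hGn : ‖G‖ ≤ K) (hGn' : ‖G'‖ ≤ K) :
    ‖G - G'‖ ≤ (256 + 6 / (1 - 2 ^ (-α))) * K * ‖x - x'‖ ^ α := by
  have hq1 : (2:ℝ) ^ (-α) < 1 := Real.rpow_lt_one_of_one_lt_of_neg (by norm_num) (by linarith)
  have hq : 0 < 1 - (2:ℝ) ^ (-α) := by linarith
  set B := K / (1 - 2 ^ (-α)) with hB
  have hB0 : 0 ≤ B := by positivity
  rcases (norm_nonneg (x - x')).eq_or_lt with h0 | hd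
  · have : x = x' := sub_eq_zero.1 (norm_eq_zero.1 h0.symm)
    subst this
    rw [hG.unique hG', sub_self, norm_zero]
    positivity
  set d := ‖x - x'‖ with hdd
  have hC : (256 + 6 / (1 - 2 ^ (-α))) * K * d ^ α = 256 * K * d ^ α + 6 * B * d ^ α := by rw [hB]; ring
  rw [hC]
  have hda : 0 < d ^ α := by positivity
  by_cases hbig : 1/128 ≤ d
  · have h1 : (1:ℝ) ≤ 128 * d ^ α := by
      have a1 : (1:ℝ) ≤ (128 * d) ^ α := Real.one_le_rpow (by linarith) hα.le
      rw [Real.mul_rpow (by norm_num) hd.le] at a1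
      refine a1.trans ?_
      gcongr
      calc (128:ℝ) ^ α ≤ 128 ^ (1:ℝ) := Real.rpow_le_rpow_of_exponent_le (by norm_num) hα1
        _ = 128 := Real.rpow_one _
    have h3 : ‖G - G'‖ ≤ 2 * K := (norm_sub_le _ _).trans (by linarith)
    have h4 : 2 * K * 1 ≤ 2 * K * (128 * d ^ α) := by gcongr
    have h5 : 0 ≤ 6 * B * d ^ α := by positivity
    linarith
  push Not at hbig
  have key : ‖G - G'‖ ≤ 6 * B * d ^ α := by
    refine ContinuousLinearMap.opNorm_le_of_unit_norm (by positivity) fun z hz => ?_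
    have hn : ‖d • z‖ = d := by rw [norm_smul, hz, mul_one, Real.norm_eq_abs, abs_of_pos hd]
    have hn2 : ‖x' - x‖ = d := by rw [norm_sub_rev]
    have hn3 : ‖(x' - x) + d • z‖ ≤ 2 * d := (norm_add_le _ _).trans (by rw [hn, hn2]; linarith)
    have k1 := s3_A hα hK h2 hG' (by linarith) (h := d • z) (by rw [hn]; linarith)
    have k2 := s3_A hα hK h2 hG (by linarith) (h := x' - x) (by rw [hn2]; linarith)
    have k3 := s3_A hα hK h2 hG (by linarith) (h := (x' - x) + d • z) (by linarith)
    rw [← hB] at k1 k2 k3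
    have e1 : x + (x' - x + d • z) = x' + d • z := by module
    have e2 : x + (x' - x) = x' := by module
    rw [hn, map_smul, smul_eq_mul] at k1
    rw [hn2, e2] at k2
    rw [e1, map_add, map_smul, smul_eq_mul] at k3
    have h4 : ‖(x' - x) + d • z‖ ^ (1 + α) ≤ 4 * d ^ (1 + α) := by
      calc _ ≤ (2 * d) ^ (1 + α) := by gcongr
        _ = 2 ^ (1 + α) * d ^ (1 + α) := Real.mul_rpow (by norm_num) hd.le
        _ ≤ 4 * d ^ (1 + α) := by
          gcongr
          calc (2:ℝ) ^ (1 + α) ≤ 2 ^ (2:ℝ) := Real.rpow_le_rpow_of_exponent_le (by norm_num) (by linarith)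
            _ = 4 := by norm_num
    have h5 : B * ‖(x' - x) + d • z‖ ^ (1 + α) ≤ B * (4 * d ^ (1 + α)) := by gcongr
    have e3 : d ^ (1 + α) = d * d ^ α := by rw [Real.rpow_add hd, Real.rpow_one]
    rw [abs_le] at k1 k2 k3
    have h6 : d * |G z - G' z| ≤ d * (6 * B * d ^ α) := by
      rw [← abs_of_pos hd, ← abs_mul, abs_of_pos hd, abs_le]
      rw [e3] at k1 k2 h5
      constructor <;> linarith [k1.1, k1.2, k2.1, k2.2, k3.1, k3.2]
    rw [ContinuousLinearMap.sub_apply, Real.norm_eq_abs]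
    exact le_of_mul_le_mul_left h6 hd
  have h5 : 0 ≤ 256 * K * d ^ α := by positivity
  linarith

end

/-- **Theorem 1 (main theorem).** If `b, f ∈ L^∞ C^{1-2s+α}` with `α ∈ (0, 2s)`, then any
bounded solution of the extended drift–diffusion equation is `C^{1,α}` in space on
`[-1/2, 0] × B_{1/2}^0`, with the corresponding estimate. -/
theorem main_C1alpha_regularity (n : ℕ) (hn : 1 ≤ n) (s : ℝ) (hs : s ∈ Ioo (0 : ℝ) (1/2))
    (α : ℝ) (hα : α ∈ Ioo (0 : ℝ) (2*s)) (M : ℝ) (hM : 0 ≤ M) :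
    ∃ C > 0, ∀ (b : ℝ → En n → En n) (f : ℝ → En n → ℝ) (u : ℝ → En n × ℝ → ℝ) (U0 F : ℝ),
      0 ≤ U0 → 0 ≤ F →
      (∀ t ∈ Icc (-1 : ℝ) 0, (∀ x ∈ flatBall n 1, ‖b t x‖ ≤ M) ∧
        ∀ x ∈ flatBall n 1, ∀ x' ∈ flatBall n 1,
          ‖b t x - b t x'‖ ≤ M * ‖x - x'‖ ^ (1 - 2*s + α)) →
      (∀ t ∈ Icc (-1 : ℝ) 0, (∀ x ∈ flatBall n 1, |f t x| ≤ F) ∧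
        ∀ x ∈ flatBall n 1, ∀ x' ∈ flatBall n 1,
          |f t x - f t x'| ≤ F * ‖x - x'‖ ^ (1 - 2*s + α)) →
      IsExtDDSolution (1 - 2*s) b f u →
      (∀ t ∈ Icc (-1 : ℝ) 0, ∀ p ∈ halfBall n 1, |u t p| ≤ U0) →
      ∀ t ∈ Icc (-(1:ℝ)/2) 0, ∀ x ∈ flatBall n (1/2),
        DifferentiableAt ℝ (fun x' => u t (x', 0)) x ∧
        ‖fderiv ℝ (fun x' => u t (x', 0)) x‖ ≤ C * (U0 + F) ∧
        ∀ x' ∈ flatBall n (1/2),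
          ‖fderiv ℝ (fun z => u t (z, 0)) x - fderiv ℝ (fun z => u t (z, 0)) x'‖ ≤
            C * (U0 + F) * ‖x - x'‖ ^ α := by
  obtain ⟨C, hC, H⟩ := step2 n hs.1 hs.2 hα.1 hα.2 hM
  have hα1 : α ≤ 1 := by linarith [hα.2, hs.2]
  have hq1 : (2:ℝ) ^ (-α) < 1 := Real.rpow_lt_one_of_one_lt_of_neg (by norm_num) (by linarith [hα.1])
  have hq : 0 < 6 / (1 - (2:ℝ) ^ (-α)) := by
    have : 0 < 1 - (2:ℝ) ^ (-α) := by linarith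
    positivity
  refine ⟨(256 + 6 / (1 - 2 ^ (-α))) * C, by positivity, ?_⟩
  intro b f u U0 F hU hF hb hf hu hB t ht x hx
  have hg := Good.of_sol hb hf hu hB
  obtain ⟨H1, H2⟩ := H U0 F b f u hF hg
  have hK : 0 ≤ C * (U0 + F) := by positivity
  have hd : ∀ z ∈ flatBall n (1/2), ∃ G : En n →L[ℝ] ℝ, HasFDerivAt (fun z => u t (z, 0)) G z ∧ ‖G‖ ≤ C * (U0 + F) := by
    intro z hz
    have hz' : ‖z‖ < 1/2 := hz
    obtain ⟨_, _, G, _, _, hG, _⟩ := hg.eqn t z (by linarith [ht.1]) ht.2 (by linarith)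
    exact ⟨G, hG, H1 t z (by linarith [ht.1]) ht.2 (by linarith) G hG⟩
  obtain ⟨G, hG, hGn⟩ := hd x hx
  refine ⟨hG.differentiableAt, ?_, ?_⟩
  · rw [hG.fderiv]
    refine hGn.trans ?_
    rw [mul_assoc]
    exact le_mul_of_one_le_left hK (by linarith)
  · intro x' hx'
    obtain ⟨G', hG', hGn'⟩ := hd x' hx'
    rw [hG.fderiv, hG'.fderiv]
    have := s3_B hα.1 hα1 hK (v := fun z => u t (z, 0))
      (fun z h a1 a2 => H2 t z h (by linarith [ht.1]) ht.2 a1 a2) hG hG' hx hx' hGn hGn'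
    refine this.trans (le_of_eq ?_)
    ring

end
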